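/- Let T^2 = S^1_{1/√π} × S^1_{1/√π} be the flat square torus of area 4π, and let S^2 be the unit round 2-sphere (so V^2(S^2) = 4π = V^2(T^2)). Then for every v > 0, I_{S^2×R}(v) ≤ I_{T^2×R}(v), where S^2 × R and T^2 × R carry the product metrics. -/

import Mathlib

open MeasureTheory Real ENNReal NNReal

noncomputable section

/-- The flat circle of radius `r` (circumference `2πr`), i.e. `ℝ / (2πr)ℤ`
with the quotient (arc-length) metric. -/
abbrev Circ (r : ℝ) : Type := AddCircle (2 * Real.pi * r)

/-- `d`-dimensional Hausdorff (Riemannian) measure of a subset of a metric space. -/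
noncomputable def haus (X : Type*) [EMetricSpace X] (d : ℕ) (s : Set X) : ℝ≥0∞ :=
  letI : MeasurableSpace X := borel X
  haveI : BorelSpace X := ⟨rfl⟩
  (MeasureTheory.Measure.hausdorffMeasure (d : ℝ) : Measure X) s

/-- A closed region is the closure of an open set. -/
def IsClosedRegion {X : Type*} [TopologicalSpace X] (U : Set X) : Prop :=
  ∃ V : Set X, IsOpen V ∧ U = closure V

/-- The isoperimetric profile of an `m`-dimensional space `X`:
the infimum of the `(m-1)`-dimensional boundary measures of closed regions
of `m`-dimensional measure `v`. -/
noncomputable def isoProfile (X : Type*) [EMetricSpace X] (m : ℕ) (v : ℝ≥0∞) : ℝ≥0∞ :=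
  ⨅ (U : Set X) (_ : IsClosedRegion U ∧ haus X m U = v), haus X (m - 1) (frontier U)

/-- An isoperimetric region in the `m`-dimensional space `X`. -/
def IsIsoRegion (X : Type*) [EMetricSpace X] (m : ℕ) (Ω : Set X) : Prop :=
  IsClosedRegion Ω ∧ haus X (m - 1) (frontier Ω) = isoProfile X m (haus X m Ω)

/-- Euclidean `n`-space. -/
abbrev EucSp (n : ℕ) : Type := EuclideanSpace ℝ (Fin n)

/-- The Riemannian product `S¹_r × ℝ^m` (with the `ℓ²` product metric). -/
abbrev S1R (r : ℝ) (m : ℕ) : Type := WithLp 2 (Circ r × EucSp m)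

/-- The Riemannian product `S¹_{r1} × S¹_{r2} × ℝ^n = T² × ℝ^n`. -/
abbrev T2R (r1 r2 : ℝ) (n : ℕ) : Type := WithLp 2 (Circ r1 × S1R r2 n)

/-- first circle coordinate of a point of `T² × ℝ^n` -/
def t2fst {r1 r2 : ℝ} {n : ℕ} (p : T2R r1 r2 n) : Circ r1 :=
  (WithLp.equiv 2 (Circ r1 × S1R r2 n) p).1

/-- second circle coordinate of a point of `T² × ℝ^n` -/
def t2snd {r1 r2 : ℝ} {n : ℕ} (p : T2R r1 r2 n) : Circ r2 :=
  (WithLp.equiv 2 (Circ r2 × EucSp n) ((WithLp.equiv 2 (Circ r1 × S1R r2 n) p).2)).1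

/-- Euclidean coordinate of a point of `T² × ℝ^n` -/
def t2euc {r1 r2 : ℝ} {n : ℕ} (p : T2R r1 r2 n) : EucSp n :=
  (WithLp.equiv 2 (Circ r2 × EucSp n) ((WithLp.equiv 2 (Circ r1 × S1R r2 n) p).2)).2

/-- `ω_n`, the `n`-dimensional volume of the unit round sphere `Sⁿ ⊂ ℝ^{n+1}`. -/
noncomputable def omegaS (n : ℕ) : ℝ :=
  (haus (EucSp (n+1)) n (Metric.sphere (0 : EucSp (n+1)) 1)).toReal

/-- `β_n(r) = n^{(n-1)(n+1)} (2πr ω_{n-1})^{n+1} (1+n)^{-n²} ω_n^{-n}`. -/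
noncomputable def betaC (n : ℕ) (r : ℝ) : ℝ :=
  (n : ℝ) ^ ((n-1)*(n+1)) * (2 * Real.pi * r * omegaS (n-1)) ^ (n+1) *
    ((1 + (n : ℝ)) ^ (n^2))⁻¹ * ((omegaS n) ^ n)⁻¹

/-- The isoperimetric profile of `ℝ^m`: `I_{ℝ^m}(v) = m^{(m-1)/m} ω_{m-1}^{1/m} v^{(m-1)/m}`. -/
noncomputable def eucProfile (m : ℕ) (v : ℝ) : ℝ :=
  (m : ℝ) ^ (((m : ℝ) - 1)/m) * omegaS (m-1) ^ ((1 : ℝ)/m) * v ^ (((m : ℝ) - 1)/m)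

/-- The region `S¹_{r1} × S¹_{r2} × B^n_R` in `T² × ℝ^n`. -/
def tball (r1 r2 : ℝ) (n : ℕ) (R : ℝ) : Set (T2R r1 r2 n) :=
  {p | ‖t2euc p‖ ≤ R}

/-- `f_n(v) = V^{n+1}(∂(S¹_{r1} × S¹_{r2} × B^n_R))`, where `R > 0` is such that
`V^{n+2}(S¹_{r1} × S¹_{r2} × B^n_R) = v`. -/
noncomputable def fA (r1 r2 : ℝ) (n : ℕ) (v : ℝ≥0∞) : ℝ≥0∞ :=
  ⨅ (R : ℝ) (_ : 0 < R ∧ haus (T2R r1 r2 n) (n+2) (tball r1 r2 n R) = v),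
    haus (T2R r1 r2 n) (n+1) (frontier (tball r1 r2 n R))

/-- The slice function `F₁(t) = V^{n+1}(Ω ∩ ({t} × S¹_{r2} × ℝ^n))`. -/
noncomputable def sliceF1 {r1 r2 : ℝ} {n : ℕ} (Ω : Set (T2R r1 r2 n)) (t : Circ r1) : ℝ≥0∞ :=
  haus (T2R r1 r2 n) (n+1) (Ω ∩ {p | t2fst p = t})

/-- The slice function `F₂(s) = V^{n+1}(Ω ∩ (S¹_{r1} × {s} × ℝ^n))`. -/
noncomputable def sliceF2 {r1 r2 : ℝ} {n : ℕ} (Ω : Set (T2R r1 r2 n)) (s : Circ r2) : ℝ≥0∞ :=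
  haus (T2R r1 r2 n) (n+1) (Ω ∩ {p | t2snd p = s})

/-- `θ_m`, the minimum (infimum) of the slice function `F₁`. -/
noncomputable def thetaMin {r1 r2 : ℝ} {n : ℕ} (Ω : Set (T2R r1 r2 n)) : ℝ≥0∞ :=
  ⨅ t : Circ r1, sliceF1 Ω t

/-- `θ_M`, the maximum (supremum) of the slice function `F₁`. -/
noncomputable def thetaMax {r1 r2 : ℝ} {n : ℕ} (Ω : Set (T2R r1 r2 n)) : ℝ≥0∞ :=
  ⨆ t : Circ r1, sliceF1 Ω t

/-- `σ_m`, the minimum (infimum) of the slice function `F₂`. -/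
noncomputable def sigmaMin {r1 r2 : ℝ} {n : ℕ} (Ω : Set (T2R r1 r2 n)) : ℝ≥0∞ :=
  ⨅ s : Circ r2, sliceF2 Ω s

/-- `σ_M`, the maximum (supremum) of the slice function `F₂`. -/
noncomputable def sigmaMax {r1 r2 : ℝ} {n : ℕ} (Ω : Set (T2R r1 r2 n)) : ℝ≥0∞ :=
  ⨆ s : Circ r2, sliceF2 Ω s

/-- The region `S¹_r × B^m_R` in `S¹_r × ℝ^m`. -/
def s1ball (r : ℝ) (m : ℕ) (R : ℝ) : Set (S1R r m) :=
  {p | ‖(WithLp.equiv 2 (Circ r × EucSp m) p).2‖ ≤ R}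

/-- The unit round 2-sphere `S² ⊂ ℝ³` (its Hausdorff measures coincide with the
Riemannian ones). -/
abbrev Sph2 : Type := ↥(Metric.sphere (0 : EucSp 3) 1)

/-!
Both profiles are compared with the lower envelope of the lines `v ↦ capEnergy (4 * π) h + h * v`,
where `h ≥ 0` is a mean curvature.

In `T² × ℝ`, mollify the lift of a region of volume `v` and perimeter `κ` to the universal cover. A
coarea argument on the torus shows that a slice of area `s` has perimeter at least the isoperimetric
profile `√(s * (4 * π - s))` of the round sphere. Pairing area variation and perimeter of the slices
with the components of the unit normal of a rotationally symmetric sphere of mean curvature `h` in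
`S² × ℝ` gives `capEnergy (4 * π) h + h * v ≤ κ`, where `h` is determined by the largest slice.

In `S² × ℝ`, minimise `capEnergy (4 * π) h + h * v` over `h ≥ 0`. At a minimiser `h > 0` the
derivative vanishes, which says that the rotationally symmetric sphere of mean curvature `h`
encloses volume `v`, and the minimum is its area; at `h = 0` the minimum is the area `8 * π` of the
boundary of a slab. Areas and volumes are computed by comparing Hausdorff measures through conformal
maps: stereographic projection and `(z, t) ↦ exp t • z`.
-/

section Comparison

open Set Filter Topology

/-! ### Mollification and the area of the boundary -/

section OrthogonalLine

variable {V : Type*} [NormedAddCommGroup V] [InnerProductSpace ℝ V]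

theorem orthogonalProjectionOnto_add_inner_smul {ν : V} (hν : ‖ν‖ = 1) (p : V) :
    ((ℝ ∙ ν)ᗮ.orthogonalProjectionOnto p : V) + inner ℝ ν p • ν = p := by
  have h := (ℝ ∙ ν).starProjection_add_starProjection_orthogonal p
  rw [Submodule.starProjection_unit_singleton ℝ hν] at h
  rw [add_comm]
  exact h

theorem orthogonalProjectionOnto_add_smul (ν p : V) (s : ℝ) :
    (ℝ ∙ ν)ᗮ.orthogonalProjectionOnto (p + s • ν) = (ℝ ∙ ν)ᗮ.orthogonalProjectionOnto p := by
  have hν : (ℝ ∙ ν)ᗮ.orthogonalProjectionOnto ν = 0 :=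
    Submodule.orthogonalProjectionOnto_orthogonal_apply_eq_zero
      (Submodule.mem_span_singleton_self ν)
  rw [map_add, map_smul, hν, smul_zero, add_zero]

theorem inner_add_smul_self {ν : V} (hν : ‖ν‖ = 1) (p : V) (s : ℝ) :
    inner ℝ ν (p + s • ν) = inner ℝ ν p + s := by
  rw [inner_add_right, inner_smul_right, real_inner_self_eq_norm_sq, hν, one_pow, mul_one]

theorem lintegral_Ico_orthogonalProjectionOnto_le {ν : V} (hν : ‖ν‖ = 1) (η : V → ℝ≥0∞)
    {a r δ : ℝ} {p : V} (hp : inner ℝ ν p ∈ Ico a (a + r)) :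
    ∫⁻ s in Ico (a - δ) (a + r), η ((ℝ ∙ ν)ᗮ.orthogonalProjectionOnto p + s • ν) ≤
      ∫⁻ σ in Icc (-r) (δ + r), η (p - σ • ν) := by
  set c : ℝ := inner ℝ ν p
  have hpc := orthogonalProjectionOnto_add_inner_smul hν p
  rw [← (Measure.measurePreserving_sub_left volume c).setLIntegral_comp_preimage_emb
    (Homeomorph.subLeft c).measurableEmbedding (fun σ => η (p - σ • ν)) (Icc (-r) (δ + r))]
  calc _ = ∫⁻ s in Ico (a - δ) (a + r), η (p - (c - s) • ν) := by
        refine lintegral_congr fun s => congrArg η ?_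
        nth_rw 2 [← hpc]
        module
    _ ≤ _ := by
        refine lintegral_mono_set fun s hs => ?_
        rw [mem_preimage, mem_Icc]
        constructor <;> linarith [hp.1, hp.2, hs.1, hs.2]

variable [FiniteDimensional ℝ V] [MeasurableSpace V] [BorelSpace V]

theorem lintegral_eq_lintegral_orthogonal_line {ν : V} (hν : ‖ν‖ = 1) {f : V → ℝ≥0∞}
    (hf : Measurable f) :
    ∫⁻ y, f y = ∫⁻ w : (ℝ ∙ ν)ᗮ, ∫⁻ s : ℝ, f (w + s • ν) := by
  have hprod := (ℝ ∙ ν).measurePreserving_measurableEquivProd (0 : V)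
  rw [InnerProductSpace.euclideanHausdorffMeasure_eq_volume] at hprod
  have hsum : ∫⁻ y, f y = ∫⁻ q : (ℝ ∙ ν) × (ℝ ∙ ν)ᗮ, f (q.1 + q.2) := by
    rw [← hprod.symm.lintegral_comp_emb (MeasurableEquiv.measurableEmbedding _)]
    simp
  let e : ℝ ≃ₗᵢ[ℝ] (ℝ ∙ ν) := LinearIsometryEquiv.toSpanUnitSingleton ν hν
  rw [hsum, Measure.volume_eq_prod, lintegral_prod_symm' _ (by fun_prop)]
  refine lintegral_congr fun w => ?_
  rw [← e.measurePreserving.lintegral_comp_emb e.toHomeomorph.measurableEmbedding]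
  simp [e, LinearIsometryEquiv.toSpanUnitSingleton_apply, add_comm]

theorem setLIntegral_orthogonal_cylinder {ν : V} (hν : ‖ν‖ = 1) {Z : Set (ℝ ∙ ν)ᗮ}
    (hZ : MeasurableSet Z) {J : Set ℝ} (hJ : MeasurableSet J) {f : V → ℝ≥0∞}
    (hf : Measurable f) :
    ∫⁻ y in {y | (ℝ ∙ ν)ᗮ.orthogonalProjectionOnto y ∈ Z ∧ inner ℝ ν y ∈ J}, f y =
      ∫⁻ w in Z, ∫⁻ s in J, f (w + s • ν) := by
  set W : Set V := {y | (ℝ ∙ ν)ᗮ.orthogonalProjectionOnto y ∈ Z ∧ inner ℝ ν y ∈ J}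
  have hW : MeasurableSet W :=
    ((ℝ ∙ ν)ᗮ.orthogonalProjectionOnto.continuous.measurable hZ).inter
      ((by fun_prop : Measurable fun y : V => inner ℝ ν y) hJ)
  have hmem (w : (ℝ ∙ ν)ᗮ) (s : ℝ) : (w : V) + s • ν ∈ W ↔ w ∈ Z ∧ s ∈ J := by
    simp only [W, mem_ofPred_eq, orthogonalProjectionOnto_add_smul, inner_add_smul_self hν,
      Submodule.mem_orthogonal_singleton_iff_inner_right.1 w.2, zero_add,
      Submodule.orthogonalProjectionOnto_mem_subspace_eq_self]
  rw [← lintegral_indicator hW, lintegral_eq_lintegral_orthogonal_line hν (hf.indicator hW),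
    ← lintegral_indicator hZ]
  refine lintegral_congr fun w => ?_
  by_cases hw : w ∈ Z
  · rw [indicator_of_mem hw, ← lintegral_indicator hJ]
    refine lintegral_congr fun s => ?_
    by_cases hs : s ∈ J <;> simp [indicator, hmem, hw, hs]
  · rw [indicator_of_notMem hw]
    simp [indicator, hmem, hw]

end OrthogonalLine

section DirectionalBound

variable {V : Type*} [NormedAddCommGroup V] [InnerProductSpace ℝ V] [FiniteDimensional ℝ V]
  [MeasurableSpace V] [BorelSpace V] {n : ℕ} [Fact (Module.finrank ℝ V = n + 1)] {ν : V}

theorem volume_orthogonalProjectionOnto_image_le (hν : ‖ν‖ = 1) (B : Set V) :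
    volume ((ℝ ∙ ν)ᗮ.orthogonalProjectionOnto '' B) ≤ (μHE[n] : Measure V) B := by
  have hn : Module.finrank ℝ (ℝ ∙ ν)ᗮ = n :=
    Submodule.finrank_orthogonal_span_singleton (norm_ne_zero_iff.1 (hν ▸ one_ne_zero))
  subst hn
  rw [← InnerProductSpace.euclideanHausdorffMeasure_eq_volume]
  simp only [Measure.euclideanHausdorffMeasure_def, Measure.smul_apply]
  have hlip := (ℝ ∙ ν)ᗮ.lipschitzWith_orthogonalProjectionOnto.hausdorffMeasure_image_le
    (d := (Module.finrank ℝ (ℝ ∙ ν)ᗮ : ℝ)) (by positivity) B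
  gcongr
  simpa using hlip

theorem setLIntegral_orthogonalProjectionOnto_image_le (hν : ‖ν‖ = 1) (B : Set V)
    {H : (ℝ ∙ ν)ᗮ → ℝ≥0∞} (hH : Measurable H) :
    ∫⁻ w in toMeasurable volume ((ℝ ∙ ν)ᗮ.orthogonalProjectionOnto '' B), H w ≤
      ∫⁻ p in B, H ((ℝ ∙ ν)ᗮ.orthogonalProjectionOnto p) ∂(μHE[n] : Measure V) := by
  set P := (ℝ ∙ ν)ᗮ.orthogonalProjectionOnto
  have hP : Measurable P := P.continuous.measurable
  have hle : (volume.restrict (toMeasurable volume (P '' B))) ≤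
      ((μHE[n] : Measure V).restrict B).map P := by
    refine Measure.le_iff.2 fun A hA => ?_
    rw [Measure.restrict_apply hA, inter_comm, Measure.measure_toMeasurable_inter_of_sFinite hA,
      Measure.map_apply hP hA, Measure.restrict_apply (hP hA), inter_comm (P '' B),
      ← image_preimage_inter]
    exact volume_orthogonalProjectionOnto_image_le hν _
  calc _ ≤ ∫⁻ w, H w ∂(((μHE[n] : Measure V).restrict B).map P) := lintegral_mono' hle le_rfl
    _ = _ := lintegral_map hH hP

theorem exists_subset_setLIntegral_slab_le (hν : ‖ν‖ = 1) {B : Set V} (hB : MeasurableSet B)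
    {a r : ℝ} (ha : ∀ p ∈ B, inner ℝ ν p ∈ Ico a (a + r)) (δ : ℝ) {η : V → ℝ≥0∞}
    (hη : Measurable η) :
    ∃ W : Set V, {y | ∃ σ ∈ Icc 0 δ, y + σ • ν ∈ B} ⊆ W ∧
      ∫⁻ y in W, η y ≤
        ∫⁻ p in B, (∫⁻ σ in Icc (-r) (δ + r), η (p - σ • ν)) ∂(μHE[n] : Measure V) := by
  set P := (ℝ ∙ ν)ᗮ.orthogonalProjectionOnto
  set Z := toMeasurable volume (P '' B)
  refine ⟨{y | P y ∈ Z ∧ inner ℝ ν y ∈ Ico (a - δ) (a + r)}, ?_, ?_⟩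
  · rintro y ⟨σ, hσ, hy⟩
    have hinner := ha _ hy
    rw [inner_add_smul_self hν] at hinner
    exact ⟨subset_toMeasurable _ _ ⟨_, hy, orthogonalProjectionOnto_add_smul ν y σ⟩,
      by linarith [hσ.2, hinner.1], by linarith [hσ.1, hinner.2]⟩
  · have hmeas : Measurable fun q : (ℝ ∙ ν)ᗮ × ℝ => η (q.1 + q.2 • ν) := by fun_prop
    calc _ = ∫⁻ w in Z, ∫⁻ s in Ico (a - δ) (a + r), η (w + s • ν) :=
          setLIntegral_orthogonal_cylinder hν (measurableSet_toMeasurable _ _)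
            measurableSet_Ico hη
      _ ≤ ∫⁻ p in B, (∫⁻ s in Ico (a - δ) (a + r), η (P p + s • ν)) ∂(μHE[n] : Measure V) :=
          setLIntegral_orthogonalProjectionOnto_image_le hν B hmeas.lintegral_prod_right'
      _ ≤ _ := setLIntegral_mono' hB fun p hp =>
          lintegral_Ico_orthogonalProjectionOnto_le hν η (ha p hp)

-- `S` is cut into slabs of thickness `r` orthogonal to `ν`; each slab is compared with its
-- projection along `ν`, which costs at most `r` at either end of the segments.
theorem setLIntegral_sweep_le (hν : ‖ν‖ = 1) {S : Set V} (hS : MeasurableSet S)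
    {η : V → ℝ≥0∞} (hη : Measurable η) (δ : ℝ) {r : ℝ} (hr : 0 < r) :
    ∫⁻ y in {y | ∃ σ ∈ Icc 0 δ, y + σ • ν ∈ S}, η y ≤
      ∫⁻ p in S, (∫⁻ σ in Icc (-r) (δ + r), η (p - σ • ν)) ∂(μHE[n] : Measure V) := by
  let slab (i : ℤ) : Set ℝ := Ico (i • r) ((i + 1) • r)
  have hslab (i : ℤ) : slab i = Ico (i • r) (i • r + r) := by
    simp only [slab, add_smul, one_smul]
  let B (i : ℤ) : Set V := S ∩ {p | inner ℝ ν p ∈ slab i}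
  have hB (i : ℤ) : MeasurableSet (B i) :=
    hS.inter ((by fun_prop : Measurable fun p : V => inner ℝ ν p) measurableSet_Ico)
  have hdisj : Pairwise (Function.onFun Disjoint B) := fun i j hij =>
    ((pairwise_disjoint_Ico_zsmul r hij).preimage fun p : V => inner ℝ ν p).mono
      inter_subset_right inter_subset_right
  have hmem_slab (x : ℝ) : ∃ i, x ∈ slab i := mem_iUnion.1 (iUnion_Ico_zsmul hr ▸ mem_univ x)
  have hSB : S = ⋃ i, B i := by
    refine Subset.antisymm (fun p hp => ?_) (iUnion_subset fun i => inter_subset_left)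
    obtain ⟨i, hi⟩ := hmem_slab (inner ℝ ν p)
    exact mem_iUnion.2 ⟨i, hp, hi⟩
  choose W hDW hW using fun i => exists_subset_setLIntegral_slab_le (n := n) hν (hB i)
    (a := i • r) (r := r) (fun p hp => hslab i ▸ hp.2) δ hη
  calc _ ≤ ∫⁻ y in ⋃ i, W i, η y := by
        refine lintegral_mono_set ?_
        rintro y ⟨σ, hσ, hy⟩
        obtain ⟨i, hi⟩ := mem_iUnion.1 (hSB ▸ hy)
        exact mem_iUnion.2 ⟨i, hDW i ⟨σ, hσ, hi⟩⟩
    _ ≤ ∑' i, ∫⁻ y in W i, η y := lintegral_iUnion_le _ _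
    _ ≤ ∑' i, ∫⁻ p in B i, (∫⁻ σ in Icc (-r) (δ + r), η (p - σ • ν)) ∂(μHE[n] : Measure V) :=
        ENNReal.tsum_le_tsum hW
    _ = _ := by rw [← lintegral_iUnion hB hdisj, ← hSB]

end DirectionalBound

section Mollification

theorem exists_mem_frontier_of_segment {E : Type*} [AddCommGroup E] [Module ℝ E]
    [TopologicalSpace E] [ContinuousAdd E] [ContinuousSMul ℝ E] {U : Set E} {x ν : E} {δ : ℝ}
    (hδ : 0 ≤ δ) (h : ¬ (x ∈ U ↔ x + δ • ν ∈ U)) :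
    ∃ σ ∈ Icc 0 δ, x + σ • ν ∈ frontier U := by
  let γ : Icc 0 δ → E := fun σ => x + (σ : ℝ) • ν
  have hγ : Continuous γ := by fun_prop
  have h0 : γ ⟨0, le_rfl, hδ⟩ = x := by simp [γ]
  have hne : (frontier (γ ⁻¹' U)).Nonempty := by
    have := Subtype.preconnectedSpace (isPreconnected_Icc (a := (0 : ℝ)) (b := δ))
    rw [nonempty_frontier_iff]
    by_cases hx : x ∈ U
    · exact ⟨⟨_, mem_preimage.2 (h0 ▸ hx)⟩, (ne_univ_iff_exists_notMem _).2
        ⟨⟨δ, hδ, le_rfl⟩, fun hy => h (iff_of_true hx hy)⟩⟩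
    · exact ⟨⟨⟨δ, hδ, le_rfl⟩, not_not.1 fun hy => h (iff_of_false hx hy)⟩,
        (ne_univ_iff_exists_notMem _).2 ⟨_, fun hy => hx (h0 ▸ mem_preimage.1 hy)⟩⟩
  obtain ⟨σ, hσ⟩ := hne
  exact ⟨σ, σ.2, hγ.frontier_preimage_subset U hσ⟩

theorem eventually_apply_add_le_add_indicator {E : Type*} [SeminormedAddCommGroup E]
    {ρ : E → ℝ} (hρc : Continuous ρ) (hρs : HasCompactSupport ρ) {ε : ℝ} (hε : 0 < ε) :
    ∀ᶠ w in 𝓝 0, ∀ z, ρ (z + w) ≤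
      ρ z + (Metric.cthickening 1 (tsupport ρ)).indicator (fun _ => ε) z := by
  obtain ⟨δ, hδ, huc⟩ :=
    Metric.uniformContinuous_iff.1 (hρs.uniformContinuous_of_continuous hρc) ε hε
  filter_upwards [Metric.ball_mem_nhds 0 hδ, Metric.ball_mem_nhds 0 one_pos] with w hwδ hw1 z
  rw [mem_ball_zero_iff] at hwδ hw1
  by_cases hz : z ∈ Metric.cthickening 1 (tsupport ρ)
  · rw [indicator_of_mem hz]
    have hdist := huc (a := z + w) (b := z) (by simpa [dist_eq_norm] using hwδ)
    rw [Real.dist_eq] at hdist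
    linarith [le_abs_self (ρ (z + w) - ρ z)]
  · have hzero (y : E) (hy : dist z y ≤ 1) : ρ y = 0 := image_eq_zero_of_notMem_tsupport
      fun hmem => hz (Metric.mem_cthickening_of_dist_le _ _ _ _ hmem hy)
    rw [indicator_of_notMem hz, hzero z (by simp), hzero (z + w) (by simpa using hw1.le),
      add_zero]

variable {V : Type*} [NormedAddCommGroup V] [InnerProductSpace ℝ V] [FiniteDimensional ℝ V]
  [MeasurableSpace V] [BorelSpace V]

/-- The mollification of the indicator function of `U` by a kernel `ρ`. -/
def mollify (ρ : V → ℝ) (U : Set V) : V → ℝ :=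
  convolution ρ (U.indicator 1) (ContinuousLinearMap.lsmul ℝ ℝ) volume

theorem mollify_apply (ρ : V → ℝ) (U : Set V) (x : V) :
    mollify ρ U x = ∫ t, ρ t * U.indicator 1 (x - t) :=
  rfl

theorem integrable_mul_indicator_sub {ρ : V → ℝ} (hρ : Integrable ρ) {U : Set V}
    (hU : MeasurableSet U) (x : V) :
    Integrable fun t => ρ t * U.indicator (1 : V → ℝ) (x - t) := by
  have hm : Measurable (U.indicator (1 : V → ℝ)) := measurable_one.indicator hU
  refine hρ.mul_bdd (c := 1) (hm.comp (measurable_const.sub measurable_id)).aestronglyMeasurable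
    (Eventually.of_forall fun t => ?_)
  by_cases h : x - t ∈ U <;> simp [h]

theorem enorm_mollify_add_sub_le {ρ : V → ℝ} (hρ : Integrable ρ) {U : Set V}
    (hU : MeasurableSet U) (x a : V) :
    ‖mollify ρ U (x + a) - mollify ρ U x‖ₑ ≤
      ∫⁻ y in {y | ¬ (y ∈ U ↔ y + a ∈ U)}, ‖ρ (x - y)‖ₑ := by
  set D : Set V := {y | ¬ (y ∈ U ↔ y + a ∈ U)}
  have hD : MeasurableSet D := (MeasurableSet.iff hU (measurable_id.add_const a hU)).compl
  rw [mollify_apply, mollify_apply, ← integral_sub (integrable_mul_indicator_sub hρ hU _)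
    (integrable_mul_indicator_sub hρ hU _), ← lintegral_indicator hD,
    ← lintegral_sub_left_eq_self _ x]
  refine (enorm_integral_le_lintegral_enorm _).trans (lintegral_mono fun t => ?_)
  rw [← mul_sub, add_sub_right_comm, enorm_mul]
  by_cases hy : x - t ∈ D
  · rw [indicator_of_mem hy, _root_.sub_sub_cancel]
    refine mul_le_of_le_one_right' ?_
    by_cases h1 : x - t ∈ U <;> by_cases h2 : x - t + a ∈ U <;> simp [h1, h2]
  · have hiff : x - t ∈ U ↔ x - t + a ∈ U := not_not.1 hy
    by_cases h : x - t + a ∈ U <;> simp [indicator, hiff, h]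

variable {n : ℕ} [Fact (Module.finrank ℝ V = n + 1)] {ν : V} {ρ : V → ℝ} {U S : Set V}

theorem enorm_mollify_add_smul_sub_le (hρ : Integrable ρ) (hρm : Measurable ρ)
    (hU : MeasurableSet U) (hS : MeasurableSet S) (hSU : frontier U ⊆ S) (hν : ‖ν‖ = 1) (x : V)
    {δ r : ℝ} (hδ : 0 ≤ δ) (hr : 0 < r) :
    ‖mollify ρ U (x + δ • ν) - mollify ρ U x‖ₑ ≤
      ∫⁻ p in S, (∫⁻ σ in Icc (-r) (δ + r), ‖ρ (x - p + σ • ν)‖ₑ) ∂(μHE[n] : Measure V) :=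
  calc _ ≤ ∫⁻ y in {y | ¬ (y ∈ U ↔ y + δ • ν ∈ U)}, ‖ρ (x - y)‖ₑ :=
        enorm_mollify_add_sub_le hρ hU x _
    _ ≤ ∫⁻ y in {y | ∃ σ ∈ Icc 0 δ, y + σ • ν ∈ S}, ‖ρ (x - y)‖ₑ :=
        lintegral_mono_set fun y hy =>
          (exists_mem_frontier_of_segment hδ hy).imp fun σ hσ => ⟨hσ.1, hSU hσ.2⟩
    _ ≤ ∫⁻ p in S, (∫⁻ σ in Icc (-r) (δ + r), ‖ρ (x - (p - σ • ν))‖ₑ)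
          ∂(μHE[n] : Measure V) :=
        setLIntegral_sweep_le hν hS (η := fun y => ‖ρ (x - y)‖ₑ) (by fun_prop) δ hr
    _ = _ := by simp only [← sub_add]

theorem eventually_enorm_slope_mollify_le (hρc : Continuous ρ) (hρs : HasCompactSupport ρ)
    (hρ0 : ∀ t, 0 ≤ ρ t) (hU : MeasurableSet U) (hS : MeasurableSet S) (hSU : frontier U ⊆ S)
    (hν : ‖ν‖ = 1) (x : V) {ε : ℝ} (hε : 0 < ε) :
    ∀ᶠ δ : ℝ in 𝓝[>] 0, ‖δ⁻¹ * (mollify ρ U (x + δ • ν) - mollify ρ U x)‖ₑ ≤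
      ENNReal.ofReal (1 + 2 * δ) * ∫⁻ p in S, (‖ρ (x - p)‖ₑ +
        (Metric.cthickening 1 (tsupport ρ)).indicator (fun _ => ENNReal.ofReal ε) (x - p))
        ∂(μHE[n] : Measure V) := by
  set K := Metric.cthickening 1 (tsupport ρ)
  obtain ⟨η, hη, hmod⟩ := Metric.eventually_nhds_iff.1
    (eventually_apply_add_le_add_indicator hρc hρs hε)
  filter_upwards [Ioo_mem_nhdsGT (show (0 : ℝ) < min (η / 2) 1 by positivity)] with δ ⟨hδ, hδη⟩
  obtain ⟨hδη, hδ1⟩ := lt_min_iff.1 hδη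
  have hr : 0 < δ ^ 2 := by positivity
  have hkernel (z : V) (σ : ℝ) (hσ : σ ∈ Icc (-δ ^ 2) (δ + δ ^ 2)) :
      ‖ρ (z + σ • ν)‖ₑ ≤ ‖ρ z‖ₑ + K.indicator (fun _ => ENNReal.ofReal ε) z := by
    have hσ' : |σ| < η := by rw [abs_lt]; constructor <;> nlinarith [hσ.1, hσ.2]
    have hle := hmod (y := σ • ν) (by simpa [norm_smul, hν] using hσ') z
    rw [Real.enorm_of_nonneg (hρ0 _), Real.enorm_of_nonneg (hρ0 _)]
    refine (ENNReal.ofReal_le_ofReal hle).trans (ENNReal.ofReal_add_le.trans_eq ?_)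
    by_cases hz : z ∈ Metric.cthickening 1 (tsupport ρ) <;> simp [K, hz]
  rw [enorm_mul, Real.enorm_of_nonneg (by positivity)]
  calc _ ≤ ENNReal.ofReal δ⁻¹ * ∫⁻ p in S, (∫⁻ _ in Icc (-δ ^ 2) (δ + δ ^ 2),
        (‖ρ (x - p)‖ₑ + K.indicator (fun _ => ENNReal.ofReal ε) (x - p)))
        ∂(μHE[n] : Measure V) := by
        gcongr
        refine (enorm_mollify_add_smul_sub_le (hρc.integrable_of_hasCompactSupport hρs)
          hρc.measurable hU hS hSU hν x hδ.le hr).trans (lintegral_mono fun p => ?_)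
        exact setLIntegral_mono' measurableSet_Icc fun σ hσ => hkernel (x - p) σ hσ
    _ = _ := by
        simp_rw [setLIntegral_const, Real.volume_Icc]
        rw [lintegral_mul_const' _ _ ENNReal.ofReal_ne_top, mul_left_comm, mul_comm,
          ← ENNReal.ofReal_mul (by positivity)]
        congr 2
        field_simp
        ring

-- The directional derivatives of the mollification of `U` are bounded by the mollification of
-- the surface measure, with no constant lost.
theorem enorm_lineDeriv_mollify_le [IsLocallyFiniteMeasure ((μHE[n] : Measure V).restrict S)]
    (hρc : Continuous ρ) (hρs : HasCompactSupport ρ) (hρ0 : ∀ t, 0 ≤ ρ t) (hU : MeasurableSet U)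
    (hS : MeasurableSet S) (hSU : frontier U ⊆ S) (hν : ‖ν‖ = 1) {x : V} {d : ℝ}
    (hd : HasLineDerivAt ℝ (mollify ρ U) d x ν) :
    ‖d‖ₑ ≤ ∫⁻ p in S, ‖ρ (x - p)‖ₑ ∂(μHE[n] : Measure V) := by
  set R := ∫⁻ p in S, ‖ρ (x - p)‖ₑ ∂(μHE[n] : Measure V)
  set K := Metric.cthickening 1 (tsupport ρ)
  have hK : IsCompact ((fun p => x - p) ⁻¹' K) :=
    (Homeomorph.subLeft x).isCompact_preimage.2 hρs.isCompact.cthickening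
  set M := ((μHE[n] : Measure V).restrict S) ((fun p => x - p) ⁻¹' K)
  have hslope : Tendsto (fun δ : ℝ => ‖δ⁻¹ * (mollify ρ U (x + δ • ν) - mollify ρ U x)‖ₑ)
      (𝓝[>] 0) (𝓝 ‖d‖ₑ) := by
    have h1 := hd.tendsto_slope_zero_right
    simp only [smul_eq_mul] at h1
    exact h1.enorm
  have hbound (ε : ℝ) (hε : 0 < ε) : ‖d‖ₑ ≤ R + ENNReal.ofReal ε * M := by
    have hint : ∫⁻ p in S, (‖ρ (x - p)‖ₑ + K.indicator (fun _ => ENNReal.ofReal ε) (x - p))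
        ∂(μHE[n] : Measure V) = R + ENNReal.ofReal ε * M := by
      have hm : Measurable fun p : V => ‖ρ (x - p)‖ₑ :=
        (hρc.comp (continuous_sub_left x)).measurable.enorm
      rw [lintegral_add_left hm]
      congr 1
      exact lintegral_indicator_const hK.measurableSet _
    have hfactor : Tendsto (fun δ : ℝ => ENNReal.ofReal (1 + 2 * δ)) (𝓝[>] 0) (𝓝 1) := by
      have : Continuous fun δ : ℝ => ENNReal.ofReal (1 + 2 * δ) :=
        ENNReal.continuous_ofReal.comp (by fun_prop)
      simpa using (this.tendsto 0).mono_left nhdsWithin_le_nhds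
    have hlim := ENNReal.Tendsto.mul_const (b := R + ENNReal.ofReal ε * M) hfactor
      (Or.inl one_ne_zero)
    rw [one_mul, ← hint] at hlim
    exact hint ▸ le_of_tendsto_of_tendsto hslope hlim
      (eventually_enorm_slope_mollify_le hρc hρs hρ0 hU hS hSU hν x hε)
  have hlim : Tendsto (fun ε : ℝ => R + ENNReal.ofReal ε * M) (𝓝[>] 0) (𝓝 R) := by
    have hε : Tendsto ENNReal.ofReal (𝓝[>] 0) (𝓝 0) := by
      simpa using (ENNReal.continuous_ofReal.tendsto 0).mono_left nhdsWithin_le_nhds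
    simpa using tendsto_const_nhds.add
      (ENNReal.Tendsto.mul_const hε (Or.inr hK.measure_lt_top.ne))
  exact ge_of_tendsto hlim (eventually_nhdsWithin_of_forall hbound)

end Mollification

section MollifyProperties

variable {V : Type*} [NormedAddCommGroup V] [InnerProductSpace ℝ V] [FiniteDimensional ℝ V]
  [MeasurableSpace V] [BorelSpace V] {ρ : V → ℝ} {U : Set V}

theorem mollify_nonneg (hρ0 : ∀ t, 0 ≤ ρ t) (x : V) : 0 ≤ mollify ρ U x :=
  integral_nonneg fun t => mul_nonneg (hρ0 t) (indicator_nonneg (fun _ _ => zero_le_one) _)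

theorem mollify_le_integral (hρ : Integrable ρ) (hρ0 : ∀ t, 0 ≤ ρ t) (hU : MeasurableSet U)
    (x : V) : mollify ρ U x ≤ ∫ t, ρ t :=
  integral_mono (integrable_mul_indicator_sub hρ hU x) hρ fun t =>
    mul_le_of_le_one_right (hρ0 t) (indicator_le_self' (fun _ _ => zero_le_one) _)

theorem mollify_add_of_periodic {a : V} (ha : ∀ x, x + a ∈ U ↔ x ∈ U) (x : V) :
    mollify ρ U (x + a) = mollify ρ U x := by
  have hind (t : V) : U.indicator (1 : V → ℝ) (x + a - t) = U.indicator 1 (x - t) := by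
    rw [add_sub_right_comm]
    exact indicator_const_eq_indicator_const (ha (x - t))
  simp only [mollify_apply, hind]

theorem enorm_mollify (hρ : Integrable ρ) (hρ0 : ∀ t, 0 ≤ ρ t) (hU : MeasurableSet U) (x : V) :
    ‖mollify ρ U x‖ₑ = ∫⁻ q in U, ‖ρ (x - q)‖ₑ := by
  have : (volume : Measure V).IsNegInvariant :=
    Measure.IsAddHaarMeasure.isNegInvariant_of_innerRegular _
  rw [Real.enorm_of_nonneg (mollify_nonneg hρ0 x), mollify_apply,
    ofReal_integral_eq_lintegral_ofReal (integrable_mul_indicator_sub hρ hU x)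
      (Eventually.of_forall fun t => mul_nonneg (hρ0 t)
        (indicator_nonneg (fun _ _ => zero_le_one) _)),
    ← lintegral_indicator hU, ← lintegral_sub_left_eq_self _ x]
  refine lintegral_congr fun q => ?_
  by_cases hq : q ∈ U <;> simp [hq, Real.enorm_of_nonneg, hρ0]

theorem contDiff_mollify (hρ : ContDiff ℝ 1 ρ) (hρs : HasCompactSupport ρ)
    (hU : MeasurableSet U) : ContDiff ℝ 1 (mollify ρ U) :=
  hρs.contDiff_convolution_left _ hρ ((locallyIntegrable_const (1 : ℝ)).indicator hU)

theorem enorm_fderiv_mollify_le {n : ℕ} [Fact (Module.finrank ℝ V = n + 1)] {S : Set V}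
    [IsLocallyFiniteMeasure ((μHE[n] : Measure V).restrict S)]
    (hρ : ContDiff ℝ 1 ρ) (hρs : HasCompactSupport ρ) (hρ0 : ∀ t, 0 ≤ ρ t) (hU : MeasurableSet U)
    (hS : MeasurableSet S) (hSU : frontier U ⊆ S) (x ν : V) :
    ‖fderiv ℝ (mollify ρ U) x ν‖ₑ ≤ ‖ν‖ₑ * ∫⁻ p in S, ‖ρ (x - p)‖ₑ ∂(μHE[n] : Measure V) := by
  rcases eq_or_ne ν 0 with rfl | hν
  · simp
  have hline := ((contDiff_mollify hρ hρs hU).differentiable one_ne_zero x).hasFDerivAt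
    |>.hasLineDerivAt (‖ν‖⁻¹ • ν)
  have hdecomp : ν = ‖ν‖ • ‖ν‖⁻¹ • ν := by
    rw [smul_inv_smul₀ (norm_ne_zero_iff.2 hν)]
  calc ‖fderiv ℝ (mollify ρ U) x ν‖ₑ
      = ‖ν‖ₑ * ‖fderiv ℝ (mollify ρ U) x (‖ν‖⁻¹ • ν)‖ₑ := by
        conv_lhs => rw [hdecomp, map_smul, enorm_smul, enorm_norm]
    _ ≤ _ := by
        gcongr
        exact enorm_lineDeriv_mollify_le hρ.continuous hρs hρ0 hU hS hSU
          (norm_smul_inv_norm (𝕜 := ℝ) hν) hline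

/-- A standard sequence of smooth bump functions shrinking to a Dirac mass, with bounded ratio of
outer to inner radius. -/
def shrinkingBump (V : Type*) [NormedAddCommGroup V] (k : ℕ) : ContDiffBump (0 : V) where
  rIn := 1 / (2 * ((k : ℝ) + 1))
  rOut := 1 / ((k : ℝ) + 1)
  rIn_pos := by positivity
  rIn_lt_rOut := one_div_lt_one_div_of_lt (by positivity) (by linarith [k.cast_nonneg (α := ℝ)])

theorem lintegral_enorm_normed_shrinkingBump (k : ℕ) :
    ∫⁻ t : V, ‖(shrinkingBump V k).normed volume t‖ₑ = 1 := by
  simp only [Real.enorm_of_nonneg ((shrinkingBump V k).nonneg_normed _)]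
  rw [← ofReal_integral_eq_lintegral_ofReal (shrinkingBump V k).integrable_normed
    (Eventually.of_forall (shrinkingBump V k).nonneg_normed), ContDiffBump.integral_normed,
    ENNReal.ofReal_one]

theorem ae_tendsto_mollify (hU : MeasurableSet U) :
    ∀ᵐ x, Tendsto (fun k => mollify ((shrinkingBump V k).normed volume) U x) atTop
      (𝓝 (U.indicator 1 x)) := by
  refine ContDiffBump.ae_convolution_tendsto_right_of_locallyIntegrable (K := 2)
    tendsto_one_div_add_atTop_nhds_zero_nat (Eventually.of_forall fun k => le_of_eq ?_)
    ((locallyIntegrable_const (1 : ℝ)).indicator hU)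
  simp only [shrinkingBump]
  field_simp

end MollifyProperties

section Unfolding

theorem vaddInvariantMeasure_restrict {G α : Type*} [AddGroup G] [AddAction G α]
    [MeasurableSpace α] [MeasurableConstVAdd G α] {μ : Measure α} [VAddInvariantMeasure G α μ]
    {S : Set α} (hS : ∀ (g : G) x, g +ᵥ x ∈ S ↔ x ∈ S) :
    VAddInvariantMeasure G α (μ.restrict S) where
  measure_preimage_vadd g A hA := by
    have hpre : (g +ᵥ ·) ⁻¹' A ∩ S = (g +ᵥ ·) ⁻¹' (A ∩ S) := by
      ext x; simp [hS]
    rw [Measure.restrict_apply (measurable_const_vadd g hA), Measure.restrict_apply hA, hpre,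
      measure_preimage_vadd]

variable {V : Type*} [NormedAddCommGroup V] [MeasurableSpace V] [BorelSpace V]
  [SecondCountableTopology V] {Λ : AddSubgroup V} [Countable Λ] {Q : Set V} {μ ν : Measure V}

-- Unfold the `μ`-integral over `Λ`, then fold the resulting sum into the `ν`-integral.
theorem setLIntegral_lintegral_sub [SFinite μ] [SFinite ν] [ν.IsAddLeftInvariant]
    [VAddInvariantMeasure Λ V μ] (hQμ : IsAddFundamentalDomain Λ Q μ)
    (hQν : IsAddFundamentalDomain Λ Q ν) {η : V → ℝ≥0∞} (hη : Measurable η) :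
    ∫⁻ x in Q, (∫⁻ p, η (x - p) ∂μ) ∂ν = (∫⁻ x, η x ∂ν) * μ Q := by
  have hη₂ : Measurable fun q : V × V => η (q.2 - q.1) := by fun_prop
  have hinner : Measurable fun p => ∫⁻ x in Q, η (x - p) ∂ν := hη₂.lintegral_prod_right'
  have hfold (p : V) :
      ∑' g : Λ, ∫⁻ x in Q, η (x - (-g +ᵥ p)) ∂ν = ∫⁻ x, η x ∂ν := by
    rw [← lintegral_sub_right_eq_self η p, hQν.lintegral_eq_tsum'']
    refine tsum_congr fun g => lintegral_congr fun x => congrArg η ?_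
    simp only [AddSubgroup.vadd_def, AddSubgroup.coe_neg, vadd_eq_add]
    abel
  calc ∫⁻ x in Q, (∫⁻ p, η (x - p) ∂μ) ∂ν
      = ∫⁻ p, (∫⁻ x in Q, η (x - p) ∂ν) ∂μ :=
        lintegral_lintegral_swap (by fun_prop)
    _ = ∑' g : Λ, ∫⁻ p in Q, (∫⁻ x in Q, η (x - (-g +ᵥ p)) ∂ν) ∂μ :=
        hQμ.lintegral_eq_tsum' _
    _ = ∫⁻ p in Q, (∑' g : Λ, ∫⁻ x in Q, η (x - (-g +ᵥ p)) ∂ν) ∂μ :=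
        (lintegral_tsum fun g => (hinner.comp (measurable_const_vadd (-g))).aemeasurable).symm
    _ = (∫⁻ x, η x ∂ν) * μ Q := by simp only [hfold, setLIntegral_const]

end Unfolding

section LocalIsometry

variable {X Y : Type*} [MetricSpace X] [MetricSpace Y] [MeasurableSpace X] [BorelSpace X]
  [MeasurableSpace Y] [BorelSpace Y] {f : X → Y}

theorem euclideanHausdorffMeasure_image_of_isometryOn {s : Set X}
    (hf : ∀ x ∈ s, ∀ y ∈ s, edist (f x) (f y) = edist x y) (d : ℕ) :
    (μHE[d] : Measure Y) (f '' s) = (μHE[d] : Measure X) s := by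
  have hrestrict : Isometry fun x : s => f x := fun x y => hf x x.2 y y.2
  rw [image_eq_range, ← image_univ, hrestrict.euclideanHausdorffMeasure_image,
    ← isometry_subtype_coe.euclideanHausdorffMeasure_image, image_univ, Subtype.range_coe]

theorem isLocallyFiniteMeasure_restrict_preimage {d : ℕ} {B : Set Y}
    (hfB : MeasurableSet (f ⁻¹' B))
    (hf : ∀ x, ∃ s ∈ 𝓝 x, ∀ y ∈ s, ∀ z ∈ s, edist (f y) (f z) = edist y z)
    (hB : (μHE[d] : Measure Y) B ≠ ∞) :
    IsLocallyFiniteMeasure ((μHE[d] : Measure X).restrict (f ⁻¹' B)) := by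
  refine ⟨fun x => ?_⟩
  obtain ⟨s, hs, hfs⟩ := hf x
  refine ⟨s, hs, ?_⟩
  calc (μHE[d] : Measure X).restrict (f ⁻¹' B) s
      = (μHE[d] : Measure Y) (f '' (s ∩ f ⁻¹' B)) := by
        rw [Measure.restrict_apply' hfB, euclideanHausdorffMeasure_image_of_isometryOn
          fun y hy z hz => hfs y hy.1 z hz.1]
    _ ≤ (μHE[d] : Measure Y) B :=
        measure_mono ((image_mono inter_subset_right).trans (image_preimage_subset f B))
    _ < ∞ := hB.lt_top

theorem euclideanHausdorffMeasure_preimage_inter_iUnion [PolishSpace X] {ι : Type*} [Countable ι]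
    {C : ι → Set X} (hf : Continuous f) (hC : ∀ i, MeasurableSet (C i))
    (hdisj : Pairwise (Function.onFun Disjoint C))
    (hiso : ∀ i, ∀ x ∈ C i, ∀ y ∈ C i, edist (f x) (f y) = edist x y)
    (hbij : BijOn f (⋃ i, C i) univ) {B : Set Y} (hB : MeasurableSet B) (d : ℕ) :
    (μHE[d] : Measure X) (f ⁻¹' B ∩ ⋃ i, C i) = (μHE[d] : Measure Y) B := by
  let A i := f ⁻¹' B ∩ C i
  have hA i : MeasurableSet (A i) := (hf.measurable hB).inter (hC i)
  have hAinj : InjOn f (⋃ i, A i) := hbij.injOn.mono (iUnion_mono fun i => inter_subset_right)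
  have himage : f '' ⋃ i, A i = B := by
    rw [← inter_iUnion, image_preimage_inter, hbij.image_eq, inter_univ]
  have hAdisj : Pairwise (Function.onFun Disjoint A) := fun i j hij =>
    (hdisj hij).mono inter_subset_right inter_subset_right
  calc (μHE[d] : Measure X) (f ⁻¹' B ∩ ⋃ i, C i)
      = ∑' i, (μHE[d] : Measure X) (A i) := by rw [inter_iUnion, measure_iUnion hAdisj hA]
    _ = ∑' i, (μHE[d] : Measure Y) (f '' A i) := tsum_congr fun i =>
        (euclideanHausdorffMeasure_image_of_isometryOn
          (fun x hx y hy => hiso i x hx.2 y hy.2) d).symm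
    _ = (μHE[d] : Measure Y) (⋃ i, f '' A i) := by
        refine (measure_iUnion (fun i j hij => ?_) fun i =>
          (hA i).image_of_continuousOn_injOn hf.continuousOn
            (hAinj.mono (subset_iUnion A i))).symm
        exact (hAdisj hij).image hAinj (subset_iUnion A i) (subset_iUnion A j)
    _ = (μHE[d] : Measure Y) B := by rw [← image_iUnion, himage]

end LocalIsometry

/-! ### Periodic approximations of regions in the torus times a line -/

section Torus

/-- The universal cover of the product of a flat torus and a line. -/
abbrev PlaneLine : Type := WithLp 2 (ℝ × WithLp 2 (ℝ × EuclideanSpace ℝ (Fin 1)))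

/-- The product of a flat square torus of side `L` and a line. -/
abbrev TorusLine (L : ℝ) : Type :=
  WithLp 2 (AddCircle L × WithLp 2 (AddCircle L × EuclideanSpace ℝ (Fin 1)))

/-- The covering map of the product of a flat torus and a line. -/
def torusCover (L : ℝ) (p : PlaneLine) : TorusLine L :=
  WithLp.toLp 2 ((p.fst : AddCircle L), WithLp.toLp 2 ((p.snd.fst : AddCircle L), p.snd.snd))

/-- The deck transformations of `torusCover`, as translations. -/
def deckTranslation (L : ℝ) : ℤ × ℤ →+ PlaneLine where
  toFun z := WithLp.toLp 2 (z.1 * L, WithLp.toLp 2 (z.2 * L, 0))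
  map_zero' := by simp
  map_add' a b := by
    simp only [Prod.fst_add, Prod.snd_add, Int.cast_add, add_mul]
    rw [← WithLp.toLp_add, Prod.mk_add_mk, ← WithLp.toLp_add, Prod.mk_add_mk, add_zero]

/-- The standard fundamental domain of `torusCover`. -/
def fundDomain (L : ℝ) : Set PlaneLine := {p | p.fst ∈ Ico 0 L ∧ p.snd.fst ∈ Ico 0 L}

variable {L : ℝ}

theorem measurableSet_fundDomain : MeasurableSet (fundDomain L) :=
  (measurableSet_Ico.preimage (by fun_prop)).inter (measurableSet_Ico.preimage (by fun_prop))

theorem existsUnique_deckTranslation_add_mem (hL : 0 < L) (p : PlaneLine) :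
    ∃! z, deckTranslation L z + p ∈ fundDomain L := by
  obtain ⟨i, hi, hi_unique⟩ := existsUnique_add_zsmul_mem_Ico hL p.fst 0
  obtain ⟨j, hj, hj_unique⟩ := existsUnique_add_zsmul_mem_Ico hL p.snd.fst 0
  have hmem (z : ℤ × ℤ) : deckTranslation L z + p ∈ fundDomain L ↔
      p.fst + z.1 • L ∈ Ico 0 (0 + L) ∧ p.snd.fst + z.2 • L ∈ Ico 0 (0 + L) := by
    simp [fundDomain, deckTranslation, add_comm]
  exact ⟨(i, j), (hmem _).2 ⟨hi, hj⟩, fun z hz =>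
    Prod.ext (hi_unique _ ((hmem z).1 hz).1) (hj_unique _ ((hmem z).1 hz).2)⟩

instance : Countable (deckTranslation L).range :=
  (countable_range (deckTranslation L)).to_subtype

theorem isAddFundamentalDomain_fundDomain (hL : 0 < L) (μ : Measure PlaneLine) :
    IsAddFundamentalDomain (deckTranslation L).range (fundDomain L) μ := by
  refine .mk' measurableSet_fundDomain.nullMeasurableSet fun p => ?_
  obtain ⟨z, hz, hz_unique⟩ := existsUnique_deckTranslation_add_mem hL p
  refine ⟨⟨_, z, rfl⟩, hz, ?_⟩
  rintro ⟨_, z', rfl⟩ hz'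
  exact Subtype.ext (congrArg (deckTranslation L) (hz_unique z' hz'))

theorem torusCover_deckTranslation_add (z : ℤ × ℤ) (p : PlaneLine) :
    torusCover L (deckTranslation L z + p) = torusCover L p := by
  have coe_mul (n : ℤ) : ((n * L : ℝ) : AddCircle L) = 0 := by
    rw [← zsmul_eq_mul, AddCircle.coe_zsmul, AddCircle.coe_period, smul_zero]
  simp [torusCover, deckTranslation, coe_mul]

instance (d : ℕ) (B : Set (TorusLine L)) : VAddInvariantMeasure (deckTranslation L).range PlaneLine
    ((μHE[d] : Measure PlaneLine).restrict (torusCover L ⁻¹' B)) := by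
  refine vaddInvariantMeasure_restrict ?_
  rintro ⟨_, z, rfl⟩ p
  exact (congrArg (· ∈ B) (torusCover_deckTranslation_add z p)).to_iff

theorem continuous_torusCover : Continuous (torusCover L) := by
  have : Continuous ((↑) : ℝ → AddCircle L) := AddCircle.continuous_mk' L
  unfold torusCover
  fun_prop

theorem edist_torusCover (hL : 0 < L) {p q : PlaneLine} (hfst : |p.fst - q.fst| ≤ L / 2)
    (hsnd : |p.snd.fst - q.snd.fst| ≤ L / 2) :
    edist (torusCover L p) (torusCover L q) = edist p q := by
  have dist_coe {a b : ℝ} (hab : |a - b| ≤ L / 2) :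
      dist (a : AddCircle L) (b : AddCircle L) = dist a b := by
    rw [dist_eq_norm, ← AddCircle.coe_sub,
      (AddCircle.norm_coe_eq_abs_iff L hL.ne').2 (by rwa [abs_of_pos hL]), Real.dist_eq]
  have dist_fst : dist (torusCover L p).fst (torusCover L q).fst = dist p.fst q.fst :=
    dist_coe hfst
  have dist_snd_fst : dist (torusCover L p).snd.fst (torusCover L q).snd.fst =
      dist p.snd.fst q.snd.fst := dist_coe hsnd
  simp only [edist_dist, WithLp.prod_dist_eq_of_L2, dist_fst, dist_snd_fst]
  rfl

theorem bijOn_torusCover (hL : 0 < L) : BijOn (torusCover L) (fundDomain L) univ := by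
  have : Fact (0 < L) := ⟨hL⟩
  refine ⟨mapsTo_univ _ _, fun p hp q hq hpq => ?_, fun t _ => ?_⟩
  · have coe_inj {a b : ℝ} (ha : a ∈ Ico 0 L) (hb : b ∈ Ico 0 L)
        (hab : (a : AddCircle L) = b) : a = b :=
      (AddCircle.coe_eq_coe_iff_of_mem_Ico (a := 0) (by rwa [zero_add]) (by rwa [zero_add])).1 hab
    refine WithLp.ofLp_injective 2 (Prod.ext
      (coe_inj hp.1 hq.1 (congrArg (fun t : TorusLine L => t.fst) hpq))
      (WithLp.ofLp_injective 2 (Prod.ext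
        (coe_inj hp.2 hq.2 (congrArg (fun t : TorusLine L => t.snd.fst) hpq))
        (congrArg (fun t : TorusLine L => t.snd.snd) hpq))))
  · obtain ⟨a, ha⟩ := QuotientAddGroup.mk_surjective t.fst
    obtain ⟨b, hb⟩ := QuotientAddGroup.mk_surjective t.snd.fst
    let p : PlaneLine := WithLp.toLp 2 (a, WithLp.toLp 2 (b, t.snd.snd))
    have hp : torusCover L p = t :=
      WithLp.ofLp_injective 2 (Prod.ext ha (WithLp.ofLp_injective 2 (Prod.ext hb rfl)))
    obtain ⟨z, hz, -⟩ := existsUnique_deckTranslation_add_mem hL p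
    exact ⟨_, hz, (torusCover_deckTranslation_add z p).trans hp⟩

-- `torusCover` is isometric on squares of side `L / 2`, so cut the fundamental domain into such.
theorem euclideanHausdorffMeasure_torusCover_preimage (hL : 0 < L) {B : Set (TorusLine L)}
    (hB : MeasurableSet B) (d : ℕ) :
    (μHE[d] : Measure PlaneLine) (torusCover L ⁻¹' B ∩ fundDomain L) =
      (μHE[d] : Measure (TorusLine L)) B := by
  have : Fact (0 < L) := ⟨hL⟩
  let I (n : ℤ) : Set ℝ := Ico (n • (L / 2)) ((n + 1) • (L / 2))
  have abs_sub_le {n : ℤ} {a b : ℝ} (ha : a ∈ I n) (hb : b ∈ I n) : |a - b| ≤ L / 2 := by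
    simp only [I, add_smul, one_smul, mem_Ico] at ha hb
    exact abs_le.2 ⟨by linarith, by linarith⟩
  let C (z : ℤ × ℤ) : Set PlaneLine := {p | p.fst ∈ I z.1 ∧ p.snd.fst ∈ I z.2} ∩ fundDomain L
  have hC : ⋃ z, C z = fundDomain L := by
    refine (iUnion_subset fun z => inter_subset_right).antisymm fun p hp => ?_
    have hcover (a : ℝ) : ∃ n, a ∈ I n :=
      mem_iUnion.1 ((iUnion_Ico_zsmul (half_pos hL)).ge (mem_univ a))
    obtain ⟨i, hi⟩ := hcover p.fst
    obtain ⟨j, hj⟩ := hcover p.snd.fst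
    exact mem_iUnion.2 ⟨(i, j), ⟨hi, hj⟩, hp⟩
  have hCmeas (z : ℤ × ℤ) : MeasurableSet (C z) :=
    ((measurableSet_Ico.preimage (by fun_prop)).inter
      (measurableSet_Ico.preimage (by fun_prop))).inter measurableSet_fundDomain
  have hCdisj : Pairwise (Function.onFun Disjoint C) := by
    have index_eq {m n : ℤ} {a : ℝ} (hm : a ∈ I m) (hn : a ∈ I n) : m = n :=
      (pairwise_disjoint_Ico_zsmul (L / 2)).eq (not_disjoint_iff.2 ⟨a, hm, hn⟩)
    exact fun z z' hne => disjoint_left.2 fun p hp hp' =>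
      hne (Prod.ext (index_eq hp.1.1 hp'.1.1) (index_eq hp.1.2 hp'.1.2))
  rw [← hC]
  exact euclideanHausdorffMeasure_preimage_inter_iUnion continuous_torusCover hCmeas hCdisj
    (fun z p hp q hq => edist_torusCover hL (abs_sub_le hp.1.1 hq.1.1) (abs_sub_le hp.1.2 hq.1.2))
    (hC ▸ bijOn_torusCover hL) hB d

theorem isLocallyFiniteMeasure_restrict_torusCover_preimage (hL : 0 < L) {B : Set (TorusLine L)}
    (hB : MeasurableSet B) {d : ℕ} (hfin : (μHE[d] : Measure (TorusLine L)) B ≠ ∞) :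
    IsLocallyFiniteMeasure ((μHE[d] : Measure PlaneLine).restrict (torusCover L ⁻¹' B)) := by
  refine isLocallyFiniteMeasure_restrict_preimage (continuous_torusCover.measurable hB)
    (fun x => ⟨Metric.closedBall x (L / 4), Metric.closedBall_mem_nhds x (by positivity),
      fun p hp q hq => ?_⟩) hfin
  have hpq : ‖p - q‖ ≤ L / 2 := by
    rw [← dist_eq_norm]
    linarith [dist_triangle_right p q x, Metric.mem_closedBall.1 hp, Metric.mem_closedBall.1 hq]
  exact edist_torusCover hL ((WithLp.norm_fst_le _ (p - q)).trans hpq)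
    ((WithLp.norm_fst_le _ (p - q).snd).trans ((WithLp.norm_snd_le _ (p - q)).trans hpq))

end Torus

section TorusMollification

variable {L : ℝ} {ρ : PlaneLine → ℝ} {U : Set (TorusLine L)}

theorem finrank_planeLine : Module.finrank ℝ PlaneLine = 3 := by
  rw [(WithLp.linearEquiv 2 ℝ (ℝ × WithLp 2 (ℝ × EuclideanSpace ℝ (Fin 1)))).finrank_eq,
    Module.finrank_prod, (WithLp.linearEquiv 2 ℝ (ℝ × EuclideanSpace ℝ (Fin 1))).finrank_eq,
    Module.finrank_prod, Module.finrank_self, finrank_euclideanSpace_fin]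

theorem euclideanHausdorffMeasure_planeLine : (μHE[3] : Measure PlaneLine) = volume := by
  rw [← finrank_planeLine, InnerProductSpace.euclideanHausdorffMeasure_eq_volume]

theorem volume_torusCover_preimage (hL : 0 < L) (hU : MeasurableSet U) :
    volume (torusCover L ⁻¹' U ∩ fundDomain L) = (μHE[3] : Measure (TorusLine L)) U := by
  rw [← euclideanHausdorffMeasure_planeLine, euclideanHausdorffMeasure_torusCover_preimage hL hU]

theorem setLIntegral_fundDomain_lintegral_sub (hL : 0 < L) {d : ℕ} {B : Set (TorusLine L)}
    (hB : MeasurableSet B) [SFinite ((μHE[d] : Measure PlaneLine).restrict (torusCover L ⁻¹' B))]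
    (hρ : Continuous ρ) :
    ∫⁻ x in fundDomain L, ∫⁻ p in torusCover L ⁻¹' B, ‖ρ (x - p)‖ₑ ∂(μHE[d] : Measure PlaneLine) =
      (∫⁻ x, ‖ρ x‖ₑ) * (μHE[d] : Measure (TorusLine L)) B := by
  rw [setLIntegral_lintegral_sub (isAddFundamentalDomain_fundDomain hL _)
      (isAddFundamentalDomain_fundDomain hL _) hρ.measurable.enorm,
    Measure.restrict_apply measurableSet_fundDomain, inter_comm,
    euclideanHausdorffMeasure_torusCover_preimage hL hB]

theorem setLIntegral_fundDomain_enorm_mollify (hL : 0 < L) (hU : MeasurableSet U)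
    (hρc : Continuous ρ) (hρ : Integrable ρ) (hρ0 : ∀ t, 0 ≤ ρ t) :
    ∫⁻ x in fundDomain L, ‖mollify ρ (torusCover L ⁻¹' U) x‖ₑ =
      (∫⁻ x, ‖ρ x‖ₑ) * (μHE[3] : Measure (TorusLine L)) U := by
  simp only [enorm_mollify hρ hρ0 (continuous_torusCover.measurable hU)]
  have : SFinite ((μHE[3] : Measure PlaneLine).restrict (torusCover L ⁻¹' U)) := by
    rw [euclideanHausdorffMeasure_planeLine]
    infer_instance
  rw [← setLIntegral_fundDomain_lintegral_sub hL hU hρc, euclideanHausdorffMeasure_planeLine]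

end TorusMollification

section Coordinates

/-- The point of the universal cover with line coordinate `t` and plane coordinates `x`, `y`. -/
def PlaneLine.mk (t x y : ℝ) : PlaneLine :=
  WithLp.toLp 2 (x, WithLp.toLp 2 (y, WithLp.toLp 2 fun _ => t))

namespace PlaneLine

theorem mk_add_mk (t x y t' x' y' : ℝ) :
    mk t x y + mk t' x' y' = mk (t + t') (x + x') (y + y') := rfl

theorem smul_mk (a t x y : ℝ) : a • mk t x y = mk (a * t) (a * x) (a * y) := rfl

theorem mk_eq (t x y : ℝ) : mk t x y = t • mk 1 0 0 + x • mk 0 1 0 + y • mk 0 0 1 := by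
  simp [smul_mk, mk_add_mk]

theorem norm_mk (t x y : ℝ) : ‖mk t x y‖ = √(t ^ 2 + x ^ 2 + y ^ 2) := by
  refine (Real.sqrt_eq_iff_mul_self_eq (by positivity) (norm_nonneg _)).2 ?_ |>.symm
  rw [← sq, WithLp.prod_norm_sq_eq_of_L2, WithLp.prod_norm_sq_eq_of_L2, EuclideanSpace.norm_sq_eq]
  simp [mk]
  ring

theorem continuous_mk : Continuous fun q : ℝ × ℝ × ℝ => mk q.1 q.2.1 q.2.2 := by
  unfold mk
  fun_prop

theorem hasDerivAt_mk_fst (t x y : ℝ) : HasDerivAt (fun s => mk s x y) (mk 1 0 0) t := by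
  simp_rw [fun s => mk_eq s x y, add_assoc]
  simpa using ((hasDerivAt_id t).smul_const (mk 1 0 0)).add_const (x • mk 0 1 0 + y • mk 0 0 1)

theorem hasDerivAt_mk_snd (t x y : ℝ) : HasDerivAt (fun s => mk t s y) (mk 0 1 0) x := by
  simp_rw [fun s => mk_eq t s y]
  simpa using (((hasDerivAt_id x).smul_const (mk 0 1 0)).const_add (t • mk 1 0 0)).add_const
    (y • mk 0 0 1)

theorem hasDerivAt_mk_thd (t x y : ℝ) : HasDerivAt (fun s => mk t x s) (mk 0 0 1) y := by
  simp_rw [fun s => mk_eq t x s]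
  simpa using ((hasDerivAt_id y).smul_const (mk 0 0 1)).const_add (t • mk 1 0 0 + x • mk 0 1 0)

theorem measurePreserving_mk :
    MeasurePreserving fun q : ℝ × ℝ × ℝ => mk q.1 q.2.1 q.2.2 := by
  have const_fin_one : MeasurePreserving
      fun t : ℝ => (WithLp.toLp 2 fun _ => t : EuclideanSpace ℝ (Fin 1)) :=
    (PiLp.volume_preserving_toLp (Fin 1)).comp (volume_preserving_funUnique (Fin 1) ℝ).symm
  have inner := (WithLp.volume_preserving_toLp ℝ (EuclideanSpace ℝ (Fin 1))).comp
    ((MeasurePreserving.id (volume : Measure ℝ)).prod const_fin_one)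
  have outer := (WithLp.volume_preserving_toLp ℝ (WithLp 2 (ℝ × EuclideanSpace ℝ (Fin 1)))).comp
    ((MeasurePreserving.id (volume : Measure ℝ)).prod inner)
  exact outer.comp (volume_preserving_prodAssoc.comp Measure.measurePreserving_swap)

theorem torusCover_add_mk_snd (L : ℝ) (p : PlaneLine) :
    torusCover L (p + mk 0 L 0) = torusCover L p := by
  have : (WithLp.toLp 2 fun _ => 0 : EuclideanSpace ℝ (Fin 1)) = 0 := rfl
  simp [torusCover, mk, this]

theorem torusCover_add_mk_thd (L : ℝ) (p : PlaneLine) :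
    torusCover L (p + mk 0 0 L) = torusCover L p := by
  have : (WithLp.toLp 2 fun _ => 0 : EuclideanSpace ℝ (Fin 1)) = 0 := rfl
  simp [torusCover, mk, this]

theorem ae_mk {P : PlaneLine → Prop} (h : ∀ᵐ p, P p) : ∀ᵐ t, ∀ᵐ x, ∀ᵐ y, P (mk t x y) := by
  filter_upwards [Measure.ae_ae_of_ae_prod (measurePreserving_mk.quasiMeasurePreserving.ae h)]
    with t ht
  exact Measure.ae_ae_of_ae_prod ht

theorem setLIntegral_fundDomain (L : ℝ) {F : PlaneLine → ℝ≥0∞} (hF : Measurable F) :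
    ∫⁻ p in fundDomain L, F p = ∫⁻ t, ∫⁻ x in Ico 0 L, ∫⁻ y in Ico 0 L, F (mk t x y) := by
  have hFmk : Measurable fun q : ℝ × ℝ × ℝ => F (mk q.1 q.2.1 q.2.2) :=
    hF.comp measurePreserving_mk.measurable
  have hpre : (fun q : ℝ × ℝ × ℝ => mk q.1 q.2.1 q.2.2) ⁻¹' fundDomain L =
      univ ×ˢ (Ico 0 L ×ˢ Ico 0 L) := by
    ext q
    simp [fundDomain, mk]
  rw [← (measurePreserving_mk.restrict_preimage measurableSet_fundDomain).lintegral_comp hF, hpre,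
    Measure.volume_eq_prod, ← Measure.prod_restrict, Measure.restrict_univ,
    lintegral_prod _ hFmk.aemeasurable]
  refine lintegral_congr fun t => ?_
  rw [Measure.volume_eq_prod, ← Measure.prod_restrict, lintegral_prod]
  exact (hFmk.comp measurable_prodMk_left).aemeasurable

-- Test the hypothesis on the gradient of `ℓ`.
theorem ofReal_sqrt_sum_sq_le (ℓ : PlaneLine →L[ℝ] ℝ) {R : ℝ≥0∞}
    (hℓ : ∀ ν, ‖ℓ ν‖ₑ ≤ ‖ν‖ₑ * R) :
    ENNReal.ofReal √(ℓ (mk 1 0 0) ^ 2 + ℓ (mk 0 1 0) ^ 2 + ℓ (mk 0 0 1) ^ 2) ≤ R := by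
  set ν := mk (ℓ (mk 1 0 0)) (ℓ (mk 0 1 0)) (ℓ (mk 0 0 1)) with hν
  rw [← norm_mk, ← hν, ofReal_norm]
  rcases eq_or_ne ‖ν‖ₑ 0 with hν0 | hν0
  · simp [hν0]
  have apply_self : ℓ ν = ‖ν‖ * ‖ν‖ := by
    rw [hν, norm_mk, Real.mul_self_sqrt (by positivity), mk_eq]
    simp only [map_add, map_smul, smul_eq_mul]
    ring
  refine (ENNReal.mul_le_mul_iff_right hν0 enorm_ne_top).1 ?_
  calc ‖ν‖ₑ * ‖ν‖ₑ = ‖ℓ ν‖ₑ := by rw [apply_self, enorm_mul, enorm_norm]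
    _ ≤ ‖ν‖ₑ * R := hℓ ν

end PlaneLine

end Coordinates

section PeriodicApprox

open PlaneLine

/-- A region in `T² × ℝ` of volume `w` whose boundary has area at most `κ`, seen through smooth
approximations `f k` of its indicator function `χ`: these functions of the line coordinate `t` and
of the two `L`-periodic coordinates `x`, `y` have the same integral as `χ`, and the integrals of
the norms of their gradients are at most `κ`. -/
structure PeriodicApprox (L : ℝ) (κ w : ℝ≥0∞) where
  /-- the approximating functions -/
  f : ℕ → ℝ → ℝ → ℝ → ℝ
  /-- the partial derivatives in the line coordinate -/
  ft : ℕ → ℝ → ℝ → ℝ → ℝ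
  /-- the partial derivatives in the first periodic coordinate -/
  fx : ℕ → ℝ → ℝ → ℝ → ℝ
  /-- the partial derivatives in the second periodic coordinate -/
  fy : ℕ → ℝ → ℝ → ℝ → ℝ
  /-- the limit, an indicator function -/
  χ : ℝ → ℝ → ℝ → ℝ
  cont : ∀ k, Continuous fun q : ℝ × ℝ × ℝ => f k q.1 q.2.1 q.2.2
  cont_t : ∀ k, Continuous fun q : ℝ × ℝ × ℝ => ft k q.1 q.2.1 q.2.2
  cont_x : ∀ k, Continuous fun q : ℝ × ℝ × ℝ => fx k q.1 q.2.1 q.2.2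
  cont_y : ∀ k, Continuous fun q : ℝ × ℝ × ℝ => fy k q.1 q.2.1 q.2.2
  deriv_t : ∀ k t x y, HasDerivAt (fun s => f k s x y) (ft k t x y) t
  deriv_x : ∀ k t x y, HasDerivAt (fun s => f k t s y) (fx k t x y) x
  deriv_y : ∀ k t x y, HasDerivAt (fun s => f k t x s) (fy k t x y) y
  mem_Icc : ∀ k t x y, f k t x y ∈ Icc (0 : ℝ) 1
  per_x : ∀ k t x y, f k t (x + L) y = f k t x y
  per_y : ∀ k t x y, f k t x (y + L) = f k t x y
  lintegral_grad_le : ∀ k, ∫⁻ t, ∫⁻ x in Ico 0 L, ∫⁻ y in Ico 0 L,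
    ENNReal.ofReal √(ft k t x y ^ 2 + fx k t x y ^ 2 + fy k t x y ^ 2) ≤ κ
  lintegral_f : ∀ k, ∫⁻ t, ∫⁻ x in Ico 0 L, ∫⁻ y in Ico 0 L, ENNReal.ofReal (f k t x y) = w
  meas_χ : Measurable fun q : ℝ × ℝ × ℝ => χ q.1 q.2.1 q.2.2
  χ_eq : ∀ t x y, χ t x y = 0 ∨ χ t x y = 1
  lintegral_χ : ∫⁻ t, ∫⁻ x in Ico 0 L, ∫⁻ y in Ico 0 L, ENNReal.ofReal (χ t x y) = w
  ae_tendsto : ∀ᵐ t, ∀ᵐ x, ∀ᵐ y, Tendsto (fun k => f k t x y) atTop (𝓝 (χ t x y))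

variable {L : ℝ} {U : Set (TorusLine L)} {ρ : PlaneLine → ℝ}

theorem lintegral_ofReal_mollify_mk (hL : 0 < L) (hU : MeasurableSet U) (hρ : Continuous ρ)
    (hρs : HasCompactSupport ρ) (hρ0 : ∀ t, 0 ≤ ρ t) (hρ1 : ∫⁻ t, ‖ρ t‖ₑ = 1)
    (hm : Measurable (mollify ρ (torusCover L ⁻¹' U))) :
    ∫⁻ t, ∫⁻ x in Ico 0 L, ∫⁻ y in Ico 0 L,
      ENNReal.ofReal (mollify ρ (torusCover L ⁻¹' U) (mk t x y)) =
      (μHE[3] : Measure (TorusLine L)) U := by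
  rw [← setLIntegral_fundDomain L
    (F := fun p => ENNReal.ofReal (mollify ρ (torusCover L ⁻¹' U) p)) hm.ennreal_ofReal]
  simp_rw [← Real.enorm_of_nonneg (mollify_nonneg hρ0 _)]
  rw [setLIntegral_fundDomain_enorm_mollify hL hU hρ (hρ.integrable_of_hasCompactSupport hρs) hρ0,
    hρ1, one_mul]

theorem lintegral_ofReal_sqrt_fderiv_mollify_mk_le (hL : 0 < L) (hU : IsClosed U)
    (hfin : (μHE[2] : Measure (TorusLine L)) (frontier U) ≠ ∞) (hρ : ContDiff ℝ 1 ρ)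
    (hρs : HasCompactSupport ρ) (hρ0 : ∀ t, 0 ≤ ρ t) (hρ1 : ∫⁻ t, ‖ρ t‖ₑ = 1) :
    ∫⁻ t, ∫⁻ x in Ico 0 L, ∫⁻ y in Ico 0 L, ENNReal.ofReal
      √(fderiv ℝ (mollify ρ (torusCover L ⁻¹' U)) (mk t x y) (mk 1 0 0) ^ 2 +
        fderiv ℝ (mollify ρ (torusCover L ⁻¹' U)) (mk t x y) (mk 0 1 0) ^ 2 +
        fderiv ℝ (mollify ρ (torusCover L ⁻¹' U)) (mk t x y) (mk 0 0 1) ^ 2) ≤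
      (μHE[2] : Measure (TorusLine L)) (frontier U) := by
  have : Fact (Module.finrank ℝ PlaneLine = 2 + 1) := ⟨finrank_planeLine⟩
  have hS : MeasurableSet (frontier U) := isClosed_frontier.measurableSet
  have := isLocallyFiniteMeasure_restrict_torusCover_preimage hL hS hfin
  have hmeas : Measurable fun x : PlaneLine => ∫⁻ p in torusCover L ⁻¹' frontier U,
      ‖ρ (x - p)‖ₑ ∂(μHE[2] : Measure PlaneLine) :=
    (hρ.continuous.measurable.comp measurable_sub).enorm.lintegral_prod_right'
  have hgrad (t x y : ℝ) := ofReal_sqrt_sum_sq_le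
    (fderiv ℝ (mollify ρ (torusCover L ⁻¹' U)) (mk t x y))
    (enorm_fderiv_mollify_le (n := 2) hρ hρs hρ0 (continuous_torusCover.measurable hU.measurableSet)
      (continuous_torusCover.measurable hS) (continuous_torusCover.frontier_preimage_subset U) _)
  refine (lintegral_mono fun t => lintegral_mono fun x => lintegral_mono (hgrad t x)).trans_eq ?_
  rw [← setLIntegral_fundDomain L hmeas, setLIntegral_fundDomain_lintegral_sub hL hS hρ.continuous,
    hρ1, one_mul]

theorem lintegral_ofReal_indicator_mk (hL : 0 < L) (hU : MeasurableSet U) :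
    ∫⁻ t, ∫⁻ x in Ico 0 L, ∫⁻ y in Ico 0 L,
      ENNReal.ofReal ((torusCover L ⁻¹' U).indicator 1 (mk t x y)) =
      (μHE[3] : Measure (TorusLine L)) U := by
  have hU' : MeasurableSet (torusCover L ⁻¹' U) := continuous_torusCover.measurable hU
  have ofReal_indicator (p : PlaneLine) : ENNReal.ofReal ((torusCover L ⁻¹' U).indicator 1 p) =
      (torusCover L ⁻¹' U).indicator 1 p := by
    by_cases hp : p ∈ torusCover L ⁻¹' U <;> simp [hp]
  simp only [ofReal_indicator]
  rw [← setLIntegral_fundDomain L (measurable_one.indicator hU'), lintegral_indicator_one hU',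
    Measure.restrict_apply hU', volume_torusCover_preimage hL hU]

theorem nonempty_periodicApprox (hL : 0 < L) (hU : IsClosed U)
    (hfin : (μHE[2] : Measure (TorusLine L)) (frontier U) ≠ ∞) :
    Nonempty (PeriodicApprox L ((μHE[2] : Measure (TorusLine L)) (frontier U))
      ((μHE[3] : Measure (TorusLine L)) U)) := by
  have hUm := hU.measurableSet
  have hU' : MeasurableSet (torusCover L ⁻¹' U) := continuous_torusCover.measurable hUm
  let ρ (k : ℕ) : PlaneLine → ℝ := (shrinkingBump PlaneLine k).normed volume
  have hρ (k) : ContDiff ℝ 1 (ρ k) := (shrinkingBump PlaneLine k).contDiff_normed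
  have hρs (k) : HasCompactSupport (ρ k) := (shrinkingBump PlaneLine k).hasCompactSupport_normed
  have hρ0 (k t) : 0 ≤ ρ k t := (shrinkingBump PlaneLine k).nonneg_normed t
  have hρ1 (k) : ∫⁻ t, ‖ρ k t‖ₑ = 1 := lintegral_enorm_normed_shrinkingBump k
  have hint (k) : Integrable (ρ k) := (hρ k).continuous.integrable_of_hasCompactSupport (hρs k)
  let u (k : ℕ) := mollify (ρ k) (torusCover L ⁻¹' U)
  have hu (k) : ContDiff ℝ 1 (u k) := contDiff_mollify (hρ k) (hρs k) hU'
  have hfderiv (k p) : HasFDerivAt (u k) (fderiv ℝ (u k) p) p :=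
    ((hu k).differentiable one_ne_zero p).hasFDerivAt
  have hcont_fderiv (k) (ν : PlaneLine) :
      Continuous fun q : ℝ × ℝ × ℝ => fderiv ℝ (u k) (mk q.1 q.2.1 q.2.2) ν :=
    (((hu k).continuous_fderiv one_ne_zero).clm_apply continuous_const).comp continuous_mk
  have u_add {a} (k p) (ha : ∀ q, torusCover L (q + a) = torusCover L q) : u k (p + a) = u k p :=
    mollify_add_of_periodic (fun q => (congrArg (· ∈ U) (ha q)).to_iff) p
  have hχ : Measurable ((torusCover L ⁻¹' U).indicator (1 : PlaneLine → ℝ)) :=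
    measurable_one.indicator hU'
  have htendsto := ae_mk (ae_tendsto_mollify hU')
  exact ⟨{
    f k t x y := u k (mk t x y)
    ft k t x y := fderiv ℝ (u k) (mk t x y) (mk 1 0 0)
    fx k t x y := fderiv ℝ (u k) (mk t x y) (mk 0 1 0)
    fy k t x y := fderiv ℝ (u k) (mk t x y) (mk 0 0 1)
    χ t x y := (torusCover L ⁻¹' U).indicator 1 (mk t x y)
    cont k := (hu k).continuous.comp continuous_mk
    cont_t k := hcont_fderiv k _
    cont_x k := hcont_fderiv k _
    cont_y k := hcont_fderiv k _
    deriv_t k t x y := (hfderiv k _).comp_hasDerivAt t (hasDerivAt_mk_fst t x y)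
    deriv_x k t x y := (hfderiv k _).comp_hasDerivAt x (hasDerivAt_mk_snd t x y)
    deriv_y k t x y := (hfderiv k _).comp_hasDerivAt y (hasDerivAt_mk_thd t x y)
    mem_Icc k t x y := ⟨mollify_nonneg (hρ0 k) _,
      (mollify_le_integral (hint k) (hρ0 k) hU' _).trans_eq
        (shrinkingBump PlaneLine k).integral_normed⟩
    per_x k t x y := by
      simpa [mk_add_mk] using u_add k (mk t x y) (torusCover_add_mk_snd L)
    per_y k t x y := by
      simpa [mk_add_mk] using u_add k (mk t x y) (torusCover_add_mk_thd L)
    lintegral_grad_le k :=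
      lintegral_ofReal_sqrt_fderiv_mollify_mk_le hL hU hfin (hρ k) (hρs k) (hρ0 k) (hρ1 k)
    lintegral_f k := lintegral_ofReal_mollify_mk hL hUm (hρ k).continuous (hρs k) (hρ0 k) (hρ1 k)
      (hu k).continuous.measurable
    meas_χ := hχ.comp continuous_mk.measurable
    χ_eq t x y := indicator_eq_zero_or_self _ (1 : PlaneLine → ℝ) _
    lintegral_χ := lintegral_ofReal_indicator_mk hL hUm
    ae_tendsto := htendsto }⟩

end PeriodicApprox

/-! ### Coarea inequalities on the torus -/

section Variation

theorem enorm_sub_le_lintegral {g g' : ℝ → ℝ} (hg : ∀ x, HasDerivAt g (g' x) x)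
    (hg' : Continuous g') {a b : ℝ} (hab : a ≤ b) :
    ‖g b - g a‖ₑ ≤ ∫⁻ x in Ico a b, ‖g' x‖ₑ := by
  rw [← intervalIntegral.integral_eq_sub_of_hasDerivAt (fun x _ => hg x)
    (hg'.intervalIntegrable a b), intervalIntegral.integral_of_le hab, restrict_Ico_eq_restrict_Ioc]
  exact enorm_integral_le_lintegral_enorm _

theorem two_mul_enorm_sub_le_lintegral {L : ℝ} {g g' : ℝ → ℝ}
    (hg : ∀ x, HasDerivAt g (g' x) x) (hg' : Continuous g') (hper : g L = g 0) {p q : ℝ}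
    (hp : p ∈ Ico 0 L) (hq : q ∈ Ico 0 L) :
    2 * ‖g p - g q‖ₑ ≤ ∫⁻ x in Ico 0 L, ‖g' x‖ₑ := by
  wlog hpq : p ≤ q generalizing p q
  · rw [enorm_sub_rev]
    exact this hq hp (le_of_not_ge hpq)
  have hsplit {a b c : ℝ} (hab : a ≤ b) (hbc : b ≤ c) :
      ∫⁻ x in Ico a c, ‖g' x‖ₑ = (∫⁻ x in Ico a b, ‖g' x‖ₑ) + ∫⁻ x in Ico b c, ‖g' x‖ₑ := by
    rw [← lintegral_union measurableSet_Ico Ico_disjoint_Ico_same, Ico_union_Ico_eq_Ico hab hbc]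
  calc 2 * ‖g p - g q‖ₑ = ‖g q - g p‖ₑ + ‖(g p - g 0) + (g L - g q)‖ₑ := by
        rw [two_mul, hper, enorm_sub_rev (g q)]
        ring_nf
    _ ≤ ‖g q - g p‖ₑ + (‖g p - g 0‖ₑ + ‖g L - g q‖ₑ) := by
        gcongr
        exact enorm_add_le _ _
    _ ≤ (∫⁻ x in Ico p q, ‖g' x‖ₑ) +
        ((∫⁻ x in Ico 0 p, ‖g' x‖ₑ) + ∫⁻ x in Ico q L, ‖g' x‖ₑ) := by
        gcongr
        exacts [enorm_sub_le_lintegral hg hg' hpq, enorm_sub_le_lintegral hg hg' hp.1,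
          enorm_sub_le_lintegral hg hg' hq.2.le]
    _ = ∫⁻ x in Ico 0 L, ‖g' x‖ₑ := by
        rw [hsplit hp.1 hp.2.le, hsplit hpq hq.2.le]
        ring

theorem hasDerivAt_primitive_comp {α h : ℝ → ℝ} (hα : Continuous α) {h' x c : ℝ}
    (hh : HasDerivAt h h' x) :
    HasDerivAt (fun x => ∫ s in c..h x, α s) (α (h x) * h') x :=
  (hα.integral_hasStrictDerivAt c (h x)).hasDerivAt.comp x hh

theorem two_mul_enorm_integral_le_lintegral {L : ℝ} {α h h' : ℝ → ℝ} (hα : Continuous α)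
    (hh : ∀ x, HasDerivAt h (h' x) x) (hh' : Continuous h') (hper : h L = h 0) {p q : ℝ}
    (hp : p ∈ Ico 0 L) (hq : q ∈ Ico 0 L) :
    2 * ‖∫ s in h p..h q, α s‖ₑ ≤ ∫⁻ x in Ico 0 L, ‖α (h x)‖ₑ * ‖h' x‖ₑ := by
  have hcont : Continuous h := continuous_iff_continuousAt.2 fun x => (hh x).continuousAt
  rw [← intervalIntegral.integral_interval_sub_left (hα.intervalIntegrable 0 _)
    (hα.intervalIntegrable 0 _)]
  simpa only [enorm_mul] using
    two_mul_enorm_sub_le_lintegral (fun x => hasDerivAt_primitive_comp (c := 0) hα (hh x))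
      ((hα.comp hcont).mul hh') (by rw [hper]) hq hp

theorem hasDerivAt_intervalIntegral_of_continuous {F F' : ℝ → ℝ → ℝ} (a b : ℝ)
    (hF : Continuous fun q : ℝ × ℝ => F q.1 q.2) (hF' : Continuous fun q : ℝ × ℝ => F' q.1 q.2)
    (hd : ∀ t y, HasDerivAt (fun s => F s y) (F' t y) t) (t : ℝ) :
    HasDerivAt (fun t => ∫ y in a..b, F t y) (∫ y in a..b, F' t y) t := by
  obtain ⟨C, hC⟩ := ((isCompact_closedBall t 1).prod (isCompact_uIcc (a := a) (b := b)))
    |>.bddAbove_image (f := fun q : ℝ × ℝ => ‖F' q.1 q.2‖) hF'.norm.continuousOn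
  refine (intervalIntegral.hasDerivAt_integral_of_dominated_loc_of_deriv_le
    (bound := fun _ => C) (Metric.ball_mem_nhds t one_pos) ?_ ?_ ?_ ?_ ?_ ?_).2
  · exact Eventually.of_forall fun s => (by fun_prop : Continuous (F s)).aestronglyMeasurable
  · exact (by fun_prop : Continuous (F t)).intervalIntegrable _ _
  · exact (by fun_prop : Continuous (F' t)).aestronglyMeasurable
  · exact Eventually.of_forall fun y hy s hs =>
      hC ⟨(s, y), ⟨Metric.ball_subset_closedBall hs, uIoc_subset_uIcc hy⟩, rfl⟩
  · exact intervalIntegrable_const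
  · exact Eventually.of_forall fun y _ s _ => hd s y

end Variation

section BoundedIntegrals

variable {L C : ℝ} {g : ℝ → ℝ}

theorem intervalIntegrable_of_mem_Icc (hg : Measurable g) (hI : ∀ y, g y ∈ Icc 0 C) (a b : ℝ) :
    IntervalIntegrable g volume a b :=
  ⟨.of_mem_Icc 0 C hg.aemeasurable (Eventually.of_forall hI),
    .of_mem_Icc 0 C hg.aemeasurable (Eventually.of_forall hI)⟩

theorem ofReal_intervalIntegral_eq_setLIntegral (hL : 0 ≤ L) (hg : Measurable g)
    (hI : ∀ y, g y ∈ Icc 0 C) :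
    ENNReal.ofReal (∫ x in (0 : ℝ)..L, g x) = ∫⁻ x in Ico 0 L, ENNReal.ofReal (g x) := by
  rw [intervalIntegral.integral_of_le hL, restrict_Ico_eq_restrict_Ioc,
    ofReal_integral_eq_lintegral_ofReal (intervalIntegrable_of_mem_Icc hg hI 0 L).1
      (Eventually.of_forall fun x => (hI x).1)]

theorem intervalIntegral_mem_Icc (hL : 0 ≤ L) (hg : Measurable g) (hI : ∀ y, g y ∈ Icc 0 C) :
    ∫ y in (0 : ℝ)..L, g y ∈ Icc 0 (L * C) := by
  refine ⟨intervalIntegral.integral_nonneg hL fun y _ => (hI y).1, ?_⟩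
  calc ∫ y in (0 : ℝ)..L, g y ≤ ∫ _ in (0 : ℝ)..L, C :=
        intervalIntegral.integral_mono hL (intervalIntegrable_of_mem_Icc hg hI 0 L)
          intervalIntegrable_const fun y => (hI y).2
    _ = L * C := by simp

theorem tendsto_intervalIntegral_of_mem_Icc {g : ℕ → ℝ → ℝ} {g₀ : ℝ → ℝ}
    (hg : ∀ k, Measurable (g k)) (hI : ∀ k y, g k y ∈ Icc 0 C)
    (hlim : ∀ᵐ y, Tendsto (fun k => g k y) atTop (𝓝 (g₀ y))) :
    Tendsto (fun k => ∫ y in (0 : ℝ)..L, g k y) atTop (𝓝 (∫ y in (0 : ℝ)..L, g₀ y)) := by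
  refine intervalIntegral.tendsto_integral_filter_of_dominated_convergence (fun _ => C)
    (Eventually.of_forall fun k => (hg k).aestronglyMeasurable)
    (Eventually.of_forall fun k => Eventually.of_forall fun y _ => ?_) intervalIntegrable_const
    (hlim.mono fun y hy _ => hy)
  rw [Real.norm_eq_abs, abs_of_nonneg (hI k y).1]
  exact (hI k y).2

theorem measurable_intervalIntegral {X : Type*} [MeasurableSpace X] {g : X → ℝ → ℝ} (a b : ℝ)
    (hg : Measurable fun q : X × ℝ => g q.1 q.2) : Measurable fun x => ∫ y in a..b, g x y :=
  (hg.stronglyMeasurable.integral_prod_right' (ν := volume.restrict (Ioc a b))).measurable.sub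
    (hg.stronglyMeasurable.integral_prod_right' (ν := volume.restrict (Ioc b a))).measurable

end BoundedIntegrals

section Fatou

theorem add_le_liminf_add {u v : ℕ → ℝ≥0∞} {a b : ℝ≥0∞}
    (ha : a ≤ liminf u atTop) (hb : b ≤ liminf v atTop) :
    a + b ≤ liminf (fun i => u i + v i) atTop := by
  refine (add_le_add ha hb).trans ?_
  simp only [liminf_eq_iSup_iInf_of_nat]
  refine ENNReal.iSup_add_iSup_le fun i j => le_iSup_of_le (max i j) (le_iInf₂ fun k hk => ?_)
  exact add_le_add (iInf₂_le k ((le_max_left _ _).trans hk))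
    (iInf₂_le k ((le_max_right _ _).trans hk))

theorem lintegral_mul_le_liminf {X : Type*} [MeasurableSpace X] {μ : Measure X} {β : ℝ → ℝ}
    (hβ : Continuous β) {h : ℕ → X → ℝ} {h₀ : X → ℝ} (hh : ∀ k, Measurable (h k))
    {P : ℕ → X → ℝ≥0∞} (hP : ∀ k, Measurable (P k)) {p : X → ℝ≥0∞}
    (hlim : ∀ᵐ x ∂μ, Tendsto (fun k => h k x) atTop (𝓝 (h₀ x)))
    (hp : ∀ᵐ x ∂μ, p x ≤ liminf (fun k => P k x) atTop) :
    ∫⁻ x, ENNReal.ofReal (β (h₀ x)) * p x ∂μ ≤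
      liminf (fun k => ∫⁻ x, ENNReal.ofReal (β (h k x)) * P k x ∂μ) atTop := by
  refine le_trans (lintegral_mono_ae ?_) (lintegral_liminf_le fun k =>
    ((hβ.measurable.comp (hh k)).ennreal_ofReal.mul (hP k)))
  filter_upwards [hlim, hp] with x hx hpx
  have hβx : Tendsto (fun k => ENNReal.ofReal (β (h k x))) atTop (𝓝 (ENNReal.ofReal (β (h₀ x)))) :=
    ENNReal.tendsto_ofReal ((hβ.tendsto _).comp hx)
  calc ENNReal.ofReal (β (h₀ x)) * p x
      ≤ liminf (fun k => ENNReal.ofReal (β (h k x))) atTop * liminf (fun k => P k x) atTop := by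
        rw [hβx.liminf_eq]
        gcongr
    _ ≤ _ := ENNReal.le_liminf_mul

end Fatou

section CauchySchwarz

theorem mul_add_mul_le_sqrt {α β a b : ℝ} (h : α ^ 2 + β ^ 2 ≤ 1) :
    α * a + β * b ≤ √(a ^ 2 + b ^ 2) := by
  refine Real.le_sqrt_of_sq_le ?_
  have : (α ^ 2 + β ^ 2) * (a ^ 2 + b ^ 2) ≤ 1 * (a ^ 2 + b ^ 2) := by gcongr
  nlinarith [sq_nonneg (α * b - β * a)]

variable {X : Type*} [MeasurableSpace X] {μ : Measure X}

theorem mul_enorm_integral_add_mul_lintegral_le (c d : ℝ≥0∞) {a : X → ℝ} {P : X → ℝ≥0∞}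
    (ha : Measurable a) (hP : Measurable P) :
    c * ‖∫ x, a x ∂μ‖ₑ + d * ∫⁻ x, P x ∂μ ≤ ∫⁻ x, (c * ‖a x‖ₑ + d * P x) ∂μ := by
  rw [lintegral_add_left (ha.enorm.const_mul _), lintegral_const_mul _ ha.enorm,
    lintegral_const_mul _ hP]
  gcongr
  exact enorm_integral_le_lintegral_enorm _

theorem mul_enorm_integral_add_le_lintegral_sqrt {α β : ℝ} (hα : 0 ≤ α) (hβ : 0 ≤ β)
    (h : α ^ 2 + β ^ 2 ≤ 1) {a b : X → ℝ} (ha : Measurable a) (hb : Measurable b) :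
    ENNReal.ofReal α * ‖∫ x, a x ∂μ‖ₑ + ENNReal.ofReal β * ∫⁻ x, ‖b x‖ₑ ∂μ ≤
      ∫⁻ x, ENNReal.ofReal √(a x ^ 2 + b x ^ 2) ∂μ := by
  refine (mul_enorm_integral_add_mul_lintegral_le _ _ ha hb.enorm).trans
    (lintegral_mono fun x => ?_)
  rw [Real.enorm_eq_ofReal_abs, Real.enorm_eq_ofReal_abs, ← ENNReal.ofReal_mul hα,
    ← ENNReal.ofReal_mul hβ, ← ENNReal.ofReal_add (by positivity) (by positivity)]
  simpa only [sq_abs] using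
    ENNReal.ofReal_le_ofReal (mul_add_mul_le_sqrt (a := |a x|) (b := |b x|) h)

end CauchySchwarz

section CoareaBound

theorem essSup_mem_of_isClosed {X : Type*} [MeasurableSpace X] {μ : Measure X} [NeZero μ]
    {f : X → ℝ} (hbdd : IsBoundedUnder (· ≤ ·) (ae μ) f) (hbdd' : IsBoundedUnder (· ≥ ·) (ae μ) f)
    {S : Set ℝ} (hS : IsClosed S) (h : ∀ᵐ x ∂μ, f x ∈ S) : essSup f μ ∈ S := by
  have : (ae μ).NeBot := ae_neBot.2 (NeZero.ne μ)
  rw [← hS.closure_eq, Metric.mem_closure_iff]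
  intro ε hε
  have hfreq : ∃ᶠ x in ae μ, essSup f μ - ε < f x :=
    frequently_lt_of_lt_limsup hbdd'.isCoboundedUnder_le (sub_lt_self _ hε)
  obtain ⟨x, hlt, hxS, hle⟩ := (hfreq.and_eventually (h.and (ae_le_essSup hbdd))).exists
  refine ⟨f x, hxS, ?_⟩
  rw [Real.dist_eq, abs_of_nonneg (by linarith)]
  linarith

theorem integral_zero_one_sqrt_one_sub_sq : ∫ x in (0 : ℝ)..1, √(1 - x ^ 2) = π / 4 := by
  have hc : Continuous fun x : ℝ => √(1 - x ^ 2) := by fun_prop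
  have hsplit := intervalIntegral.integral_add_adjacent_intervals (μ := volume) (a := -1) (b := 0)
    (c := 1) (hc.intervalIntegrable _ _) (hc.intervalIntegrable _ _)
  have hsymm := intervalIntegral.integral_comp_neg (a := 0) (b := 1) fun x : ℝ => √(1 - x ^ 2)
  simp only [neg_sq, neg_zero] at hsymm
  linarith [integral_sqrt_one_sub_sq]

theorem integral_sqrt_one_sub_div_sq {m : ℝ} (hm : m ≠ 0) :
    ∫ s in (0 : ℝ)..m, √(1 - (s / m) ^ 2) = m * (π / 4) := by
  rw [intervalIntegral.integral_comp_div (fun x => √(1 - x ^ 2)) hm, zero_div,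
    div_self hm, integral_zero_one_sqrt_one_sub_sq, smul_eq_mul]

theorem sq_sqrt_one_sub_sq_add_sq_min_le (u : ℝ) : √(1 - u ^ 2) ^ 2 + min |u| 1 ^ 2 ≤ 1 := by
  rcases le_total |u| 1 with h | h
  · rw [Real.sq_sqrt (sub_nonneg.2 ((sq_le_one_iff_abs_le_one u).2 h)), min_eq_left h, sq_abs]
    linarith
  · rw [Real.sqrt_eq_zero_of_nonpos (sub_nonpos.2 ((one_le_sq_iff_one_le_abs u).2 h)),
      min_eq_right h]
    norm_num

/-- The family of inequalities satisfied by the section lengths `ℓ x`, `x ∈ [0, L)`, of a subset of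
the flat torus of side `L` whose perimeter is at most `D`. The weights `α` and `β` bound the two
components of a unit normal: the first term is the total variation of a primitive of `α` along the
circle of sections, and a section which is neither empty nor full has at least two endpoints. -/
def CoareaBound (L : ℝ) (ℓ : ℝ → ℝ) (D : ℝ≥0∞) : Prop :=
  ∀ α β : ℝ → ℝ, Continuous α → Continuous β → (∀ s, 0 ≤ α s) → (∀ s, 0 ≤ β s) →
    (∀ s, α s ^ 2 + β s ^ 2 ≤ 1) →
    ∀ᵐ x₀ ∂(volume.restrict (Ico 0 L)), ∀ᵐ x₁ ∂(volume.restrict (Ico 0 L)),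
      2 * ‖∫ s in ℓ x₀..ℓ x₁, α s‖ₑ +
        (∫⁻ x in Ico 0 L, ENNReal.ofReal (β (ℓ x)) * (Ioo 0 L).indicator 2 (ℓ x)) ≤ D

theorem neZero_volume_restrict_Ico {a b : ℝ} (hab : a < b) : NeZero (volume.restrict (Ico a b)) :=
  ⟨by simpa [Measure.restrict_eq_zero] using hab⟩

variable {L : ℝ} {ℓ : ℝ → ℝ} {D : ℝ≥0∞}

theorem lintegral_min_div_mul_indicator (hL : 0 ≤ L) (hℓ : Measurable ℓ) (hI : ∀ x, ℓ x ∈ Icc 0 L)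
    {m : ℝ} (hm : 0 < m) (hle : ∀ᵐ x ∂(volume.restrict (Ico 0 L)), ℓ x ≤ m)
    (hne : ∀ᵐ x ∂(volume.restrict (Ico 0 L)), ℓ x ≠ L) :
    ∫⁻ x in Ico 0 L, ENNReal.ofReal (min |ℓ x / m| 1) * (Ioo 0 L).indicator 2 (ℓ x) =
      ENNReal.ofReal (2 / m * ∫ x in (0 : ℝ)..L, ℓ x) := by
  have hpt : ∀ᵐ x ∂(volume.restrict (Ico 0 L)),
      ENNReal.ofReal (min |ℓ x / m| 1) * (Ioo 0 L).indicator 2 (ℓ x) =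
        ENNReal.ofReal (2 / m) * ENNReal.ofReal (ℓ x) := by
    filter_upwards [hle, hne] with x hxm hxL
    rcases (hI x).1.eq_or_lt with h0 | hpos
    · simp [← h0]
    · have hmem : ℓ x ∈ Ioo 0 L := ⟨hpos, lt_of_le_of_ne (hI x).2 hxL⟩
      rw [indicator_of_mem hmem, abs_of_pos (by positivity), min_eq_left ((div_le_one hm).2 hxm),
        Pi.ofNat_apply, ← ENNReal.ofReal_ofNat 2, ← ENNReal.ofReal_mul (by positivity),
        ← ENNReal.ofReal_mul (by positivity)]
      ring_nf
  rw [lintegral_congr_ae hpt, lintegral_const_mul _ hℓ.ennreal_ofReal,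
    ← ofReal_intervalIntegral_eq_setLIntegral hL hℓ hI, ← ENNReal.ofReal_mul (by positivity)]

namespace CoareaBound

theorem sub_left (H : CoareaBound L ℓ D) : CoareaBound L (fun x => L - ℓ x) D := by
  intro α β hα hβ hα0 hβ0 hαβ
  have hrefl := H (fun s => α (L - s)) (fun s => β (L - s)) (by fun_prop) (by fun_prop)
    (fun s => hα0 _) (fun s => hβ0 _) (fun s => hαβ _)
  filter_upwards [hrefl] with x₀ h₀
  filter_upwards [h₀] with x₁ h₁
  rw [intervalIntegral.integral_comp_sub_left α, intervalIntegral.integral_symm, enorm_neg] at h₁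
  convert h₁ using 5 with x
  simp only [indicator, mem_Ioo, sub_pos, sub_lt_self_iff, and_comm, Pi.ofNat_apply]

theorem primitive_essSup_le (hL : 0 < L) (hI : ∀ x, ℓ x ∈ Icc 0 L) (H : CoareaBound L ℓ D)
    (h0 : ∃ᵐ x ∂(volume.restrict (Ico 0 L)), ℓ x = 0) {α β : ℝ → ℝ} (hα : Continuous α)
    (hβ : Continuous β) (hα0 : ∀ s, 0 ≤ α s) (hβ0 : ∀ s, 0 ≤ β s)
    (hαβ : ∀ s, α s ^ 2 + β s ^ 2 ≤ 1) :
    2 * ‖∫ s in (0 : ℝ)..essSup ℓ (volume.restrict (Ico 0 L)), α s‖ₑ +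
      (∫⁻ x in Ico 0 L, ENNReal.ofReal (β (ℓ x)) * (Ioo 0 L).indicator 2 (ℓ x)) ≤ D := by
  have := neZero_volume_restrict_Ico hL
  obtain ⟨x₀, hx₀, hx₁⟩ := (h0.and_eventually (H α β hα hβ hα0 hβ0 hαβ)).exists
  rw [hx₀] at hx₁
  have hcont : Continuous fun u => 2 * ‖∫ s in (0 : ℝ)..u, α s‖ₑ :=
    (ENNReal.continuous_const_mul (by simp)).comp
      (intervalIntegral.continuous_primitive (fun a b => hα.intervalIntegrable a b) 0).enorm
  exact essSup_mem_of_isClosed (isBoundedUnder_of ⟨L, fun x => (hI x).2⟩)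
    (isBoundedUnder_of ⟨0, fun x => (hI x).1⟩)
    (isClosed_le (hcont.add continuous_const) continuous_const) hx₁

-- The weights are the components of the unit normal of a half-disc of height `m = essSup ℓ`.
theorem two_mul_sqrt_le (hL : 0 < L) (hℓ : Measurable ℓ) (hI : ∀ x, ℓ x ∈ Icc 0 L)
    (H : CoareaBound L ℓ D) (h0 : ∃ᵐ x ∂(volume.restrict (Ico 0 L)), ℓ x = 0)
    (h1 : ∀ᵐ x ∂(volume.restrict (Ico 0 L)), ℓ x ≠ L) :
    ENNReal.ofReal (2 * √(π * ∫ x in (0 : ℝ)..L, ℓ x)) ≤ D := by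
  set a := ∫ x in (0 : ℝ)..L, ℓ x with ha
  set m := essSup ℓ (volume.restrict (Ico 0 L))
  have hle : ∀ᵐ x ∂(volume.restrict (Ico 0 L)), ℓ x ≤ m :=
    ae_le_essSup (isBoundedUnder_of ⟨L, fun x => (hI x).2⟩)
  rcases le_or_gt m 0 with hm | hm
  · have hℓ0 : ℓ =ᵐ[volume.restrict (Ico 0 L)] 0 :=
      hle.mono fun x hx => le_antisymm (hx.trans hm) (hI x).1
    have ha0 : a = 0 := by
      rw [ha, intervalIntegral.integral_of_le hL.le, ← restrict_Ico_eq_restrict_Ioc,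
        integral_congr_ae hℓ0]
      simp
    simp [ha0]
  have ha0 : 0 ≤ a := (intervalIntegral_mem_Icc hL.le hℓ hI).1
  calc ENNReal.ofReal (2 * √(π * a)) ≤ ENNReal.ofReal (2 * (m * (π / 4)) + 2 / m * a) := by
        refine ENNReal.ofReal_le_ofReal ?_
        have hprod : π * a = (m * π / 2) * (2 / m * a) := by field_simp
        have hamgm : √(π * a) ≤ (m * π / 2 + 2 / m * a) / 2 := by
          rw [hprod]
          refine Real.sqrt_le_iff.2 ⟨by positivity, ?_⟩
          linarith [four_mul_le_sq_add (m * π / 2) (2 / m * a)]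
        linarith
    _ = 2 * ‖∫ s in (0 : ℝ)..m, √(1 - (s / m) ^ 2)‖ₑ + ∫⁻ x in Ico 0 L,
          ENNReal.ofReal (min |ℓ x / m| 1) * (Ioo 0 L).indicator 2 (ℓ x) := by
        rw [lintegral_min_div_mul_indicator hL.le hℓ hI hm hle h1,
          integral_sqrt_one_sub_div_sq hm.ne', Real.enorm_of_nonneg (by positivity),
          ← ENNReal.ofReal_ofNat 2, ← ENNReal.ofReal_mul (by positivity),
          ← ENNReal.ofReal_add (by positivity) (by positivity)]
    _ ≤ D := H.primitive_essSup_le (α := fun s => √(1 - (s / m) ^ 2))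
        (β := fun s => min |s / m| 1) hL hI h0 (by fun_prop) (by fun_prop)
        (fun s => Real.sqrt_nonneg _) (fun s => le_min (abs_nonneg _) zero_le_one)
        fun s => sq_sqrt_one_sub_sq_add_sq_min_le _

theorem two_mul_le_of_frequently (hL : 0 ≤ L) (H : CoareaBound L ℓ D)
    (h0 : ∃ᵐ x ∂(volume.restrict (Ico 0 L)), ℓ x = 0)
    (h1 : ∃ᵐ x ∂(volume.restrict (Ico 0 L)), ℓ x = L) : ENNReal.ofReal (2 * L) ≤ D := by
  have hH := H (fun _ => 1) (fun _ => 0) continuous_const continuous_const (fun _ => zero_le_one)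
    (fun _ => le_rfl) (fun _ => by norm_num)
  obtain ⟨x₀, hx₀, hx₀'⟩ := (h0.and_eventually hH).exists
  obtain ⟨x₁, hx₁, hx₁'⟩ := (h1.and_eventually hx₀').exists
  simpa [hx₀, hx₁, Real.enorm_of_nonneg hL, ENNReal.ofReal_mul] using hx₁'

theorem two_mul_le_of_ae_mem_Ioo (hL : 0 < L) (H : CoareaBound L ℓ D)
    (h : ∀ᵐ x ∂(volume.restrict (Ico 0 L)), ℓ x ∈ Ioo 0 L) : ENNReal.ofReal (2 * L) ≤ D := by
  have := neZero_volume_restrict_Ico hL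
  have : (ae (volume.restrict (Ico 0 L))).NeBot := ae_neBot.2 (NeZero.ne _)
  have hH := H (fun _ => 0) (fun _ => 1) continuous_const continuous_const (fun _ => le_rfl)
    (fun _ => zero_le_one) (fun _ => by norm_num)
  obtain ⟨x₀, hx₀⟩ := hH.exists
  obtain ⟨x₁, hx₁⟩ := hx₀.exists
  have hind : ∀ᵐ x ∂(volume.restrict (Ico 0 L)),
      ENNReal.ofReal 1 * (Ioo 0 L).indicator 2 (ℓ x) = 2 :=
    h.mono fun x hx => by simp [indicator_of_mem hx]
  rw [lintegral_congr_ae hind] at hx₁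
  simpa [ENNReal.ofReal_mul] using hx₁

-- `√(a * (4 * π - a))` is the isoperimetric profile of the unit sphere; on the torus of side `L`
-- the candidates are discs, complements of discs and strips.
theorem sqrt_le (hL : 0 < L) (hLπ : L ^ 2 ≤ 4 * π) (hℓ : Measurable ℓ) (hI : ∀ x, ℓ x ∈ Icc 0 L)
    (H : CoareaBound L ℓ D) :
    ENNReal.ofReal √((∫ x in (0 : ℝ)..L, ℓ x) * (L ^ 2 - ∫ x in (0 : ℝ)..L, ℓ x)) ≤ D := by
  have hcompl : ∫ x in (0 : ℝ)..L, (L - ℓ x) = L ^ 2 - ∫ x in (0 : ℝ)..L, ℓ x := by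
    rw [intervalIntegral.integral_sub intervalIntegrable_const
      (intervalIntegrable_of_mem_Icc hℓ hI 0 L), intervalIntegral.integral_const]
    simp [sq]
  have hI' : ∀ x, L - ℓ x ∈ Icc 0 L := fun x => ⟨by linarith [(hI x).2], by linarith [(hI x).1]⟩
  have ha0 := (intervalIntegral_mem_Icc hL.le hℓ hI).1
  have ha1 := (intervalIntegral_mem_Icc hL.le (by fun_prop) hI').1
  rw [hcompl] at ha1
  set a := ∫ x in (0 : ℝ)..L, ℓ x
  have hdisc {b : ℝ} (hb : 0 ≤ b) (hab : a * (L ^ 2 - a) ≤ L ^ 2 * b) :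
      √(a * (L ^ 2 - a)) ≤ 2 * √(π * b) := by
    refine Real.sqrt_le_iff.2 ⟨by positivity, ?_⟩
    rw [mul_pow, Real.sq_sqrt (by positivity)]
    nlinarith
  have hstrip : √(a * (L ^ 2 - a)) ≤ 2 * L := by
    refine Real.sqrt_le_iff.2 ⟨by positivity, ?_⟩
    nlinarith [sq_nonneg (2 * a - L ^ 2), Real.pi_lt_four, sq_nonneg L]
  by_cases h0 : ∃ᵐ x ∂(volume.restrict (Ico 0 L)), ℓ x = 0 <;>
    by_cases h1 : ∃ᵐ x ∂(volume.restrict (Ico 0 L)), ℓ x = L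
  · exact (ENNReal.ofReal_le_ofReal hstrip).trans (H.two_mul_le_of_frequently hL.le h0 h1)
  · exact (ENNReal.ofReal_le_ofReal (hdisc ha0 (by nlinarith))).trans
      (H.two_mul_sqrt_le hL hℓ hI h0 (not_frequently.1 h1))
  · refine (ENNReal.ofReal_le_ofReal (hdisc ha1 (by nlinarith))).trans ?_
    rw [← hcompl]
    exact H.sub_left.two_mul_sqrt_le hL (by fun_prop) hI' (h1.mono fun x hx => by linarith)
      ((not_frequently.1 h0).mono fun x hx h => hx (by linarith))
  · refine (ENNReal.ofReal_le_ofReal hstrip).trans (H.two_mul_le_of_ae_mem_Ioo hL ?_)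
    filter_upwards [not_frequently.1 h0, not_frequently.1 h1] with x hx0 hx1
    exact ⟨lt_of_le_of_ne (hI x).1 (Ne.symm hx0), lt_of_le_of_ne (hI x).2 hx1⟩

end CoareaBound

end CoareaBound

section PlanarSlices

variable {L : ℝ}

theorem exists_mem_Ico_ne_of_intervalIntegral_ne {χ : ℝ → ℝ} {c : ℝ} {P : ℝ → Prop} (hL : 0 ≤ L)
    (hP : ∀ᵐ y, P y) (hχ : ∫ y in (0 : ℝ)..L, χ y ≠ L * c) : ∃ y ∈ Ico 0 L, P y ∧ χ y ≠ c := by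
  by_contra! hcon
  refine hχ ?_
  rw [intervalIntegral.integral_of_le hL, ← restrict_Ico_eq_restrict_Ioc,
    setIntegral_congr_ae measurableSet_Ico (hP.mono fun y hy hyL => hcon y hyL hy)]
  simp [hL]

theorem indicator_le_liminf_variation {g g' : ℕ → ℝ → ℝ} {χ : ℝ → ℝ}
    (hd : ∀ k y, HasDerivAt (g k) (g' k y) y) (hc : ∀ k, Continuous (g' k))
    (hper : ∀ k, g k L = g k 0) (hχ : ∀ y, χ y = 0 ∨ χ y = 1)
    (hlim : ∀ᵐ y, Tendsto (fun k => g k y) atTop (𝓝 (χ y))) :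
    (Ioo 0 L).indicator 2 (∫ y in (0 : ℝ)..L, χ y) ≤
      liminf (fun k => ∫⁻ y in Ico 0 L, ‖g' k y‖ₑ) atTop := by
  refine indicator_apply_le' (fun hmem => ?_) fun _ => zero_le
  have hL : 0 ≤ L := (hmem.1.trans hmem.2).le
  obtain ⟨p, hpL, hp, hp0⟩ :=
    exists_mem_Ico_ne_of_intervalIntegral_ne (c := 0) hL hlim (by simpa using hmem.1.ne')
  obtain ⟨q, hqL, hq, hq1⟩ :=
    exists_mem_Ico_ne_of_intervalIntegral_ne (c := 1) hL hlim (by simpa using hmem.2.ne)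
  rw [(hχ p).resolve_left hp0] at hp
  rw [(hχ q).resolve_right hq1] at hq
  have hdiff : Tendsto (fun k => 2 * ‖g k p - g k q‖ₑ) atTop (𝓝 2) := by
    simpa using ENNReal.Tendsto.const_mul (a := 2) (hp.sub hq).enorm (Or.inr (by simp))
  rw [Pi.ofNat_apply, ← hdiff.liminf_eq]
  exact liminf_le_liminf (Eventually.of_forall fun k =>
    two_mul_enorm_sub_le_lintegral (hd k) (hc k) (hper k) hpL hqL)

theorem two_mul_enorm_integral_le_liminf {α : ℝ → ℝ} (hα : Continuous α) {h h' : ℕ → ℝ → ℝ}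
    (hh : ∀ k x, HasDerivAt (h k) (h' k x) x) (hh' : ∀ k, Continuous (h' k))
    (hper : ∀ k, h k L = h k 0) {p q ℓp ℓq : ℝ} (hp : p ∈ Ico 0 L) (hq : q ∈ Ico 0 L)
    (hlimp : Tendsto (fun k => h k p) atTop (𝓝 ℓp))
    (hlimq : Tendsto (fun k => h k q) atTop (𝓝 ℓq)) :
    2 * ‖∫ s in ℓp..ℓq, α s‖ₑ ≤
      liminf (fun k => ∫⁻ x in Ico 0 L, ‖α (h k x)‖ₑ * ‖h' k x‖ₑ) atTop := by
  have hcp : Continuous fun u => ∫ s in (0 : ℝ)..u, α s :=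
    intervalIntegral.continuous_primitive (fun a b => hα.intervalIntegrable a b) 0
  have hlim : Tendsto (fun k => 2 * ‖∫ s in h k p..h k q, α s‖ₑ) atTop
      (𝓝 (2 * ‖∫ s in ℓp..ℓq, α s‖ₑ)) := by
    have hsub := ((hcp.tendsto ℓq).comp hlimq).sub ((hcp.tendsto ℓp).comp hlimp)
    simp only [Function.comp_def, intervalIntegral.integral_interval_sub_left
      (hα.intervalIntegrable _ _) (hα.intervalIntegrable _ _)] at hsub
    exact ENNReal.Tendsto.const_mul hsub.enorm (Or.inr (by simp))
  rw [← hlim.liminf_eq]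
  exact liminf_le_liminf (Eventually.of_forall fun k =>
    two_mul_enorm_integral_le_lintegral hα (hh k) (hh' k) (hper k) hp hq)

theorem coareaBound_of_tendsto {f fx fy : ℕ → ℝ → ℝ → ℝ} {χ : ℝ → ℝ → ℝ} (hL : 0 ≤ L)
    (cont : ∀ k, Continuous fun q : ℝ × ℝ => f k q.1 q.2)
    (cont_x : ∀ k, Continuous fun q : ℝ × ℝ => fx k q.1 q.2)
    (cont_y : ∀ k, Continuous fun q : ℝ × ℝ => fy k q.1 q.2)
    (deriv_x : ∀ k x y, HasDerivAt (fun s => f k s y) (fx k x y) x)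
    (deriv_y : ∀ k x y, HasDerivAt (fun s => f k x s) (fy k x y) y)
    (mem_Icc : ∀ k x y, f k x y ∈ Icc (0 : ℝ) 1)
    (per_x : ∀ k x y, f k (x + L) y = f k x y) (per_y : ∀ k x y, f k x (y + L) = f k x y)
    (χ_eq : ∀ x y, χ x y = 0 ∨ χ x y = 1)
    (hlim : ∀ᵐ x, ∀ᵐ y, Tendsto (fun k => f k x y) atTop (𝓝 (χ x y))) :
    CoareaBound L (fun x => ∫ y in (0 : ℝ)..L, χ x y)
      (liminf (fun k => ∫⁻ x in Ico 0 L, ∫⁻ y in Ico 0 L,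
        ENNReal.ofReal √(fx k x y ^ 2 + fy k x y ^ 2)) atTop) := by
  intro α β hα hβ hα0 hβ0 hαβ
  let h (k : ℕ) (x : ℝ) : ℝ := ∫ y in (0 : ℝ)..L, f k x y
  let h' (k : ℕ) (x : ℝ) : ℝ := ∫ y in (0 : ℝ)..L, fx k x y
  have hd (k : ℕ) (x : ℝ) : HasDerivAt (h k) (h' k x) x :=
    hasDerivAt_intervalIntegral_of_continuous 0 L (cont k) (cont_x k) (deriv_x k) x
  have hcont (k : ℕ) : Continuous (h k) :=
    intervalIntegral.continuous_parametric_intervalIntegral_of_continuous' (cont k) 0 L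
  have hcont' (k : ℕ) : Continuous (h' k) :=
    intervalIntegral.continuous_parametric_intervalIntegral_of_continuous' (cont_x k) 0 L
  have hper (k : ℕ) : h k L = h k 0 :=
    intervalIntegral.integral_congr fun y _ => by simpa using per_x k 0 y
  have hconv : ∀ᵐ x, Tendsto (fun k => h k x) atTop (𝓝 (∫ y in (0 : ℝ)..L, χ x y)) :=
    hlim.mono fun x hx => tendsto_intervalIntegral_of_mem_Icc
      (fun k => (by have := cont k; fun_prop : Continuous (f k x)).measurable)
      (fun k => mem_Icc k x) hx
  have hvar := lintegral_mul_le_liminf (μ := volume.restrict (Ico 0 L)) hβ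
    (fun k => (hcont k).measurable) (P := fun k x => ∫⁻ y in Ico 0 L, ‖fy k x y‖ₑ)
    (fun k => (cont_y k).measurable.enorm.lintegral_prod_right') (ae_restrict_of_ae hconv)
    (ae_restrict_of_ae (hlim.mono fun x hx => indicator_le_liminf_variation
      (fun k => deriv_y k x) (fun k => by have := cont_y k; fun_prop)
      (fun k => by simpa using per_y k x 0) (χ_eq x) hx))
  have hgood := (ae_restrict_of_ae (s := Ico 0 L) hconv).and (ae_restrict_mem measurableSet_Ico)
  filter_upwards [hgood] with x₀ h₀
  filter_upwards [hgood] with x₁ h₁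
  refine (add_le_liminf_add (two_mul_enorm_integral_le_liminf hα hd hcont' hper h₀.2 h₁.2 h₀.1
    h₁.1) hvar).trans (liminf_le_liminf (Eventually.of_forall fun k => ?_))
  have hmeas : Measurable fun x => ‖α (h k x)‖ₑ * ‖h' k x‖ₑ :=
    (hα.comp (hcont k)).measurable.enorm.mul (hcont' k).measurable.enorm
  rw [← lintegral_add_left hmeas]
  refine lintegral_mono fun x => ?_
  rw [Real.enorm_of_nonneg (hα0 _)]
  simp only [h', intervalIntegral.integral_of_le hL, ← restrict_Ico_eq_restrict_Ioc]
  exact mul_enorm_integral_add_le_lintegral_sqrt (hα0 _) (hβ0 _) (hαβ _)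
    (by have := cont_x k; fun_prop : Continuous (fx k x)).measurable
    (by have := cont_y k; fun_prop : Continuous (fy k x)).measurable

end PlanarSlices

section SpatialSlices

theorem exists_mem_lt_of_lintegral_ne_top {X : Type*} [MeasurableSpace X] {μ : Measure X}
    {h : X → ℝ} (hh : ∫⁻ t, ENNReal.ofReal (h t) ∂μ ≠ ∞) {s : Set X} (hs : μ s = ∞)
    (hsm : MeasurableSet s) {ε : ℝ} (hε : 0 < ε) : ∃ t ∈ s, h t < ε := by
  by_contra! hcon
  refine hh (top_le_iff.1 ?_)
  calc ∞ = ENNReal.ofReal ε * μ s := by rw [hs, ENNReal.mul_top (by simpa using hε)]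
    _ = ∫⁻ _ in s, ENNReal.ofReal ε ∂μ := by simp
    _ ≤ ∫⁻ t in s, ENNReal.ofReal (h t) ∂μ :=
        setLIntegral_mono' hsm fun t ht => ENNReal.ofReal_le_ofReal (hcon t ht)
    _ ≤ ∫⁻ t, ENNReal.ofReal (h t) ∂μ := setLIntegral_le_lintegral _ _

theorem two_mul_ofReal_le_lintegral_enorm {g g' : ℝ → ℝ} (hg : ∀ x, HasDerivAt g (g' x) x)
    (hg' : Continuous g') {t : ℝ} (hleft : ∀ ε > 0, ∃ s ∈ Iio t, g s < ε)
    (hright : ∀ ε > 0, ∃ s ∈ Ioi t, g s < ε) :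
    2 * ENNReal.ofReal (g t) ≤ ∫⁻ x, ‖g' x‖ₑ := by
  rw [two_mul]
  refine ENNReal.le_of_forall_pos_le_add fun ε hε _ => ?_
  obtain ⟨s, hst, hs⟩ := hleft (ε / 2) (by positivity)
  obtain ⟨r, htr, hr⟩ := hright (ε / 2) (by positivity)
  have hclose {b : ℝ} (hb : g b < ε / 2) :
      ENNReal.ofReal (g t) ≤ ‖g t - g b‖ₑ + ENNReal.ofReal (ε / 2) := by
    rw [Real.enorm_eq_ofReal_abs, ← ENNReal.ofReal_add (abs_nonneg _) (by positivity)]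
    exact ENNReal.ofReal_le_ofReal (by linarith [le_abs_self (g t - g b)])
  calc ENNReal.ofReal (g t) + ENNReal.ofReal (g t)
      ≤ (‖g t - g s‖ₑ + ENNReal.ofReal (ε / 2)) + (‖g t - g r‖ₑ + ENNReal.ofReal (ε / 2)) :=
        add_le_add (hclose hs) (hclose hr)
    _ = (‖g t - g s‖ₑ + ‖g r - g t‖ₑ) + ε := by
        rw [enorm_sub_rev (g r), add_add_add_comm,
          ← ENNReal.ofReal_add (by positivity) (by positivity), add_halves,
          ENNReal.ofReal_coe_nnreal]
    _ ≤ ((∫⁻ x in Ico s t, ‖g' x‖ₑ) + ∫⁻ x in Ico t r, ‖g' x‖ₑ) + ε := by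
        gcongr
        exacts [enorm_sub_le_lintegral hg hg' (le_of_lt hst),
          enorm_sub_le_lintegral hg hg' (le_of_lt htr)]
    _ ≤ (∫⁻ x, ‖g' x‖ₑ) + ε := by
        rw [← lintegral_union measurableSet_Ico Ico_disjoint_Ico_same]
        gcongr
        exact Measure.restrict_le_self

theorem two_mul_ofReal_integral_le_lintegral {α h h' : ℝ → ℝ} (hα : Continuous α)
    (hh : ∀ x, HasDerivAt h (h' x) x) (hh' : Continuous h') (h0 : ∀ x, 0 ≤ h x)
    (hfin : ∫⁻ x, ENNReal.ofReal (h x) ≠ ∞) (t : ℝ) :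
    2 * ENNReal.ofReal (∫ s in (0 : ℝ)..h t, α s) ≤ ∫⁻ x, ‖α (h x)‖ₑ * ‖h' x‖ₑ := by
  have hcont : Continuous h := continuous_iff_continuousAt.2 fun x => (hh x).continuousAt
  have hlim : Tendsto (fun u => ∫ s in (0 : ℝ)..u, α s) (𝓝 0) (𝓝 0) := by
    simpa only [intervalIntegral.integral_same] using (intervalIntegral.continuous_primitive
      (fun a b => hα.intervalIntegrable a b) 0).tendsto 0
  have hsmall (S : Set ℝ) (hS : volume S = ∞) (hSm : MeasurableSet S) :
      ∀ ε > 0, ∃ x ∈ S, ∫ s in (0 : ℝ)..h x, α s < ε := by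
    intro ε hε
    obtain ⟨δ, hδ, hδε⟩ := Metric.eventually_nhds_iff.1 (hlim.eventually (gt_mem_nhds hε))
    obtain ⟨x, hxS, hxδ⟩ := exists_mem_lt_of_lintegral_ne_top hfin hS hSm hδ
    exact ⟨x, hxS, hδε (by rwa [Real.dist_0_eq_abs, abs_of_nonneg (h0 x)])⟩
  simpa only [enorm_mul] using two_mul_ofReal_le_lintegral_enorm
    (fun x => hasDerivAt_primitive_comp (c := 0) hα (hh x)) ((hα.comp hcont).mul hh')
    (hsmall (Iio t) Real.volume_Iio measurableSet_Iio)
    (hsmall (Ioi t) Real.volume_Ioi measurableSet_Ioi)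

variable {L : ℝ} {κ w : ℝ≥0∞} {F F' : ℝ → ℝ → ℝ → ℝ}

theorem continuous_innerIntegral (hF : Continuous fun q : ℝ × ℝ × ℝ => F q.1 q.2.1 q.2.2)
    (a b : ℝ) : Continuous fun q : ℝ × ℝ => ∫ y in a..b, F q.1 q.2 y :=
  intervalIntegral.continuous_parametric_intervalIntegral_of_continuous'
    (f := fun q : ℝ × ℝ => F q.1 q.2)
    (hF.comp (by fun_prop : Continuous fun q : (ℝ × ℝ) × ℝ => (q.1.1, q.1.2, q.2))) a b

theorem continuous_doubleIntegral (hF : Continuous fun q : ℝ × ℝ × ℝ => F q.1 q.2.1 q.2.2)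
    (a b : ℝ) : Continuous fun t => ∫ x in a..b, ∫ y in a..b, F t x y :=
  intervalIntegral.continuous_parametric_intervalIntegral_of_continuous'
    (f := fun t x => ∫ y in a..b, F t x y) (continuous_innerIntegral hF a b) a b

theorem hasDerivAt_doubleIntegral (hF : Continuous fun q : ℝ × ℝ × ℝ => F q.1 q.2.1 q.2.2)
    (hF' : Continuous fun q : ℝ × ℝ × ℝ => F' q.1 q.2.1 q.2.2)
    (hd : ∀ t x y, HasDerivAt (fun s => F s x y) (F' t x y) t) (a b t : ℝ) :
    HasDerivAt (fun t => ∫ x in a..b, ∫ y in a..b, F t x y)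
      (∫ x in a..b, ∫ y in a..b, F' t x y) t :=
  hasDerivAt_intervalIntegral_of_continuous (F := fun t x => ∫ y in a..b, F t x y)
    (F' := fun t x => ∫ y in a..b, F' t x y) a b (continuous_innerIntegral hF a b)
    (continuous_innerIntegral hF' a b) (fun t x =>
      hasDerivAt_intervalIntegral_of_continuous (F := fun t y => F t x y)
        (F' := fun t y => F' t x y) a b
        (hF.comp (by fun_prop : Continuous fun q : ℝ × ℝ => (q.1, x, q.2)))
        (hF'.comp (by fun_prop : Continuous fun q : ℝ × ℝ => (q.1, x, q.2)))
        (fun t y => hd t x y) t) t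

theorem ofReal_doubleIntegral_eq_lintegral (hL : 0 ≤ L) {g : ℝ → ℝ → ℝ}
    (hg : Measurable fun q : ℝ × ℝ => g q.1 q.2) (hI : ∀ x y, g x y ∈ Icc (0 : ℝ) 1) :
    ENNReal.ofReal (∫ x in (0 : ℝ)..L, ∫ y in (0 : ℝ)..L, g x y) =
      ∫⁻ x in Ico 0 L, ∫⁻ y in Ico 0 L, ENNReal.ofReal (g x y) := by
  have hgx (x : ℝ) : Measurable (g x) := hg.comp measurable_prodMk_left
  rw [ofReal_intervalIntegral_eq_setLIntegral hL (measurable_intervalIntegral 0 L hg)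
    fun x => intervalIntegral_mem_Icc hL (hgx x) (hI x)]
  exact lintegral_congr fun x => ofReal_intervalIntegral_eq_setLIntegral hL (hgx x) (hI x)

namespace PeriodicApprox

/-- The areas of the slices `t = const` of the limit set. -/
def area (A : PeriodicApprox L κ w) (t : ℝ) : ℝ :=
  ∫ x in (0 : ℝ)..L, ∫ y in (0 : ℝ)..L, A.χ t x y

/-- The integrals over the slices of the approximating functions; they converge to `area`. -/
def approxArea (A : PeriodicApprox L κ w) (k : ℕ) (t : ℝ) : ℝ :=
  ∫ x in (0 : ℝ)..L, ∫ y in (0 : ℝ)..L, A.f k t x y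

/-- The derivative of `approxArea`. -/
def approxAreaDeriv (A : PeriodicApprox L κ w) (k : ℕ) (t : ℝ) : ℝ :=
  ∫ x in (0 : ℝ)..L, ∫ y in (0 : ℝ)..L, A.ft k t x y

/-- The total variations on the slices of the approximating functions, which play the role of the
perimeters of the slices. -/
def approxPerimeter (A : PeriodicApprox L κ w) (k : ℕ) (t : ℝ) : ℝ≥0∞ :=
  ∫⁻ x in Ico 0 L, ∫⁻ y in Ico 0 L, ENNReal.ofReal √(A.fx k t x y ^ 2 + A.fy k t x y ^ 2)

variable (A : PeriodicApprox L κ w)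

theorem measurable_length : Measurable fun q : ℝ × ℝ => ∫ y in (0 : ℝ)..L, A.χ q.1 q.2 y :=
  measurable_intervalIntegral (g := fun q : ℝ × ℝ => A.χ q.1 q.2) 0 L
    (A.meas_χ.comp (by fun_prop : Measurable fun q : (ℝ × ℝ) × ℝ => (q.1.1, q.1.2, q.2)))

theorem measurable_area : Measurable A.area :=
  measurable_intervalIntegral 0 L A.measurable_length

theorem χ_mem_Icc (t x y : ℝ) : A.χ t x y ∈ Icc (0 : ℝ) 1 := by
  rcases A.χ_eq t x y with h | h <;> simp [h]

theorem length_mem_Icc (hL : 0 ≤ L) (t x : ℝ) : ∫ y in (0 : ℝ)..L, A.χ t x y ∈ Icc 0 L := by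
  simpa using intervalIntegral_mem_Icc hL
    (A.meas_χ.comp (by fun_prop : Measurable fun y : ℝ => (t, x, y))) (A.χ_mem_Icc t x)

theorem area_mem_Icc (hL : 0 ≤ L) (t : ℝ) : A.area t ∈ Icc 0 (L ^ 2) := by
  rw [sq]
  exact intervalIntegral_mem_Icc hL (A.measurable_length.comp measurable_prodMk_left)
    (A.length_mem_Icc hL t)

theorem lintegral_area (hL : 0 ≤ L) : ∫⁻ t, ENNReal.ofReal (A.area t) = w :=
  (lintegral_congr fun t => ofReal_doubleIntegral_eq_lintegral hL
    (A.meas_χ.comp measurable_prodMk_left) (A.χ_mem_Icc t)).trans A.lintegral_χ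

theorem lintegral_approxArea (hL : 0 ≤ L) (k : ℕ) : ∫⁻ t, ENNReal.ofReal (A.approxArea k t) = w :=
  (lintegral_congr fun t => ofReal_doubleIntegral_eq_lintegral hL
    ((A.cont k).measurable.comp measurable_prodMk_left) (A.mem_Icc k t)).trans (A.lintegral_f k)

theorem approxArea_nonneg (hL : 0 ≤ L) (k : ℕ) (t : ℝ) : 0 ≤ A.approxArea k t :=
  intervalIntegral.integral_nonneg hL fun x _ =>
    intervalIntegral.integral_nonneg hL fun y _ => (A.mem_Icc k t x y).1

theorem continuous_approxArea (k : ℕ) : Continuous (A.approxArea k) :=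
  continuous_doubleIntegral (A.cont k) 0 L

theorem continuous_approxAreaDeriv (k : ℕ) : Continuous (A.approxAreaDeriv k) :=
  continuous_doubleIntegral (A.cont_t k) 0 L

theorem hasDerivAt_approxArea (k : ℕ) (t : ℝ) :
    HasDerivAt (A.approxArea k) (A.approxAreaDeriv k t) t :=
  hasDerivAt_doubleIntegral (A.cont k) (A.cont_t k) (A.deriv_t k) 0 L t

theorem ae_tendsto_approxArea (hL : 0 ≤ L) :
    ∀ᵐ t, Tendsto (fun k => A.approxArea k t) atTop (𝓝 (A.area t)) := by
  have hslice (k : ℕ) (t x : ℝ) : Measurable (A.f k t x) :=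
    (A.cont k).measurable.comp (by fun_prop : Measurable fun y : ℝ => (t, x, y))
  refine A.ae_tendsto.mono fun t ht => tendsto_intervalIntegral_of_mem_Icc
    (fun k => (continuous_innerIntegral (A.cont k) 0 L).measurable.comp measurable_prodMk_left)
    (fun k x => intervalIntegral_mem_Icc hL (hslice k t x) (A.mem_Icc k t x))
    (ht.mono fun x hx => ?_)
  exact tendsto_intervalIntegral_of_mem_Icc (fun k => hslice k t x) (fun k => A.mem_Icc k t x) hx

theorem continuous_sqrt_add_sq (k : ℕ) : Continuous fun q : ℝ × ℝ × ℝ =>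
    √(A.fx k q.1 q.2.1 q.2.2 ^ 2 + A.fy k q.1 q.2.1 q.2.2 ^ 2) :=
  (((A.cont_x k).pow 2).add ((A.cont_y k).pow 2)).sqrt

theorem measurable_innerPerimeter (k : ℕ) : Measurable fun q : ℝ × ℝ =>
    ∫⁻ y in Ico 0 L, ENNReal.ofReal √(A.fx k q.1 q.2 y ^ 2 + A.fy k q.1 q.2 y ^ 2) :=
  ((A.continuous_sqrt_add_sq k).measurable.comp
    (by fun_prop : Measurable fun q : (ℝ × ℝ) × ℝ => (q.1.1, q.1.2, q.2))
    ).ennreal_ofReal.lintegral_prod_right'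

theorem measurable_approxPerimeter (k : ℕ) : Measurable (A.approxPerimeter k) :=
  (A.measurable_innerPerimeter k).lintegral_prod_right'

theorem ae_sqrt_le_liminf_approxPerimeter (hL : 0 < L) (hLπ : L ^ 2 ≤ 4 * π) :
    ∀ᵐ t, ENNReal.ofReal √(A.area t * (L ^ 2 - A.area t)) ≤
      liminf (fun k => A.approxPerimeter k t) atTop := by
  refine A.ae_tendsto.mono fun t ht => CoareaBound.sqrt_le hL hLπ
    (A.measurable_length.comp measurable_prodMk_left) (A.length_mem_Icc hL.le t) ?_
  have hslice : Continuous fun q : ℝ × ℝ => (t, q.1, q.2) := by fun_prop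
  exact coareaBound_of_tendsto (f := fun k => A.f k t) (fx := fun k => A.fx k t)
    (fy := fun k => A.fy k t) hL.le (fun k => (A.cont k).comp hslice)
    (fun k => (A.cont_x k).comp hslice) (fun k => (A.cont_y k).comp hslice)
    (fun k => A.deriv_x k t) (fun k => A.deriv_y k t) (fun k => A.mem_Icc k t)
    (fun k => A.per_x k t) (fun k => A.per_y k t) (A.χ_eq t) ht

theorem mul_enorm_approxAreaDeriv_add_le (hL : 0 ≤ L) {α β : ℝ} (hα : 0 ≤ α) (hβ : 0 ≤ β)
    (h : α ^ 2 + β ^ 2 ≤ 1) (k : ℕ) (t : ℝ) :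
    ENNReal.ofReal α * ‖A.approxAreaDeriv k t‖ₑ + ENNReal.ofReal β * A.approxPerimeter k t ≤
      ∫⁻ x in Ico 0 L, ∫⁻ y in Ico 0 L,
        ENNReal.ofReal √(A.ft k t x y ^ 2 + A.fx k t x y ^ 2 + A.fy k t x y ^ 2) := by
  unfold approxAreaDeriv approxPerimeter
  simp only [intervalIntegral.integral_of_le hL, ← restrict_Ico_eq_restrict_Ioc]
  refine (mul_enorm_integral_add_mul_lintegral_le _ _ ?_
    ((A.measurable_innerPerimeter k).comp measurable_prodMk_left)).trans
    (lintegral_mono fun x => ?_)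
  · simpa only [intervalIntegral.integral_of_le hL, ← restrict_Ico_eq_restrict_Ioc,
      Function.comp_def] using
      (continuous_innerIntegral (A.cont_t k) 0 L).measurable.comp
        (measurable_prodMk_left (x := t))
  have hslice : Measurable fun y : ℝ => (t, x, y) := by fun_prop
  simpa only [Real.enorm_of_nonneg (Real.sqrt_nonneg _), Real.sq_sqrt (add_nonneg (sq_nonneg _)
    (sq_nonneg _)), ← add_assoc, Function.comp_apply] using
    mul_enorm_integral_add_le_lintegral_sqrt hα hβ h ((A.cont_t k).measurable.comp hslice)
      ((A.continuous_sqrt_add_sq k).measurable.comp hslice) (μ := volume.restrict (Ico 0 L))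

theorem coarea_le (hL : 0 < L) (hLπ : L ^ 2 ≤ 4 * π) (hw : w ≠ ∞)
    {α β : ℝ → ℝ} (hα : Continuous α) (hβ : Continuous β) (hα0 : ∀ s, 0 ≤ α s)
    (hβ0 : ∀ s, 0 ≤ β s) (hαβ : ∀ s, α s ^ 2 + β s ^ 2 ≤ 1) :
    ∀ᵐ t₀, 2 * ENNReal.ofReal (∫ s in (0 : ℝ)..A.area t₀, α s) +
      (∫⁻ t, ENNReal.ofReal (β (A.area t)) *
        ENNReal.ofReal √(A.area t * (L ^ 2 - A.area t))) ≤ κ := by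
  have hperim := lintegral_mul_le_liminf hβ (fun k => (A.continuous_approxArea k).measurable)
    A.measurable_approxPerimeter (A.ae_tendsto_approxArea hL.le)
    (A.ae_sqrt_le_liminf_approxPerimeter hL hLπ)
  filter_upwards [A.ae_tendsto_approxArea hL.le] with t₀ ht₀
  have hvar : 2 * ENNReal.ofReal (∫ s in (0 : ℝ)..A.area t₀, α s) ≤ liminf (fun k =>
      ∫⁻ t, ‖α (A.approxArea k t)‖ₑ * ‖A.approxAreaDeriv k t‖ₑ) atTop := by
    have hlim : Tendsto (fun k => 2 * ENNReal.ofReal (∫ s in (0 : ℝ)..A.approxArea k t₀, α s))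
        atTop (𝓝 (2 * ENNReal.ofReal (∫ s in (0 : ℝ)..A.area t₀, α s))) :=
      ENNReal.Tendsto.const_mul (ENNReal.tendsto_ofReal
        (((intervalIntegral.continuous_primitive (fun a b => hα.intervalIntegrable a b) 0).tendsto
          _).comp ht₀)) (Or.inr (by simp))
    rw [← hlim.liminf_eq]
    exact liminf_le_liminf (Eventually.of_forall fun k => two_mul_ofReal_integral_le_lintegral hα
      (A.hasDerivAt_approxArea k) (A.continuous_approxAreaDeriv k) (A.approxArea_nonneg hL.le k)
      (by rwa [A.lintegral_approxArea hL.le]) t₀)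
  refine (add_le_liminf_add hvar hperim).trans
    ((liminf_le_liminf (Eventually.of_forall fun k => ?_)).trans_eq (liminf_const κ))
  have hmeas : Measurable fun t => ‖α (A.approxArea k t)‖ₑ * ‖A.approxAreaDeriv k t‖ₑ :=
    (hα.comp (A.continuous_approxArea k)).measurable.enorm.mul
      (A.continuous_approxAreaDeriv k).measurable.enorm
  rw [← lintegral_add_left hmeas]
  refine (lintegral_mono fun t => ?_).trans (A.lintegral_grad_le k)
  rw [Real.enorm_of_nonneg (hα0 _)]
  exact A.mul_enorm_approxAreaDeriv_add_le hL.le (hα0 _) (hβ0 _) (hαβ _) k t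

end PeriodicApprox

end SpatialSlices

/-! ### Calibration by the comparison spheres -/

section Calibration

/-- With `c` the total area of the base, the area of the slice, at height parameter `x ∈ [0, 1]`, of
the rotationally symmetric region whose boundary has constant mean curvature parameter `h`. -/
def capArea (c h x : ℝ) : ℝ := c * (1 - x ^ 2) / (h ^ 2 + (1 - x ^ 2))

/-- The Legendre dual, in the volume, of the profile of the symmetric comparison regions: the
perimeter minus `h` times the volume. -/
def capEnergy (c h : ℝ) : ℝ := 2 * ∫ x in (0 : ℝ)..1, capArea c h x

/-- The weight of the horizontal part of the gradient in the calibration. It is the horizontal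
component of the unit normal of the comparison region at a slice of area `s`; truncating `s` to
`[0, m]` makes it continuous on `ℝ` when `m < c`. -/
def capWeight (c h m s : ℝ) : ℝ := h * √(min (max s 0) m / (c - min (max s 0) m))

variable {c h m : ℝ}

theorem continuous_capWeight (hmc : m < c) : Continuous (capWeight c h m) := by
  have (s : ℝ) : c - min (max s 0) m ≠ 0 := by linarith [min_le_right (max s 0) m]
  exact continuous_const.mul (Continuous.sqrt (Continuous.div (by fun_prop) (by fun_prop) this))

theorem capWeight_nonneg (hh : 0 ≤ h) (s : ℝ) : 0 ≤ capWeight c h m s :=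
  mul_nonneg hh (Real.sqrt_nonneg _)

theorem capWeight_sq_le_one (hm0 : 0 ≤ m) (hmc : m < c) (hm : m * (h ^ 2 + 1) ≤ c) (s : ℝ) :
    capWeight c h m s ^ 2 ≤ 1 := by
  unfold capWeight
  set b := min (max s 0) m
  have hbm : b ≤ m := min_le_right _ _
  have : 0 ≤ b := le_min (le_max_right _ _) hm0
  have hbc : 0 < c - b := by linarith
  rw [mul_pow, Real.sq_sqrt (by positivity), ← mul_div_assoc, div_le_one hbc]
  linarith [mul_le_mul_of_nonneg_right hbm (by positivity : 0 ≤ h ^ 2 + 1)]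

theorem capWeight_mul_sqrt (hmc : m < c) {s : ℝ} (hs : s ∈ Icc 0 m) :
    capWeight c h m s * √(s * (c - s)) = h * s := by
  have hsc : 0 < c - s := by linarith [hs.2]
  rw [capWeight, max_eq_left hs.1, min_eq_left hs.2, mul_assoc,
    ← Real.sqrt_mul (div_nonneg hs.1 hsc.le),
    show s / (c - s) * (s * (c - s)) = s ^ 2 by field_simp, Real.sqrt_sq hs.1]

theorem capArea_denom_pos (hh : h ≠ 0) {x : ℝ} (hx : x ∈ Icc (0 : ℝ) 1) :
    0 < h ^ 2 + (1 - x ^ 2) := by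
  nlinarith [hx.1, hx.2, pow_pos (abs_pos.2 hh) 2, sq_abs h]

theorem capArea_mem_Icc (hc : 0 ≤ c) (hh : h ≠ 0) {x : ℝ} (hx : x ∈ Icc (0 : ℝ) 1) :
    capArea c h x ∈ Icc 0 (c / (h ^ 2 + 1)) := by
  have hD := capArea_denom_pos hh hx
  have hx2 : 0 ≤ 1 - x ^ 2 := by nlinarith [hx.1, hx.2]
  refine ⟨by unfold capArea; positivity, ?_⟩
  rw [capArea, div_le_div_iff₀ hD (by positivity)]
  nlinarith [mul_nonneg hc (mul_nonneg (sq_nonneg h) (sq_nonneg x))]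

theorem hasDerivAt_capArea (hh : h ≠ 0) {x : ℝ} (hx : x ∈ Icc (0 : ℝ) 1) :
    HasDerivAt (capArea c h) (-2 * c * h ^ 2 * x / (h ^ 2 + (1 - x ^ 2)) ^ 2) x := by
  have hD := (capArea_denom_pos hh hx).ne'
  have hnum : HasDerivAt (fun x : ℝ => 1 - x ^ 2) (-(2 * x)) x := by
    simpa using (hasDerivAt_pow 2 x).const_sub 1
  refine ((hnum.const_mul c).div (hnum.const_add (h ^ 2)) hD).congr_deriv ?_
  field_simp
  ring

theorem sqrt_one_sub_capWeight_capArea_sq (hc : 0 < c) (hh : h ≠ 0) {x : ℝ}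
    (hx : x ∈ Icc (0 : ℝ) 1) : √(1 - capWeight c h (c / (h ^ 2 + 1)) (capArea c h x) ^ 2) = x := by
  have : 0 < h ^ 2 + (1 - x ^ 2) := capArea_denom_pos hh hx
  have hmem := capArea_mem_Icc hc.le hh hx
  have hx2 : 0 ≤ 1 - x ^ 2 := by nlinarith [hx.1, hx.2]
  have hcompl : c - capArea c h x = c * h ^ 2 / (h ^ 2 + (1 - x ^ 2)) := by
    unfold capArea
    field_simp
    ring
  have hratio : capArea c h x / (c - capArea c h x) = (1 - x ^ 2) / h ^ 2 := by
    rw [hcompl, capArea]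
    field_simp
  rw [capWeight, max_eq_left hmem.1, min_eq_left hmem.2, hratio, mul_pow,
    Real.sq_sqrt (by positivity), mul_div_cancel₀ _ (pow_ne_zero 2 hh),
    sub_sub_self, Real.sqrt_sq hx.1]

theorem integral_sqrt_one_sub_capWeight_sq (hc : 0 < c) (hh : h ≠ 0) :
    ∫ s in (0 : ℝ)..c / (h ^ 2 + 1), √(1 - capWeight c h (c / (h ^ 2 + 1)) s ^ 2) =
      ∫ x in (0 : ℝ)..1, capArea c h x := by
  set m := c / (h ^ 2 + 1)
  have hh2 : 0 < h ^ 2 := by positivity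
  have hmc : m < c := div_lt_self hc (by linarith)
  have hu : uIcc (0 : ℝ) 1 = Icc 0 1 := uIcc_of_le zero_le_one
  have hderiv : ∀ x ∈ uIcc (0 : ℝ) 1, HasDerivAt (capArea c h) _ x := fun x hx =>
    hasDerivAt_capArea hh (hu ▸ hx)
  have hderiv_cont : ContinuousOn (fun x => -2 * c * h ^ 2 * x / (h ^ 2 + (1 - x ^ 2)) ^ 2)
      (uIcc (0 : ℝ) 1) := ContinuousOn.div (by fun_prop) (by fun_prop) fun x hx =>
    (pow_pos (capArea_denom_pos hh (hu ▸ hx)) 2).ne'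
  have hw := continuous_capWeight (h := h) hmc
  have hzero : capArea c h 0 = m := by simp [capArea, m]
  have hone : capArea c h 1 = 0 := by simp [capArea]
  have hsubst := intervalIntegral.integral_comp_mul_deriv hderiv hderiv_cont
    (g := fun s => √(1 - capWeight c h m s ^ 2)) (by fun_prop)
  have hparts := intervalIntegral.integral_mul_deriv_eq_deriv_mul (fun x _ => hasDerivAt_id' x)
    hderiv (by simp) hderiv_cont.intervalIntegrable
  have hinv : ∫ x in (0 : ℝ)..1, ((fun s => √(1 - capWeight c h m s ^ 2)) ∘ capArea c h) x *
      (-2 * c * h ^ 2 * x / (h ^ 2 + (1 - x ^ 2)) ^ 2) =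
      ∫ x in (0 : ℝ)..1, x * (-2 * c * h ^ 2 * x / (h ^ 2 + (1 - x ^ 2)) ^ 2) :=
    intervalIntegral.integral_congr fun x hx =>
      congrArg (· * _) (sqrt_one_sub_capWeight_capArea_sq hc hh (hu ▸ hx))
  rw [hinv, hzero, hone, intervalIntegral.integral_symm 0 m] at hsubst
  simp only [hone, mul_zero, zero_mul, sub_zero, zero_sub, one_mul] at hparts
  linarith

theorem capEnergy_zero : capEnergy c 0 = 2 * c := by
  have : ∫ x in (0 : ℝ)..1, capArea c 0 x = ∫ _ in (0 : ℝ)..1, c := by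
    refine intervalIntegral.integral_congr_ae ?_
    filter_upwards [Measure.ae_ne volume (1 : ℝ)] with x hx hx'
    rw [uIoc_of_le zero_le_one] at hx'
    have : 1 - x ^ 2 ≠ 0 := by nlinarith [hx'.1, lt_of_le_of_ne hx'.2 hx]
    simp [capArea, this]
  simp [capEnergy, this]

namespace PeriodicApprox

variable {L v : ℝ} {κ w : ℝ≥0∞}

theorem coarea_essSup_le (A : PeriodicApprox L κ w) (hL : 0 < L) (hLπ : L ^ 2 ≤ 4 * π) (hw : w ≠ ∞)
    {α β : ℝ → ℝ} (hα : Continuous α) (hβ : Continuous β) (hα0 : ∀ s, 0 ≤ α s)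
    (hβ0 : ∀ s, 0 ≤ β s) (hαβ : ∀ s, α s ^ 2 + β s ^ 2 ≤ 1) :
    2 * ENNReal.ofReal (∫ s in (0 : ℝ)..essSup A.area volume, α s) +
      (∫⁻ t, ENNReal.ofReal (β (A.area t)) *
        ENNReal.ofReal √(A.area t * (L ^ 2 - A.area t))) ≤ κ := by
  have hprim : Continuous fun x => ∫ s in (0 : ℝ)..x, α s :=
    intervalIntegral.continuous_primitive (fun a b => hα.intervalIntegrable a b) 0
  exact essSup_mem_of_isClosed (isBoundedUnder_of ⟨L ^ 2, fun t => (A.area_mem_Icc hL.le t).2⟩)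
    (isBoundedUnder_of ⟨0, fun t => (A.area_mem_Icc hL.le t).1⟩)
    (isClosed_le (((ENNReal.continuous_const_mul (by simp)).comp
      (ENNReal.continuous_ofReal.comp hprim)).add continuous_const) continuous_const)
    (A.coarea_le hL hLπ hw hα hβ hα0 hβ0 hαβ)

theorem ae_area_le_essSup (A : PeriodicApprox L κ w) (hL : 0 ≤ L) :
    ∀ᵐ t, A.area t ≤ essSup A.area volume :=
  ae_le_essSup (isBoundedUnder_of ⟨L ^ 2, fun t => (A.area_mem_Icc hL t).2⟩)

theorem essSup_area_le (A : PeriodicApprox L κ w) (hL : 0 ≤ L) :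
    essSup A.area volume ≤ L ^ 2 :=
  essSup_le_of_ae_le _ (Eventually.of_forall fun t => (A.area_mem_Icc hL t).2)
    (IsBoundedUnder.isCoboundedUnder_le (isBoundedUnder_of ⟨0, fun t => (A.area_mem_Icc hL t).1⟩))

theorem essSup_area_pos (A : PeriodicApprox L κ w) (hL : 0 ≤ L) (hw : w ≠ 0) :
    0 < essSup A.area volume := by
  by_contra! hneg
  refine hw ?_
  rw [← A.lintegral_area hL, lintegral_eq_zero_iff A.measurable_area.ennreal_ofReal]
  filter_upwards [A.ae_area_le_essSup hL] with t ht
  simpa using ht.trans hneg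

theorem ofReal_capEnergy_le_of_essSup_eq (A : PeriodicApprox L κ (ENNReal.ofReal v)) (hL : 0 < L)
    (hLπ : L ^ 2 ≤ 4 * π) (hh : 0 < h) (hm : essSup A.area volume = L ^ 2 / (h ^ 2 + 1)) :
    ENNReal.ofReal (capEnergy (L ^ 2) h + h * v) ≤ κ := by
  set m := L ^ 2 / (h ^ 2 + 1)
  have hmc : m < L ^ 2 := div_lt_self (by positivity) (by linarith [pow_pos hh 2])
  have hw := continuous_capWeight (h := h) hmc
  have hsq := capWeight_sq_le_one (by positivity) hmc (div_mul_cancel₀ (L ^ 2) (by positivity)).le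
  have hslices : ∫⁻ t, ENNReal.ofReal (capWeight (L ^ 2) h m (A.area t)) *
      ENNReal.ofReal √(A.area t * (L ^ 2 - A.area t)) = ENNReal.ofReal (h * v) := by
    rw [ENNReal.ofReal_mul hh.le]
    simp only [← A.lintegral_area hL.le, ← lintegral_const_mul _ A.measurable_area.ennreal_ofReal]
    refine lintegral_congr_ae ?_
    filter_upwards [A.ae_area_le_essSup hL.le] with t ht
    rw [← ENNReal.ofReal_mul (capWeight_nonneg hh.le _),
      capWeight_mul_sqrt hmc ⟨(A.area_mem_Icc hL.le t).1, hm ▸ ht⟩, ENNReal.ofReal_mul hh.le]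
  have hcoarea := A.coarea_essSup_le hL hLπ ENNReal.ofReal_ne_top
    (α := fun s => √(1 - capWeight (L ^ 2) h m s ^ 2)) (by fun_prop) hw
    (fun _ => Real.sqrt_nonneg _) (capWeight_nonneg hh.le) fun s => by
      rw [Real.sq_sqrt (by linarith [hsq s]), sub_add_cancel]
  rw [hm] at hcoarea
  calc ENNReal.ofReal (capEnergy (L ^ 2) h + h * v)
      ≤ ENNReal.ofReal (capEnergy (L ^ 2) h) + ENNReal.ofReal (h * v) := ENNReal.ofReal_add_le
    _ = 2 * ENNReal.ofReal (∫ s in (0 : ℝ)..m, √(1 - capWeight (L ^ 2) h m s ^ 2)) +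
          ∫⁻ t, ENNReal.ofReal (capWeight (L ^ 2) h m (A.area t)) *
            ENNReal.ofReal √(A.area t * (L ^ 2 - A.area t)) := by
        rw [hslices, integral_sqrt_one_sub_capWeight_sq (by positivity) hh.ne', capEnergy,
          ENNReal.ofReal_mul zero_le_two, ENNReal.ofReal_ofNat]
    _ ≤ κ := hcoarea

-- `h` is chosen so that the tallest slice of the comparison region has area `essSup A.area`.
theorem exists_capEnergy_le (A : PeriodicApprox L κ (ENNReal.ofReal v)) (hL : 0 < L)
    (hLπ : L ^ 2 ≤ 4 * π) (hv : 0 < v) :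
    ∃ h : ℝ, 0 ≤ h ∧ ENNReal.ofReal (capEnergy (L ^ 2) h + h * v) ≤ κ := by
  have hpos := A.essSup_area_pos hL.le (ENNReal.ofReal_pos.2 hv).ne'
  rcases (A.essSup_area_le hL.le).lt_or_eq with hlt | heq
  · have hratio : 0 < (L ^ 2 - essSup A.area volume) / essSup A.area volume :=
      div_pos (sub_pos.2 hlt) hpos
    refine ⟨_, Real.sqrt_nonneg _,
      A.ofReal_capEnergy_le_of_essSup_eq hL hLπ (Real.sqrt_pos.2 hratio) ?_⟩
    rw [Real.sq_sqrt hratio.le]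
    field_simp
    ring
  · refine ⟨0, le_rfl, ?_⟩
    simpa [heq, capEnergy_zero, ENNReal.ofReal_mul] using
      A.coarea_essSup_le hL hLπ ENNReal.ofReal_ne_top (α := fun _ => 1) (β := fun _ => 0)
        (by fun_prop) (by fun_prop) (by simp) (by simp) (by simp)

end PeriodicApprox

end Calibration

/-! ### Hausdorff measures under conformal maps -/

section Conformal

variable {X Y : Type*}

theorem hausdorffMeasure_image_le_lintegral_of_mem_Ico [EMetricSpace X] [EMetricSpace Y]
    [MeasurableSpace X] [BorelSpace X] [MeasurableSpace Y] [BorelSpace Y] {f : X → Y} {ρ : X → ℝ≥0}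
    {B : Set X} {d : ℝ} (hd : 0 ≤ d) (hB : MeasurableSet B) {a θ : ℝ≥0}
    (hρ : ∀ x ∈ B, ρ x ∈ Ico a (θ * a))
    (hf : ∀ x ∈ B, ∀ y ∈ B, edist (f x) (f y) ≤ max (ρ x) (ρ y) * edist x y) :
    μH[d] (f '' B) ≤ (θ : ℝ≥0∞) ^ d * ∫⁻ x in B, (ρ x : ℝ≥0∞) ^ d ∂μH[d] := by
  have hLip : LipschitzOnWith (θ * a) f B := fun x hx y hy => by
    refine (hf x hx y hy).trans ?_
    gcongr
    exact_mod_cast max_le (hρ x hx).2.le (hρ y hy).2.le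
  calc μH[d] (f '' B) ≤ ((θ * a : ℝ≥0) : ℝ≥0∞) ^ d * μH[d] B :=
        hLip.hausdorffMeasure_image_le hd
    _ = (θ : ℝ≥0∞) ^ d * ∫⁻ _ in B, (a : ℝ≥0∞) ^ d ∂μH[d] := by
        rw [ENNReal.coe_mul, ENNReal.mul_rpow_of_nonneg _ _ hd, setLIntegral_const, mul_assoc]
    _ ≤ (θ : ℝ≥0∞) ^ d * ∫⁻ x in B, (ρ x : ℝ≥0∞) ^ d ∂μH[d] := by
        gcongr 1
        refine setLIntegral_mono' hB fun x hx => ?_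
        gcongr
        exact (hρ x hx).1

-- Cut `A` into the pieces on which `ρ` lies in `[θ ^ n, θ ^ (n + 1))`, then let `θ ↓ 1`.
theorem hausdorffMeasure_image_le_lintegral [EMetricSpace X] [EMetricSpace Y]
    [MeasurableSpace X] [BorelSpace X] [MeasurableSpace Y] [BorelSpace Y] {f : X → Y} {ρ : X → ℝ≥0}
    {A : Set X} {d : ℝ} (hd : 0 ≤ d) (hA : MeasurableSet A) (hρ : Measurable ρ)
    (hpos : ∀ x ∈ A, 0 < ρ x)
    (hf : ∀ x ∈ A, ∀ y ∈ A, edist (f x) (f y) ≤ max (ρ x) (ρ y) * edist x y) :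
    μH[d] (f '' A) ≤ ∫⁻ x in A, (ρ x : ℝ≥0∞) ^ d ∂μH[d] := by
  have hbound (θ : ℝ≥0) (hθ : 1 < θ) :
      μH[d] (f '' A) ≤ (θ : ℝ≥0∞) ^ d * ∫⁻ x in A, (ρ x : ℝ≥0∞) ^ d ∂μH[d] := by
    set B : ℤ → Set X := fun n => A ∩ ρ ⁻¹' Ico (θ ^ n) (θ ^ (n + 1))
    have hBm (n : ℤ) : MeasurableSet (B n) := hA.inter (hρ measurableSet_Ico)
    have hAB : A = ⋃ n, B n := by
      refine (inter_iUnion A _).symm.trans (inter_eq_left.2 fun x hx => ?_) |>.symm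
      exact mem_iUnion.2 (exists_mem_Ico_zpow (hpos x hx) hθ)
    have hdisj : Pairwise (Function.onFun Disjoint B) :=
      (zpow_right_mono₀ hθ.le).pairwise_disjoint_on_Ico_succ.mono fun i j hij =>
        (hij.preimage ρ).mono inter_subset_right inter_subset_right
    calc μH[d] (f '' A) ≤ ∑' n, μH[d] (f '' B n) := by
          conv_lhs => rw [hAB, image_iUnion]
          exact measure_iUnion_le _
      _ ≤ ∑' n, (θ : ℝ≥0∞) ^ d * ∫⁻ x in B n, (ρ x : ℝ≥0∞) ^ d ∂μH[d] :=
          ENNReal.tsum_le_tsum fun n => hausdorffMeasure_image_le_lintegral_of_mem_Ico hd (hBm n)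
            (fun x hx => by
              simpa only [mem_preimage, zpow_add_one₀ (zero_lt_one.trans hθ).ne', mul_comm θ]
                using hx.2)
            fun x hx y hy => hf x hx.1 y hy.1
      _ = (θ : ℝ≥0∞) ^ d * ∫⁻ x in A, (ρ x : ℝ≥0∞) ^ d ∂μH[d] := by
          rw [ENNReal.tsum_mul_left, ← lintegral_iUnion hBm hdisj, ← hAB]
  have hlim : Tendsto (fun θ : ℝ≥0 => (θ : ℝ≥0∞) ^ d * ∫⁻ x in A, (ρ x : ℝ≥0∞) ^ d ∂μH[d])
      (𝓝[>] 1) (𝓝 (1 * ∫⁻ x in A, (ρ x : ℝ≥0∞) ^ d ∂μH[d])) := by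
    refine ENNReal.Tendsto.mul_const ?_ (Or.inl one_ne_zero)
    have hcont : Continuous fun θ : ℝ≥0 => (θ : ℝ≥0∞) ^ d := by fun_prop
    simpa only [ENNReal.coe_one, ENNReal.one_rpow] using
      (hcont.tendsto 1).mono_left nhdsWithin_le_nhds
  simpa only [one_mul] using ge_of_tendsto hlim (eventually_nhdsWithin_of_forall hbound)

theorem euclideanHausdorffMeasure_image_le_lintegral [MetricSpace X] [MetricSpace Y]
    [MeasurableSpace X] [BorelSpace X] [MeasurableSpace Y] [BorelSpace Y] {f : X → Y} {ρ : X → ℝ}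
    {A : Set X} (d : ℕ) (hA : MeasurableSet A) (hρ : Measurable ρ) (hpos : ∀ x ∈ A, 0 < ρ x)
    (hf : ∀ x ∈ A, ∀ y ∈ A, dist (f x) (f y) ≤ max (ρ x) (ρ y) * dist x y) :
    μHE[d] (f '' A) ≤ ∫⁻ x in A, ENNReal.ofReal (ρ x ^ d) ∂μHE[d] := by
  have hedist : ∀ x ∈ A, ∀ y ∈ A, edist (f x) (f y) ≤
      max ((ρ x).toNNReal : ℝ≥0∞) (ρ y).toNNReal * edist x y := fun x hx y hy => by
    change _ ≤ max (ENNReal.ofReal (ρ x)) (ENNReal.ofReal (ρ y)) * _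
    rw [edist_dist, edist_dist, ← ENNReal.ofReal_mono.map_max,
      ← ENNReal.ofReal_mul (le_max_of_le_left (hpos x hx).le)]
    exact ENNReal.ofReal_le_ofReal (hf x hx y hy)
  have hle := hausdorffMeasure_image_le_lintegral (ρ := fun x => (ρ x).toNNReal) d.cast_nonneg hA
    hρ.real_toNNReal (fun x hx => Real.toNNReal_pos.2 (hpos x hx)) hedist
  rw [setLIntegral_congr_fun hA fun x hx => ENNReal.ofReal_pow (hpos x hx).le d]
  simp only [Measure.euclideanHausdorffMeasure_def, Measure.smul_apply, Measure.restrict_smul,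
    lintegral_smul_measure]
  gcongr
  simp only [ENNReal.rpow_natCast] at hle
  exact hle

end Conformal

section ExponentialInequalities

theorem exp_mul_exp_mul_sub_sq_le (s t : ℝ) :
    Real.exp s * Real.exp t * (s - t) ^ 2 ≤ (Real.exp s - Real.exp t) ^ 2 := by
  have hsinh : ((s - t) / 2) ^ 2 ≤ Real.sinh ((s - t) / 2) ^ 2 := by
    rw [← sq_abs, ← sq_abs (Real.sinh _), Real.abs_sinh]
    gcongr
    exact Real.self_le_sinh_iff.2 (abs_nonneg _)
  have hfactor : (Real.exp s - Real.exp t) ^ 2 =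
      Real.exp s * Real.exp t * (4 * Real.sinh ((s - t) / 2) ^ 2) := by
    have hs : Real.exp s = Real.exp (s / 2) ^ 2 := by rw [← Real.exp_nat_mul]; ring_nf
    have ht : Real.exp t = Real.exp (t / 2) ^ 2 := by rw [← Real.exp_nat_mul]; ring_nf
    rw [Real.sinh_eq, show -((s - t) / 2) = t / 2 - s / 2 by ring,
      show (s - t) / 2 = s / 2 - t / 2 by ring, Real.exp_sub, Real.exp_sub, hs, ht]
    field_simp
    ring
  rw [hfactor]
  gcongr
  linarith

theorem abs_exp_sub_exp_le (s t : ℝ) :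
    |Real.exp s - Real.exp t| ≤ max (Real.exp s) (Real.exp t) * |s - t| := by
  wlog h : t ≤ s generalizing s t
  · rw [abs_sub_comm, max_comm, abs_sub_comm s]
    exact this t s (le_of_not_ge h)
  have hexp : Real.exp t = Real.exp s * Real.exp (t - s) := by rw [← Real.exp_add]; ring_nf
  rw [max_eq_left (Real.exp_le_exp.2 h), abs_of_nonneg (sub_nonneg.2 (Real.exp_le_exp.2 h)),
    abs_of_nonneg (sub_nonneg.2 h), hexp, ← mul_one_sub]
  refine mul_le_mul_of_nonneg_left ?_ (Real.exp_pos s).le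
  linarith [Real.add_one_le_exp (t - s)]

theorem le_max_mul_of_sq_le {a b c d : ℝ} (ha : 0 ≤ a) (hb : 0 ≤ b) (hd : 0 ≤ d)
    (h : c ^ 2 ≤ a * b * d ^ 2) : c ≤ max a b * d := by
  refine le_of_sq_le_sq (h.trans ?_) (by positivity)
  rw [mul_pow, sq (max a b)]
  gcongr
  exacts [le_max_left _ _, le_max_right _ _]

end ExponentialInequalities

section Stereographic

theorem EucSp.norm_three_sq (p : EucSp 3) : ‖p‖ ^ 2 = p 0 ^ 2 + p 1 ^ 2 + p 2 ^ 2 := by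
  rw [EuclideanSpace.real_norm_sq_eq, Fin.sum_univ_three]

theorem EucSp.dist_three_sq (p q : EucSp 3) :
    dist p q ^ 2 = (p 0 - q 0) ^ 2 + (p 1 - q 1) ^ 2 + (p 2 - q 2) ^ 2 := by
  simp only [dist_eq_norm, EucSp.norm_three_sq, PiLp.sub_apply]

namespace Sph2

theorem sum_sq (z : Sph2) : z.1 0 ^ 2 + z.1 1 ^ 2 + z.1 2 ^ 2 = 1 := by
  rw [← EucSp.norm_three_sq, mem_sphere_zero_iff_norm.1 z.2, one_pow]

/-- The point of the unit sphere with the given coordinates. -/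
def mk (x y z : ℝ) (h : x ^ 2 + y ^ 2 + z ^ 2 = 1) : Sph2 :=
  ⟨!₂[x, y, z], mem_sphere_zero_iff_norm.2 <|
    (pow_eq_one_iff_of_nonneg (norm_nonneg _) two_ne_zero).1 <|
      (EucSp.norm_three_sq _).trans h⟩

@[simp] theorem mk_zero (x y z : ℝ) (h) : (mk x y z h).1 0 = x := rfl
@[simp] theorem mk_one (x y z : ℝ) (h) : (mk x y z h).1 1 = y := rfl
@[simp] theorem mk_two (x y z : ℝ) (h) : (mk x y z h).1 2 = z := rfl

theorem ext_coord {z w : Sph2} (h0 : z.1 0 = w.1 0) (h1 : z.1 1 = w.1 1)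
    (h2 : z.1 2 = w.1 2) : z = w := by
  apply Subtype.ext
  ext i
  fin_cases i <;> assumption

theorem dist_sq (p q : Sph2) : dist p q ^ 2 =
    (p.1 0 - q.1 0) ^ 2 + (p.1 1 - q.1 1) ^ 2 + (p.1 2 - q.1 2) ^ 2 :=
  EucSp.dist_three_sq _ _

/-- The inverse of the stereographic projection from the north pole. -/
def stereo (w : ℂ) : Sph2 :=
  mk (2 * w.re / (1 + ‖w‖ ^ 2)) (2 * w.im / (1 + ‖w‖ ^ 2)) ((‖w‖ ^ 2 - 1) / (1 + ‖w‖ ^ 2)) (by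
    field_simp
    rw [Complex.sq_norm, Complex.normSq_apply]
    ring)

theorem dist_stereo_sq (w z : ℂ) : dist (stereo w) (stereo z) ^ 2 =
    2 / (1 + ‖w‖ ^ 2) * (2 / (1 + ‖z‖ ^ 2)) * dist w z ^ 2 := by
  rw [dist_sq, Complex.dist_eq]
  simp only [stereo, mk_zero, mk_one, mk_two]
  field_simp
  simp only [Complex.sq_norm, Complex.normSq_apply, Complex.sub_re, Complex.sub_im]
  ring

theorem exists_stereo_eq {z : Sph2} (hz : z.1 2 ≠ 1) : ∃ w, stereo w = z := by
  have hsum := z.sum_sq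
  have hz' : 1 - z.1 2 ≠ 0 := sub_ne_zero.2 hz.symm
  set w : ℂ := ⟨z.1 0 / (1 - z.1 2), z.1 1 / (1 - z.1 2)⟩ with hw
  have hnorm : ‖w‖ ^ 2 = (1 + z.1 2) / (1 - z.1 2) := by
    rw [Complex.sq_norm, Complex.normSq_apply, hw]
    field_simp
    linarith
  have hdenom : 1 + ‖w‖ ^ 2 = 2 / (1 - z.1 2) := by
    rw [hnorm]
    field_simp
    ring
  refine ⟨w, ext_coord ?_ ?_ ?_⟩ <;> simp only [stereo, mk_zero, mk_one, mk_two, hdenom]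
  · rw [hw]
    field_simp
  · rw [hw]
    field_simp
  · rw [hnorm]
    field_simp
    ring

theorem continuous_stereo : Continuous stereo := by
  have hdenom (w : ℂ) : 1 + ‖w‖ ^ 2 ≠ 0 := by positivity
  refine Continuous.subtype_mk ((PiLp.continuous_toLp 2 _).comp (continuous_pi fun i => ?_)) _
  have := Complex.continuous_re
  have := Complex.continuous_im
  fin_cases i <;> exact Continuous.div (by fun_prop) (by fun_prop) hdenom

theorem compl_range_stereo_subset : (range stereo)ᶜ ⊆ {mk 0 0 1 (by norm_num)} := by
  intro z hz
  have hz2 : z.1 2 = 1 := by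
    by_contra h
    exact hz (exists_stereo_eq h)
  have hsum := z.sum_sq
  rw [hz2] at hsum
  exact ext_coord (by simp only [mk_zero]; nlinarith [sq_nonneg (z.1 0), sq_nonneg (z.1 1)])
    (by simp only [mk_one]; nlinarith [sq_nonneg (z.1 0), sq_nonneg (z.1 1)]) hz2

theorem measure_compl_range_stereo : μHE[2] (range stereo)ᶜ = 0 := by
  have := Measure.nullSingletonClass_hausdorff Sph2 (d := ((2 : ℕ) : ℝ)) (by norm_num)
  refine measure_mono_null compl_range_stereo_subset ?_
  rw [Measure.euclideanHausdorffMeasure_def, Measure.smul_apply, measure_singleton, smul_zero]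

theorem measure_le_map_stereo :
    μHE[2] ≤ ((volume : Measure ℂ).withDensity fun w =>
      ENNReal.ofReal ((2 / (1 + ‖w‖ ^ 2)) ^ 2)).map stereo := by
  have hfactor : Continuous fun w : ℂ => 2 / (1 + ‖w‖ ^ 2) :=
    Continuous.div (by fun_prop) (by fun_prop) fun w => by positivity
  have hvol : (μHE[2] : Measure ℂ) = volume := by
    rw [← Complex.finrank_real_complex, InnerProductSpace.euclideanHausdorffMeasure_eq_volume]
  refine Measure.le_iff.2 fun s hs => ?_
  have hpre := continuous_stereo.measurable hs
  rw [Measure.map_apply continuous_stereo.measurable hs, withDensity_apply _ hpre, ← hvol]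
  calc μHE[2] s ≤ μHE[2] (s ∩ range stereo) + μHE[2] (range stereo)ᶜ :=
        (measure_mono fun z hz => (em (z ∈ range stereo)).imp_left (And.intro hz)).trans
          (measure_union_le _ _)
    _ = μHE[2] (stereo '' (stereo ⁻¹' s)) := by
        rw [measure_compl_range_stereo, add_zero, image_preimage_eq_inter_range]
    _ ≤ _ := euclideanHausdorffMeasure_image_le_lintegral 2 hpre hfactor.measurable
        (fun _ _ => by positivity) fun w _ z _ => le_max_mul_of_sq_le (by positivity)
          (by positivity) dist_nonneg (dist_stereo_sq w z).le

end Sph2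

end Stereographic

section SphericalCoordinates

theorem lintegral_complex_radial {g : ℝ → ℝ≥0∞} (hg : Measurable g) :
    ∫⁻ w : ℂ, g ‖w‖ =
      ENNReal.ofReal (2 * π) * ∫⁻ r in Ioi (0 : ℝ), ENNReal.ofReal r * g r := by
  have hpolar : ∀ p ∈ polarCoord.target, ENNReal.ofReal p.1 • g ‖Complex.polarCoord.symm p‖ =
      ENNReal.ofReal p.1 * g p.1 := fun p hp => by
    rw [Complex.norm_polarCoord_symm, abs_of_pos hp.1, smul_eq_mul]
  rw [← Complex.lintegral_comp_polarCoord_symm,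
    setLIntegral_congr_fun polarCoord.open_target.measurableSet hpolar, polarCoord_target,
    Measure.volume_eq_prod, ← Measure.prod_restrict, lintegral_prod _ (by fun_prop)]
  simp only [lintegral_const, Measure.restrict_apply MeasurableSet.univ, univ_inter,
    Real.volume_Ioo]
  rw [lintegral_mul_const _ (by fun_prop), mul_comm]
  congr 2
  ring

theorem image_sqrt_add_sq_Ioi (z : ℝ) : (fun r => √(z ^ 2 + r ^ 2)) '' Ioi 0 = Ioi |z| := by
  ext s
  simp only [mem_image, mem_Ioi]
  constructor
  · rintro ⟨r, hr, rfl⟩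
    exact Real.lt_sqrt_of_sq_lt (by rw [sq_abs]; linarith [pow_pos hr 2])
  · intro hs
    have hsq : z ^ 2 < s ^ 2 := sq_lt_sq.2 (hs.trans_le (le_abs_self s))
    refine ⟨√(s ^ 2 - z ^ 2), Real.sqrt_pos.2 (by linarith), ?_⟩
    rw [Real.sq_sqrt (by linarith), add_sub_cancel, Real.sqrt_sq ((abs_nonneg z).trans hs.le)]

theorem lintegral_Ioi_comp_sqrt_add_sq (z : ℝ) (g : ℝ → ℝ≥0∞) :
    ∫⁻ r in Ioi (0 : ℝ), ENNReal.ofReal r * g √(z ^ 2 + r ^ 2) =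
      ∫⁻ s in Ioi |z|, ENNReal.ofReal s * g s := by
  have hpos : ∀ r ∈ Ioi (0 : ℝ), 0 < z ^ 2 + r ^ 2 := fun r hr => by
    linarith [sq_nonneg z, pow_pos (mem_Ioi.1 hr) 2]
  have hderiv : ∀ r ∈ Ioi (0 : ℝ), HasDerivWithinAt (fun r => √(z ^ 2 + r ^ 2))
      (r / √(z ^ 2 + r ^ 2)) (Ioi 0) r := fun r hr => by
    refine (((hasDerivAt_pow 2 r).const_add (z ^ 2)).sqrt (hpos r hr).ne').hasDerivWithinAt
      |>.congr_deriv ?_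
    push_cast
    field_simp
  have hinj : InjOn (fun r => √(z ^ 2 + r ^ 2)) (Ioi 0) := fun r hr s hs h => by
    have hsq := (Real.sqrt_inj (hpos r hr).le (hpos s hs).le).1 h
    exact (pow_left_inj₀ (mem_Ioi.1 hr).le (mem_Ioi.1 hs).le two_ne_zero).1 (by linarith)
  rw [← image_sqrt_add_sq_Ioi, lintegral_image_eq_lintegral_abs_deriv_mul measurableSet_Ioi
    hderiv hinj]
  refine setLIntegral_congr_fun measurableSet_Ioi fun r hr => ?_
  have hsqrt : 0 < √(z ^ 2 + r ^ 2) := Real.sqrt_pos.2 (hpos r hr)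
  rw [← mul_assoc, ← ENNReal.ofReal_mul (abs_nonneg _),
    abs_of_pos (div_pos (mem_Ioi.1 hr) hsqrt), div_mul_cancel₀ _ hsqrt.ne']

theorem lintegral_eucSp_three {g : ℝ → ℝ → ℝ≥0∞} (hg : Measurable fun p : ℝ × ℝ => g p.1 p.2) :
    ∫⁻ q : EucSp 3, g ‖q‖ (q 2) = ∫⁻ z : ℝ, ∫⁻ w : ℂ, g √(z ^ 2 + ‖w‖ ^ 2) z := by
  have hm : Measurable fun p : ℝ × ℂ => g √(p.1 ^ 2 + ‖p.2‖ ^ 2) p.1 :=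
    hg.comp (by fun_prop : Measurable fun p : ℝ × ℂ => (√(p.1 ^ 2 + ‖p.2‖ ^ 2), p.1))
  have hmp := ((MeasurePreserving.id (volume : Measure ℝ)).prod
    Complex.volume_preserving_equiv_pi.symm).comp
      ((volume_preserving_piFinSuccAbove (fun _ : Fin 3 => ℝ) 2).comp
        (PiLp.volume_preserving_ofLp (Fin 3)))
  rw [← lintegral_prod _ hm.aemeasurable, ← hmp.lintegral_comp hm]
  refine lintegral_congr fun q => ?_
  have hnorm : ‖q‖ = √(q 2 ^ 2 + ‖(⟨q 0, q 1⟩ : ℂ)‖ ^ 2) := by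
    rw [Complex.sq_norm, Complex.normSq_mk, ← Real.sqrt_sq (norm_nonneg q), EucSp.norm_three_sq]
    ring_nf
  have hsplit : Complex.measurableEquivPi.symm
      ((MeasurableEquiv.piFinSuccAbove (fun _ : Fin 3 => ℝ) 2) q.ofLp).2 = ⟨q 0, q 1⟩ := by
    rw [Complex.measurableEquivPi_symm_apply]
    exact Complex.ext (by simp [Fin.removeNth, Fin.succAbove])
      (by simp [Fin.removeNth, Fin.succAbove])
  rw [hnorm, ← hsplit]
  rfl

theorem indicator_Ioi_abs (f : ℝ → ℝ≥0∞) (z s : ℝ) : (Ioi |z|).indicator f s =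
    (Ioi 0).indicator (fun s => (Ioo (-s) s).indicator (fun _ => f s) z) s := by
  classical
  simp only [indicator_apply, mem_Ioi, mem_Ioo, ← abs_lt]
  by_cases h : |z| < s
  · rw [if_pos h, if_pos ((abs_nonneg z).trans_lt h)]
  · simp only [if_neg h, ite_self]

theorem lintegral_Ioo_neg_self {s : ℝ} (hs : 0 < s) (g : ℝ → ℝ≥0∞) :
    ∫⁻ z in Ioo (-s) s, g z = ENNReal.ofReal s * ∫⁻ x in Ioo (-1) 1, g (s * x) := by
  have himg : (fun x => s * x) '' Ioo (-1) 1 = Ioo (-s) s := by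
    rw [image_mul_left_Ioo hs, mul_neg_one, mul_one]
  rw [← himg, lintegral_image_eq_lintegral_abs_deriv_mul (f' := fun _ => s) measurableSet_Ioo
    (fun x _ => ((hasDerivAt_id' x).const_mul s).hasDerivWithinAt.congr_deriv (mul_one s))
    (mul_right_injective₀ hs.ne').injOn, lintegral_const_mul' _ _ ENNReal.ofReal_ne_top,
    abs_of_pos hs]

theorem lintegral_swap_cone {f : ℝ → ℝ → ℝ≥0∞} (hf : Measurable fun p : ℝ × ℝ => f p.1 p.2) :
    ∫⁻ z : ℝ, (∫⁻ s in Ioi |z|, ENNReal.ofReal s * f s z) =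
      ∫⁻ s in Ioi (0 : ℝ), ENNReal.ofReal (s ^ 2) * ∫⁻ x in Ioo (-1) 1, f s (s * x) := by
  have hcone : MeasurableSet {p : ℝ × ℝ | |p.1| < p.2} :=
    measurableSet_lt (by fun_prop) (by fun_prop)
  have : Measurable fun p : ℝ × ℝ => f p.2 p.1 := hf.comp measurable_swap
  have hm : Measurable fun p : ℝ × ℝ =>
      (Ioi |p.1|).indicator (fun s => ENNReal.ofReal s * f s p.1) p.2 :=
    (by fun_prop : Measurable fun p : ℝ × ℝ => ENNReal.ofReal p.2 * f p.2 p.1).indicator hcone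
  calc ∫⁻ z : ℝ, (∫⁻ s in Ioi |z|, ENNReal.ofReal s * f s z)
      = ∫⁻ z : ℝ, ∫⁻ s, (Ioi |z|).indicator (fun s => ENNReal.ofReal s * f s z) s := by
        simp only [lintegral_indicator measurableSet_Ioi]
    _ = ∫⁻ s : ℝ, ∫⁻ z, (Ioi |z|).indicator (fun s => ENNReal.ofReal s * f s z) s :=
        lintegral_lintegral_swap hm.aemeasurable
    _ = ∫⁻ s in Ioi (0 : ℝ), ∫⁻ z in Ioo (-s) s, ENNReal.ofReal s * f s z := by
        rw [← lintegral_indicator measurableSet_Ioi]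
        refine lintegral_congr fun s => ?_
        simp only [indicator_Ioi_abs]
        by_cases hs : s ∈ Ioi (0 : ℝ)
        · simp only [indicator_of_mem hs]
          rw [← lintegral_indicator measurableSet_Ioo]
          rfl
        · simp only [indicator_of_notMem hs, lintegral_zero]
    _ = _ := setLIntegral_congr_fun measurableSet_Ioi fun s hs => by
        rw [lintegral_Ioo_neg_self hs, lintegral_const_mul' _ _ ENNReal.ofReal_ne_top,
          ← mul_assoc, ← ENNReal.ofReal_mul (mem_Ioi.1 hs).le, sq]

theorem lintegral_eucSp_three_spherical {f : ℝ → ℝ → ℝ≥0∞}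
    (hf : Measurable fun p : ℝ × ℝ => f p.1 p.2) :
    ∫⁻ q : EucSp 3, f ‖q‖ (q 2) = ENNReal.ofReal (2 * π) *
      ∫⁻ s in Ioi (0 : ℝ), ENNReal.ofReal (s ^ 2) * ∫⁻ x in Ioo (-1) 1, f s (s * x) := by
  rw [lintegral_eucSp_three hf, ← lintegral_swap_cone hf,
    ← lintegral_const_mul' _ _ ENNReal.ofReal_ne_top]
  refine lintegral_congr fun z => ?_
  have hm : Measurable fun r : ℝ => f √(z ^ 2 + r ^ 2) z :=
    hf.comp (by fun_prop : Measurable fun r : ℝ => (√(z ^ 2 + r ^ 2), z))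
  rw [lintegral_complex_radial hm, lintegral_Ioi_comp_sqrt_add_sq z fun s => f s z]

end SphericalCoordinates

section HatBox

theorem lintegral_Ioi_comp_stereo_height_le (G : ℝ → ℝ≥0∞) :
    ∫⁻ r in Ioi (0 : ℝ), ENNReal.ofReal (4 * r / (1 + r ^ 2) ^ 2) *
      G ((r ^ 2 - 1) / (1 + r ^ 2)) ≤ ∫⁻ x in Ioo (-1) 1, G x := by
  set φ : ℝ → ℝ := fun r => (r ^ 2 - 1) / (1 + r ^ 2)
  have hdenom : ∀ r : ℝ, 0 < 1 + r ^ 2 := fun r => by positivity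
  have hderiv : ∀ r ∈ Ioi (0 : ℝ),
      HasDerivWithinAt φ (4 * r / (1 + r ^ 2) ^ 2) (Ioi 0) r := fun r _ => by
    refine (((hasDerivAt_pow 2 r).sub_const 1).div ((hasDerivAt_pow 2 r).const_add 1)
      (hdenom r).ne').hasDerivWithinAt.congr_deriv ?_
    push_cast
    ring
  have hinj : InjOn φ (Ioi 0) := fun r hr s hs h => by
    rw [div_eq_div_iff (hdenom r).ne' (hdenom s).ne'] at h
    exact (pow_left_inj₀ (mem_Ioi.1 hr).le (mem_Ioi.1 hs).le two_ne_zero).1 (by linarith)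
  have himg : φ '' Ioi 0 ⊆ Ioo (-1) 1 := by
    rintro _ ⟨r, hr, rfl⟩
    constructor
    · rw [lt_div_iff₀ (hdenom r)]
      linarith [pow_pos (mem_Ioi.1 hr) 2]
    · rw [div_lt_iff₀ (hdenom r)]
      linarith
  calc _ = ∫⁻ r in Ioi (0 : ℝ), ENNReal.ofReal |4 * r / (1 + r ^ 2) ^ 2| * G (φ r) :=
        setLIntegral_congr_fun measurableSet_Ioi fun r hr => by
          have := mem_Ioi.1 hr
          rw [abs_of_nonneg (by positivity)]
    _ = ∫⁻ x in φ '' Ioi 0, G x :=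
        (lintegral_image_eq_lintegral_abs_deriv_mul measurableSet_Ioi hderiv hinj G).symm
    _ ≤ _ := lintegral_mono_set himg

/-- One half of Archimedes' hat box theorem. -/
theorem lintegral_sph2_height_le {G : ℝ → ℝ≥0∞} (hG : Measurable G) :
    ∫⁻ z : Sph2, G (z.1 2) ∂μHE[2] ≤
      ENNReal.ofReal (2 * π) * ∫⁻ x in Ioo (-1) 1, G x := by
  have hheight : Measurable fun z : Sph2 => G (z.1 2) :=
    hG.comp (by fun_prop : Continuous fun z : Sph2 => z.1 2).measurable
  have hstereo := Sph2.continuous_stereo.measurable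
  set g : ℝ → ℝ≥0∞ := fun r =>
    ENNReal.ofReal ((2 / (1 + r ^ 2)) ^ 2) * G ((r ^ 2 - 1) / (1 + r ^ 2)) with hg
  calc ∫⁻ z : Sph2, G (z.1 2) ∂μHE[2] ≤ ∫⁻ w : ℂ, g ‖w‖ := by
        refine (lintegral_mono' Sph2.measure_le_map_stereo le_rfl).trans_eq ?_
        rw [lintegral_map hheight hstereo,
          lintegral_withDensity_eq_lintegral_mul _ (by fun_prop)
            (by exact hheight.comp hstereo)]
        rfl
    _ = ENNReal.ofReal (2 * π) * ∫⁻ r in Ioi (0 : ℝ), ENNReal.ofReal r * g r :=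
        lintegral_complex_radial (by fun_prop)
    _ = ENNReal.ofReal (2 * π) * ∫⁻ r in Ioi (0 : ℝ),
          ENNReal.ofReal (4 * r / (1 + r ^ 2) ^ 2) * G ((r ^ 2 - 1) / (1 + r ^ 2)) := by
        congr 1
        refine setLIntegral_congr_fun measurableSet_Ioi fun r hr => ?_
        rw [hg, ← mul_assoc, ← ENNReal.ofReal_mul (mem_Ioi.1 hr).le]
        congr 2
        field_simp
        norm_num
    _ ≤ _ := by
        exact mul_le_mul_right (lintegral_Ioi_comp_stereo_height_le G) _

end HatBox

section SphLine

/-- The Riemannian product of the unit sphere with a line. -/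
abbrev SphLine : Type := WithLp 2 (Sph2 × EucSp 1)

namespace SphLine

/-- The third coordinate of the spherical component, which parametrises the orbits of the
rotations about the polar axis. -/
def height (p : SphLine) : ℝ := p.fst.1 2

/-- The coordinate along the line. -/
def time (p : SphLine) : ℝ := p.snd 0

@[fun_prop] theorem continuous_height : Continuous height := by unfold height; fun_prop
@[fun_prop] theorem continuous_time : Continuous time := by unfold time; fun_prop

theorem ext_fst_time {p q : SphLine} (hfst : p.fst = q.fst) (htime : p.time = q.time) : p = q := by
  refine WithLp.ofLp_injective 2 (Prod.ext hfst (PiLp.ext fun i => ?_))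
  rw [Subsingleton.elim i 0]
  exact htime

theorem dist_sq (p q : SphLine) : dist p q ^ 2 = dist p.fst q.fst ^ 2 + (p.time - q.time) ^ 2 := by
  rw [WithLp.prod_dist_eq_add (by norm_num), ENNReal.toReal_ofNat, ← Real.sqrt_eq_rpow,
    Real.rpow_two, Real.rpow_two, Real.sq_sqrt (by positivity), EuclideanSpace.dist_eq p.snd,
    Real.sq_sqrt (by positivity), Fin.sum_univ_one, Real.dist_eq, sq_abs]
  rfl

/-- The conformal identification `(z, t) ↦ exp t • z` of `S² × ℝ` with `ℝ³ ∖ {0}`. -/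
def expMap (p : SphLine) : EucSp 3 := Real.exp p.time • p.fst.1

theorem norm_expMap (p : SphLine) : ‖expMap p‖ = Real.exp p.time := by
  rw [expMap, norm_smul, mem_sphere_zero_iff_norm.1 p.fst.2, mul_one, Real.norm_eq_abs,
    abs_of_pos (Real.exp_pos _)]

@[fun_prop] theorem continuous_expMap : Continuous expMap := by unfold expMap; fun_prop

theorem dist_expMap_sq (p q : SphLine) : dist (expMap p) (expMap q) ^ 2 =
    Real.exp p.time * Real.exp q.time * dist p.fst q.fst ^ 2 +
      (Real.exp p.time - Real.exp q.time) ^ 2 := by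
  rw [EucSp.dist_three_sq, Sph2.dist_sq]
  simp only [expMap, PiLp.smul_apply, smul_eq_mul]
  set a := Real.exp p.time
  set b := Real.exp q.time
  linear_combination (a ^ 2 - a * b) * p.fst.sum_sq + (b ^ 2 - a * b) * q.fst.sum_sq

theorem dist_expMap_le (p q : SphLine) : dist (expMap p) (expMap q) ≤
    max (Real.exp p.time) (Real.exp q.time) * dist p q := by
  have hsphere : Real.exp p.time * Real.exp q.time ≤
      max (Real.exp p.time) (Real.exp q.time) ^ 2 := by
    rw [sq]
    gcongr
    exacts [le_max_left _ _, le_max_right _ _]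
  have hline : (Real.exp p.time - Real.exp q.time) ^ 2 ≤
      (max (Real.exp p.time) (Real.exp q.time) * |p.time - q.time|) ^ 2 := by
    rw [← sq_abs (_ - _)]
    gcongr
    exact abs_exp_sub_exp_le _ _
  refine le_of_sq_le_sq ?_ (by positivity)
  rw [dist_expMap_sq, mul_pow, dist_sq, mul_add]
  gcongr
  rwa [mul_pow, sq_abs] at hline

theorem dist_le_dist_expMap (p q : SphLine) : dist p q ≤
    max ‖expMap p‖⁻¹ ‖expMap q‖⁻¹ * dist (expMap p) (expMap q) := by
  rw [norm_expMap, norm_expMap]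
  refine le_max_mul_of_sq_le (by positivity) (by positivity) dist_nonneg ?_
  rw [dist_expMap_sq, dist_sq, mul_add, ← mul_inv, inv_mul_cancel_left₀ (by positivity)]
  gcongr
  rw [le_inv_mul_iff₀ (by positivity)]
  exact exp_mul_exp_mul_sub_sq_le _ _

theorem expMap_injective : Function.Injective expMap := fun p q h => by
  have hle := dist_le_dist_expMap p q
  rw [h, dist_self, mul_zero] at hle
  exact dist_le_zero.1 hle

theorem measurableEmbedding_expMap : MeasurableEmbedding expMap :=
  continuous_expMap.measurableEmbedding expMap_injective

theorem euclideanHausdorffMeasure_three_eq_volume :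
    (μHE[3] : Measure (EucSp 3)) = volume := by
  have hvol := InnerProductSpace.euclideanHausdorffMeasure_eq_volume (V := EucSp 3)
  rwa [finrank_euclideanSpace_fin] at hvol

theorem volume_comap_expMap_le : (volume : Measure (EucSp 3)).comap expMap ≤
    (μHE[3] : Measure SphLine).withDensity fun p => ENNReal.ofReal (Real.exp p.time ^ 3) := by
  refine Measure.le_iff.2 fun s hs => ?_
  rw [measurableEmbedding_expMap.comap_apply, withDensity_apply _ hs,
    ← euclideanHausdorffMeasure_three_eq_volume]
  exact euclideanHausdorffMeasure_image_le_lintegral 3 hs (by fun_prop)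
    (fun _ _ => Real.exp_pos _) fun x _ y _ => dist_expMap_le x y

theorem measure_le_lintegral_expMap {B : Set SphLine} (hB : MeasurableSet B) :
    (μHE[3] : Measure SphLine) B ≤ ∫⁻ q in expMap '' B, ENNReal.ofReal (‖q‖⁻¹ ^ 3) := by
  have : Nonempty SphLine := ⟨WithLp.toLp 2 (Sph2.mk 0 0 1 (by norm_num), 0)⟩
  have hinv := Function.leftInverse_invFun expMap_injective
  calc (μHE[3] : Measure SphLine) B = μHE[3] (Function.invFun expMap '' (expMap '' B)) := by
        rw [hinv.image_image]
    _ ≤ ∫⁻ q in expMap '' B, ENNReal.ofReal (‖q‖⁻¹ ^ 3) ∂μHE[3] := by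
        refine euclideanHausdorffMeasure_image_le_lintegral 3
          (measurableEmbedding_expMap.measurableSet_image.2 hB) (by fun_prop) ?_ ?_
        · rintro _ ⟨p, -, rfl⟩
          rw [norm_expMap]
          positivity
        · rintro _ ⟨p, -, rfl⟩ _ ⟨q, -, rfl⟩
          rw [hinv p, hinv q]
          exact dist_le_dist_expMap p q
    _ = _ := by rw [euclideanHausdorffMeasure_three_eq_volume]

theorem lintegral_expMap_le_measure {B : Set SphLine} (hB : MeasurableSet B) :
    ∫⁻ q in expMap '' B, ENNReal.ofReal (‖q‖⁻¹ ^ 3) ≤ (μHE[3] : Measure SphLine) B := by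
  have hmap : (volume : Measure (EucSp 3)).restrict (expMap '' B) =
      (((volume : Measure (EucSp 3)).comap expMap).restrict B).map expMap := by
    rw [measurableEmbedding_expMap.restrict_comap, measurableEmbedding_expMap.map_comap,
      Measure.restrict_restrict measurableEmbedding_expMap.measurableSet_range,
      inter_eq_right.2 (image_subset_range _ _)]
  rw [hmap, measurableEmbedding_expMap.lintegral_map]
  refine (lintegral_mono' (Measure.restrict_mono le_rfl volume_comap_expMap_le) le_rfl).trans_eq ?_
  rw [restrict_withDensity hB, lintegral_withDensity_eq_lintegral_mul _ (by fun_prop)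
    (by fun_prop), ← setLIntegral_one B]
  refine lintegral_congr fun p => ?_
  rw [Pi.mul_apply, norm_expMap, ← ENNReal.ofReal_mul (by positivity), ← mul_pow,
    mul_inv_cancel₀ (Real.exp_pos _).ne', one_pow, ENNReal.ofReal_one]

theorem mem_image_expMap {Q : Set (ℝ × ℝ)} {q : EucSp 3} (hq : q ≠ 0) :
    q ∈ expMap '' {p | (p.height, p.time) ∈ Q} ↔ (q 2 / ‖q‖, Real.log ‖q‖) ∈ Q := by
  have hn : 0 < ‖q‖ := norm_pos_iff.2 hq
  constructor
  · rintro ⟨p, hp, rfl⟩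
    rwa [norm_expMap, Real.log_exp, expMap, PiLp.smul_apply, smul_eq_mul,
      mul_div_cancel_left₀ _ (Real.exp_pos _).ne']
  · intro h
    refine ⟨WithLp.toLp 2 (⟨‖q‖⁻¹ • q, mem_sphere_zero_iff_norm.2 (by
      rw [norm_smul, norm_inv, norm_norm, inv_mul_cancel₀ hn.ne'])⟩,
        WithLp.toLp 2 fun _ => Real.log ‖q‖), ?_, ?_⟩
    · rw [div_eq_inv_mul] at h
      exact h
    · exact (congr_arg (· • ‖q‖⁻¹ • q) (Real.exp_log hn)).trans (smul_inv_smul₀ hn.ne' q)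

theorem lintegral_comp_log (g : ℝ → ℝ≥0∞) :
    ∫⁻ s in Ioi (0 : ℝ), ENNReal.ofReal s⁻¹ * g (Real.log s) = ∫⁻ t, g t := by
  have himg : Real.log '' Ioi 0 = univ :=
    eq_univ_of_forall fun t => ⟨Real.exp t, Real.exp_pos t, Real.log_exp t⟩
  rw [← setLIntegral_univ g, ← himg, lintegral_image_eq_lintegral_abs_deriv_mul measurableSet_Ioi
    (fun s hs => (Real.hasDerivAt_log (ne_of_gt hs)).hasDerivWithinAt) Real.log_injOn_pos]
  exact setLIntegral_congr_fun measurableSet_Ioi fun s hs => by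
    rw [abs_of_pos (inv_pos.2 hs)]

theorem measure_rotational {Q : Set (ℝ × ℝ)} (hQ : MeasurableSet Q) :
    (μHE[3] : Measure SphLine) {p | (p.height, p.time) ∈ Q} = ENNReal.ofReal (2 * π) *
      ∫⁻ t : ℝ, ∫⁻ x in Ioo (-1) 1, Q.indicator 1 (x, t) := by
  have hB : MeasurableSet {p : SphLine | (p.height, p.time) ∈ Q} :=
    (by fun_prop : Measurable fun p : SphLine => (p.height, p.time)) hQ
  have hQ1 : Measurable (Q.indicator (1 : ℝ × ℝ → ℝ≥0∞)) := measurable_one.indicator hQ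
  have hae : ∀ᵐ q : EucSp 3, (expMap '' {p | (p.height, p.time) ∈ Q}).indicator
      (fun q => ENNReal.ofReal (‖q‖⁻¹ ^ 3)) q =
        Q.indicator 1 (q 2 / ‖q‖, Real.log ‖q‖) * ENNReal.ofReal (‖q‖⁻¹ ^ 3) := by
    filter_upwards [Measure.ae_ne volume 0] with q hq
    classical
    simp only [indicator_apply, mem_image_expMap hq, Pi.one_apply, ite_mul, one_mul, zero_mul]
  rw [le_antisymm (measure_le_lintegral_expMap hB) (lintegral_expMap_le_measure hB),
    ← lintegral_indicator (measurableEmbedding_expMap.measurableSet_image.2 hB),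
    lintegral_congr_ae hae, lintegral_eucSp_three_spherical
      (f := fun s z => Q.indicator 1 (z / s, Real.log s) * ENNReal.ofReal (s⁻¹ ^ 3))
      ((hQ1.comp (by fun_prop)).mul (by fun_prop)),
    ← lintegral_comp_log]
  congr 1
  refine setLIntegral_congr_fun measurableSet_Ioi fun s hs => ?_
  have hs0 : s ≠ 0 := (mem_Ioi.1 hs).ne'
  simp only [mul_div_cancel_left₀ _ hs0]
  rw [lintegral_mul_const' _ _ ENNReal.ofReal_ne_top, mul_comm (lintegral _ _), ← mul_assoc,
    ← ENNReal.ofReal_mul (sq_nonneg s)]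
  congr 2
  field_simp

end SphLine

end SphLine

/-! ### Rotationally symmetric spheres of constant mean curvature -/

section SphericalCap

/-- The derivative of `capTime`, which is also the conformal factor of `capSurface`. -/
def capRatio (h b x : ℝ) : ℝ := 2 * h / (b ^ 2 - x ^ 2)

/-- The coordinate along the line, as a function of the parameter `x ∈ [-1, 1]`, on the
rotationally symmetric sphere of `S² × ℝ` with constant mean curvature parameter `h`. The auxiliary
parameter `b` stands for `√(h ^ 2 + 1)`. -/
def capTime (h b x : ℝ) : ℝ := h / b * (Real.log (b + x) - Real.log (b - x))

variable {h b : ℝ}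

theorem capRatio_denom_pos {x : ℝ} (hb : 1 < b) (hx : |x| ≤ 1) : 0 < b ^ 2 - x ^ 2 :=
  sub_pos.2 (sq_lt_sq.2 ((hx.trans_lt hb).trans_le (le_abs_self b)))

theorem capRatio_pos {x : ℝ} (hh : 0 < h) (hb : 1 < b) (hx : |x| ≤ 1) : 0 < capRatio h b x :=
  div_pos (by linarith) (capRatio_denom_pos hb hx)

theorem capRatio_le_capRatio {x y : ℝ} (hh : 0 ≤ h) (hb : 1 < b) (hy : |y| ≤ 1)
    (hxy : |x| ≤ |y|) : capRatio h b x ≤ capRatio h b y := by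
  have := capRatio_denom_pos hb hy
  have := sq_le_sq.2 hxy
  unfold capRatio
  gcongr

theorem capRatio_le_max {x y u : ℝ} (hh : 0 ≤ h) (hb : 1 < b) (hx : |x| ≤ 1) (hy : |y| ≤ 1)
    (hu : u ∈ uIcc x y) : capRatio h b u ≤ max (capRatio h b x) (capRatio h b y) := by
  have habs : |u| ≤ max |x| |y| := by
    rcases le_total x y with hxy | hxy
    · rw [uIcc_of_le hxy] at hu
      exact abs_le_max_abs_abs hu.1 hu.2
    · rw [uIcc_of_ge hxy] at hu
      rw [max_comm]
      exact abs_le_max_abs_abs hu.1 hu.2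
  rcases le_max_iff.1 habs with hux | huy
  · exact (capRatio_le_capRatio hh hb hx hux).trans (le_max_left _ _)
  · exact (capRatio_le_capRatio hh hb hy huy).trans (le_max_right _ _)

theorem continuousOn_capRatio (hb : 1 < b) : ContinuousOn (capRatio h b) (Icc (-1) 1) :=
  ContinuousOn.div (by fun_prop) (by fun_prop) fun _ hx => (capRatio_denom_pos hb (abs_le.2 hx)).ne'

@[fun_prop] theorem measurable_capRatio : Measurable (capRatio h b) := by
  unfold capRatio
  fun_prop

theorem hasDerivAt_capTime {x : ℝ} (hb : 1 < b) (hx : |x| ≤ 1) :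
    HasDerivAt (capTime h b) (capRatio h b x) x := by
  obtain ⟨hx₁, hx₂⟩ := abs_le.1 hx
  have hadd : b + x ≠ 0 := by linarith
  have hsub : b - x ≠ 0 := by linarith
  have hb0 : b ≠ 0 := by linarith
  refine ((((hasDerivAt_id' x).const_add b).log hadd).sub
    (((hasDerivAt_id' x).const_sub b).log hsub)).const_mul (h / b) |>.congr_deriv ?_
  rw [capRatio, sq_sub_sq]
  field_simp
  ring

theorem capTime_neg (x : ℝ) : capTime h b (-x) = -capTime h b x := by
  rw [capTime, capTime, sub_neg_eq_add, ← sub_eq_add_neg]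
  ring

theorem abs_capTime_sub_le {x y : ℝ} (hh : 0 < h) (hb : 1 < b) (hx : |x| ≤ 1) (hy : |y| ≤ 1) :
    |capTime h b x - capTime h b y| ≤ max (capRatio h b x) (capRatio h b y) * |x - y| := by
  have hsegment : ∀ u ∈ uIcc x y, |u| ≤ 1 := fun u hu => abs_le.2
    ⟨(le_min (abs_le.1 hx).1 (abs_le.1 hy).1).trans hu.1,
      hu.2.trans (max_le (abs_le.1 hx).2 (abs_le.1 hy).2)⟩
  refine (convex_uIcc x y).norm_image_sub_le_of_norm_hasDerivWithin_le
    (fun u hu => (hasDerivAt_capTime (h := h) hb (hsegment u hu)).hasDerivWithinAt)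
    (fun u hu => ?_) right_mem_uIcc left_mem_uIcc
  rw [Real.norm_eq_abs, abs_of_pos (capRatio_pos hh hb (hsegment u hu))]
  exact capRatio_le_max hh.le hb hx hy hu

theorem integral_capRatio_sq (hh : 0 < h) (hb : 1 < b) (hbh : b ^ 2 = h ^ 2 + 1) :
    ∫ x in (-1)..1, capRatio h b x ^ 2 = 2 / b ^ 2 * (2 + h * capTime h b 1) := by
  have hcont : ContinuousOn (fun x => capRatio h b x ^ 2) (uIcc (-1) 1) := by
    rw [uIcc_of_le (by norm_num)]
    exact (continuousOn_capRatio hb).pow 2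
  have hderiv : ∀ x ∈ uIcc (-1 : ℝ) 1, HasDerivAt
      (fun x => 2 * h ^ 2 / b ^ 2 * (x / (b ^ 2 - x ^ 2)) + h / b ^ 2 * capTime h b x)
      (capRatio h b x ^ 2) x := fun x hx => by
    rw [uIcc_of_le (by norm_num)] at hx
    have hdenom := (capRatio_denom_pos hb (abs_le.2 hx)).ne'
    refine (((hasDerivAt_id' x).div ((hasDerivAt_pow 2 x).const_sub (b ^ 2)) hdenom).const_mul
      (2 * h ^ 2 / b ^ 2)).add
      ((hasDerivAt_capTime (h := h) hb (abs_le.2 hx)).const_mul (h / b ^ 2)) |>.congr_deriv ?_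
    rw [capRatio]
    field_simp
    push_cast
    ring
  rw [intervalIntegral.integral_eq_sub_of_hasDerivAt hderiv hcont.intervalIntegrable, capTime_neg,
    one_pow, neg_one_sq, show b ^ 2 - 1 = h ^ 2 by linarith]
  field_simp
  ring

theorem Sph2.abs_height_le (z : Sph2) : |z.1 2| ≤ 1 :=
  abs_le_of_sq_le_sq (by nlinarith [z.sum_sq, sq_nonneg (z.1 0), sq_nonneg (z.1 1)]) zero_le_one

theorem capRatio_height_mul (hb : 1 < b) (z : Sph2) :
    capRatio h b (z.1 2) * (b ^ 2 - z.1 2 ^ 2) = 2 * h :=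
  div_mul_cancel₀ _ (capRatio_denom_pos hb z.abs_height_le).ne'

/-- The conformal parametrisation by the round sphere of the rotationally symmetric sphere of
`S² × ℝ` with constant mean curvature parameter `h`. -/
def capSurface (hb : 1 < b) (hbh : b ^ 2 = h ^ 2 + 1) (z : Sph2) : SphLine :=
  WithLp.toLp 2 (Sph2.mk (capRatio h b (z.1 2) * z.1 0) (capRatio h b (z.1 2) * z.1 1)
    (capRatio h b (z.1 2) * h - 1) (by
      linear_combination capRatio h b (z.1 2) ^ 2 * z.sum_sq +
        capRatio h b (z.1 2) * capRatio_height_mul (h := h) hb z - capRatio h b (z.1 2) ^ 2 * hbh),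
    WithLp.toLp 2 fun _ => capTime h b (z.1 2))

section

variable (hb : 1 < b) (hbh : b ^ 2 = h ^ 2 + 1)

theorem capSurface_zero (z : Sph2) :
    (capSurface hb hbh z).fst.1 0 = capRatio h b (z.1 2) * z.1 0 := rfl

theorem capSurface_one (z : Sph2) :
    (capSurface hb hbh z).fst.1 1 = capRatio h b (z.1 2) * z.1 1 := rfl

theorem capSurface_two (z : Sph2) :
    (capSurface hb hbh z).fst.1 2 = capRatio h b (z.1 2) * h - 1 := rfl

theorem capSurface_time (z : Sph2) : (capSurface hb hbh z).time = capTime h b (z.1 2) := rfl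

theorem dist_capSurface_sq (z w : Sph2) :
    dist (capSurface hb hbh z) (capSurface hb hbh w) ^ 2 =
      capRatio h b (z.1 2) * capRatio h b (w.1 2) *
        ((z.1 0 - w.1 0) ^ 2 + (z.1 1 - w.1 1) ^ 2) +
      (capTime h b (z.1 2) - capTime h b (w.1 2)) ^ 2 := by
  have hz := capRatio_height_mul (h := h) hb z
  have hw := capRatio_height_mul (h := h) hb w
  rw [SphLine.dist_sq, Sph2.dist_sq]
  simp only [capSurface_zero, capSurface_one, capSurface_two, capSurface_time]
  set r := capRatio h b (z.1 2)
  set s := capRatio h b (w.1 2)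
  linear_combination (r ^ 2 - r * s) * z.sum_sq + (s ^ 2 - r * s) * w.sum_sq + (r - s) * hz +
    (s - r) * hw - (r - s) ^ 2 * hbh

theorem dist_capSurface_le (hh : 0 < h) (z w : Sph2) :
    dist (capSurface hb hbh z) (capSurface hb hbh w) ≤
      max (capRatio h b (z.1 2)) (capRatio h b (w.1 2)) * dist z w := by
  have hz := capRatio_pos hh hb z.abs_height_le
  have hw := capRatio_pos hh hb w.abs_height_le
  have htime : (capTime h b (z.1 2) - capTime h b (w.1 2)) ^ 2 ≤
      max (capRatio h b (z.1 2)) (capRatio h b (w.1 2)) ^ 2 * (z.1 2 - w.1 2) ^ 2 := by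
    rw [← sq_abs, ← sq_abs (z.1 2 - _), ← mul_pow]
    gcongr
    exact abs_capTime_sub_le hh hb z.abs_height_le w.abs_height_le
  refine le_of_sq_le_sq ?_ (mul_nonneg (le_max_of_le_left hz.le) dist_nonneg)
  rw [dist_capSurface_sq, mul_pow, Sph2.dist_sq, mul_add (max _ _ ^ 2)]
  refine add_le_add (mul_le_mul_of_nonneg_right ?_ (by positivity)) htime
  rw [sq (max _ _)]
  exact mul_le_mul (le_max_left _ _) (le_max_right _ _) hw.le (le_max_of_le_left hz.le)

/-- The area of the rotationally symmetric sphere parametrised by `capSurface`. -/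
def capBoundary (h b : ℝ) : ℝ := 4 * π / b ^ 2 * (2 + h * capTime h b 1)

theorem measure_range_capSurface_le (hh : 0 < h) :
    (μHE[2] : Measure SphLine) (range (capSurface hb hbh)) ≤ ENNReal.ofReal (capBoundary h b) := by
  have hint : IntegrableOn (fun x => capRatio h b x ^ 2) (Ioo (-1) 1) :=
    ((continuousOn_capRatio hb).pow 2).integrableOn_Icc.mono_set Ioo_subset_Icc_self
  have hheight : Measurable fun z : Sph2 => z.1 2 :=
    (by fun_prop : Continuous fun z : Sph2 => z.1 2).measurable
  calc (μHE[2] : Measure SphLine) (range (capSurface hb hbh))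
      ≤ ∫⁻ z : Sph2, ENNReal.ofReal (capRatio h b (z.1 2) ^ 2) ∂μHE[2] := by
        have himage := euclideanHausdorffMeasure_image_le_lintegral 2 MeasurableSet.univ
          (measurable_capRatio.comp hheight) (fun z _ => capRatio_pos hh hb (Sph2.abs_height_le z))
          fun z _ w _ => dist_capSurface_le hb hbh hh z w
        rwa [image_univ, setLIntegral_univ] at himage
    _ ≤ ENNReal.ofReal (2 * π) * ∫⁻ x in Ioo (-1) 1, ENNReal.ofReal (capRatio h b x ^ 2) :=
        lintegral_sph2_height_le (G := fun x => ENNReal.ofReal (capRatio h b x ^ 2)) (by fun_prop)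
    _ = ENNReal.ofReal (2 * π) * ENNReal.ofReal (∫ x in (-1)..1, capRatio h b x ^ 2) := by
        rw [intervalIntegral.integral_of_le (by norm_num), integral_Ioc_eq_integral_Ioo,
          ofReal_integral_eq_lintegral_ofReal hint (Eventually.of_forall fun x => sq_nonneg _)]
    _ = ENNReal.ofReal (capBoundary h b) := by
        rw [integral_capRatio_sq hh hb hbh, ← ENNReal.ofReal_mul (by positivity), capBoundary]
        congr 1
        ring

end

end SphericalCap

section CapRegion

variable {h b : ℝ}

/-- The open region enclosed by the sphere that `capSurface` parametrises. -/
def capRegion (h b : ℝ) : Set SphLine :=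
  {p | h ^ 2 * (1 + Real.cosh (b * p.time / h)) < b ^ 2 * (1 + p.height)}

theorem isOpen_capRegion : IsOpen (capRegion h b) :=
  have := Real.continuous_cosh
  isOpen_lt (by fun_prop) (by fun_prop)

theorem capTime_mul_tanh (hb : 0 < b) (u : ℝ) : capTime h b (b * Real.tanh u) = 2 * h * u / b := by
  have := Real.cosh_pos u
  have hadd : b + b * Real.tanh u = b / Real.cosh u * Real.exp u := by
    rw [← Real.cosh_add_sinh, Real.tanh_eq_sinh_div_cosh]
    field_simp
  have hsub : b - b * Real.tanh u = b / Real.cosh u * Real.exp (-u) := by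
    rw [← Real.cosh_sub_sinh, Real.tanh_eq_sinh_div_cosh]
    field_simp
  rw [capTime, hadd, hsub, Real.log_mul (by positivity) (by positivity),
    Real.log_mul (by positivity) (by positivity), Real.log_exp, Real.log_exp]
  ring

theorem capRatio_mul_tanh (hb : 0 < b) (u : ℝ) :
    capRatio h b (b * Real.tanh u) = 2 * h * Real.cosh u ^ 2 / b ^ 2 := by
  have := Real.cosh_pos u
  have hdenom : b ^ 2 - (b * Real.tanh u) ^ 2 = b ^ 2 / Real.cosh u ^ 2 := by
    rw [Real.tanh_eq_sinh_div_cosh]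
    field_simp
    linear_combination Real.cosh_sq u
  rw [capRatio, hdenom, div_div_eq_mul_div]

theorem mem_range_capSurface (hb : 1 < b) (hbh : b ^ 2 = h ^ 2 + 1) {p : SphLine} {x : ℝ}
    (hratio : capRatio h b x ≠ 0) (hheight : p.height = capRatio h b x * h - 1)
    (htime : p.time = capTime h b x) : p ∈ range (capSurface hb hbh) := by
  have hdenom : capRatio h b x * (b ^ 2 - x ^ 2) = 2 * h :=
    div_mul_cancel₀ _ fun hzero => hratio <| by
      rw [capRatio, hzero]
      exact div_zero _
  have hsum := p.fst.sum_sq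
  rw [show p.fst.1 2 = p.height from rfl, hheight] at hsum
  set r := capRatio h b x with hr
  have hunit : (p.fst.1 0 / r) ^ 2 + (p.fst.1 1 / r) ^ 2 + x ^ 2 = 1 := by
    clear_value r
    field_simp
    linear_combination hsum - r * hdenom + r ^ 2 * hbh
  refine ⟨Sph2.mk (p.fst.1 0 / r) (p.fst.1 1 / r) x hunit, SphLine.ext_fst_time
    (Sph2.ext_coord ?_ ?_ ?_) htime.symm⟩
  · rw [capSurface_zero, Sph2.mk_two, Sph2.mk_zero, ← hr, mul_div_cancel₀ _ hratio]
  · rw [capSurface_one, Sph2.mk_two, Sph2.mk_one, ← hr, mul_div_cancel₀ _ hratio]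
  · exact hheight.symm

theorem frontier_capRegion_subset (hh : 0 < h) (hb : 1 < b) (hbh : b ^ 2 = h ^ 2 + 1) :
    frontier (capRegion h b) ⊆ range (capSurface hb hbh) := by
  have := Real.continuous_cosh
  have hb0 : 0 < b := by linarith
  refine (frontier_lt_subset_eq (by fun_prop) (by fun_prop)).trans fun p hp => ?_
  obtain ⟨u, hu⟩ : ∃ u, p.time = 2 * h * u / b :=
    ⟨b * p.time / (2 * h), by field_simp⟩
  have heq : h ^ 2 * (2 * Real.cosh u ^ 2) = b ^ 2 * (1 + p.height) := by
    rw [mem_ofPred_eq, hu, show b * (2 * h * u / b) / h = 2 * u by field_simp,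
      Real.cosh_two_mul, Real.sinh_sq] at hp
    linear_combination hp
  have := Real.cosh_pos u
  refine mem_range_capSurface (x := b * Real.tanh u) hb hbh ?_ ?_ ?_
  · rw [capRatio_mul_tanh hb0]
    positivity
  · rw [capRatio_mul_tanh hb0]
    field_simp
    linear_combination -heq
  · rw [capTime_mul_tanh hb0, hu]

theorem exp_capTime_one (hh : 0 < h) (hb : 1 < b) :
    Real.exp (b * capTime h b 1 / h) = (b + 1) / (b - 1) := by
  have hsub : 0 < b - 1 := by linarith
  have hlog : b * capTime h b 1 / h = Real.log ((b + 1) / (b - 1)) := by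
    rw [Real.log_div (by linarith) hsub.ne', capTime]
    field_simp
  rw [hlog, Real.exp_log (by positivity)]

theorem capTime_one_pos (hh : 0 < h) (hb : 1 < b) : 0 < capTime h b 1 :=
  mul_pos (div_pos hh (by linarith)) <|
    sub_pos.2 (Real.log_lt_log (by linarith) (by linarith))

theorem cosh_capTime_one (hh : 0 < h) (hb : 1 < b) (hbh : b ^ 2 = h ^ 2 + 1) :
    Real.cosh (b * capTime h b 1 / h) = 2 * b ^ 2 / h ^ 2 - 1 := by
  have hsub : b - 1 ≠ 0 := by linarith
  have hadd : b + 1 ≠ 0 := by linarith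
  rw [Real.cosh_eq, Real.exp_neg, exp_capTime_one hh hb,
    show h ^ 2 = (b - 1) * (b + 1) by linear_combination -hbh]
  field_simp
  ring

theorem sinh_capTime_one (hh : 0 < h) (hb : 1 < b) (hbh : b ^ 2 = h ^ 2 + 1) :
    Real.sinh (b * capTime h b 1 / h) = 2 * b / h ^ 2 := by
  have hsub : b - 1 ≠ 0 := by linarith
  have hadd : b + 1 ≠ 0 := by linarith
  rw [Real.sinh_eq, Real.exp_neg, exp_capTime_one hh hb,
    show h ^ 2 = (b - 1) * (b + 1) by linear_combination -hbh]
  field_simp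
  ring

/-- The length of the interval of heights that `capRegion` covers at time `t`, when nonnegative. -/
def capSliceLength (h b t : ℝ) : ℝ := 2 - h ^ 2 / b ^ 2 * (1 + Real.cosh (b * t / h))

@[fun_prop] theorem continuous_capSliceLength : Continuous (capSliceLength h b) := by
  have := Real.continuous_cosh
  unfold capSliceLength
  fun_prop

theorem capSliceLength_le_two (t : ℝ) : capSliceLength h b t ≤ 2 := by
  have := Real.cosh_pos (b * t / h)
  exact sub_le_self _ (by positivity)

theorem capSliceLength_nonneg_iff (hh : 0 < h) (hb : 1 < b) (hbh : b ^ 2 = h ^ 2 + 1) {t : ℝ} :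
    0 ≤ capSliceLength h b t ↔ |t| ≤ capTime h b 1 := by
  have hb0 : 0 < b := by linarith
  have hcosh : Real.cosh (b * t / h) ≤ Real.cosh (b * capTime h b 1 / h) ↔
      |t| ≤ capTime h b 1 := by
    rw [Real.cosh_le_cosh, abs_div, abs_div, abs_mul, abs_mul, abs_of_pos hb0, abs_of_pos hh,
      abs_of_pos (capTime_one_pos hh hb), div_le_div_iff_of_pos_right hh,
      mul_le_mul_iff_right₀ hb0]
  rw [← hcosh, cosh_capTime_one hh hb hbh, capSliceLength, sub_nonneg, div_mul_eq_mul_div,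
    div_le_iff₀ (by positivity), le_sub_iff_add_le', le_div_iff₀' (by positivity)]

theorem lintegral_capSlice (hb : b ≠ 0) (t : ℝ) :
    ∫⁻ x in Ioo (-1) 1, {q : ℝ × ℝ | h ^ 2 * (1 + Real.cosh (b * q.2 / h)) <
        b ^ 2 * (1 + q.1)}.indicator (1 : ℝ × ℝ → ℝ≥0∞) (x, t) =
      ENNReal.ofReal (capSliceLength h b t) := by
  have hslice : {x : ℝ | h ^ 2 * (1 + Real.cosh (b * t / h)) < b ^ 2 * (1 + x)} =
      Ioi (1 - capSliceLength h b t) := by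
    ext x
    have hfactor : b ^ 2 * (1 + x) - h ^ 2 * (1 + Real.cosh (b * t / h)) =
        b ^ 2 * (x - (1 - capSliceLength h b t)) := by
      rw [capSliceLength]
      field_simp
      ring
    rw [mem_ofPred_eq, mem_Ioi, ← sub_pos, hfactor, mul_pos_iff_of_pos_left (by positivity),
      sub_pos]
  calc _ = ∫⁻ x in Ioo (-1) 1, (Ioi (1 - capSliceLength h b t)).indicator 1 x := by
        rw [← hslice]
        rfl
    _ = volume (Ioi (1 - capSliceLength h b t) ∩ Ioo (-1) 1) := by
        rw [lintegral_indicator_one measurableSet_Ioi, Measure.restrict_apply measurableSet_Ioi]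
    _ = volume (Ioo (1 - capSliceLength h b t) 1) := by
        have hle := capSliceLength_le_two (h := h) (b := b) t
        rw [inter_comm, Ioo_inter_Ioi, max_eq_right (by linarith)]
    _ = _ := by rw [Real.volume_Ioo, _root_.sub_sub_cancel]

theorem lintegral_ofReal_eq_ofReal_integral_of_nonneg_iff {f : ℝ → ℝ} {T : ℝ} (hf : Continuous f)
    (hT : 0 ≤ T) (hsign : ∀ t, 0 ≤ f t ↔ |t| ≤ T) :
    ∫⁻ t, ENNReal.ofReal (f t) = ENNReal.ofReal (∫ t in (-T)..T, f t) := by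
  have hzero : ∀ t ∉ Icc (-T) T, ENNReal.ofReal (f t) = 0 := fun t ht =>
    ENNReal.ofReal_of_nonpos (le_of_not_ge fun hnonneg => ht (abs_le.1 ((hsign t).1 hnonneg)))
  have hnonneg : ∀ᵐ t ∂volume.restrict (Icc (-T) T), 0 ≤ f t := by
    filter_upwards [ae_restrict_mem measurableSet_Icc] with t ht
    exact (hsign t).2 (abs_le.2 ht)
  rw [intervalIntegral.integral_of_le (by linarith), ← integral_Icc_eq_integral_Ioc,
    ofReal_integral_eq_lintegral_ofReal hf.continuousOn.integrableOn_Icc hnonneg,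
    setLIntegral_eq_of_support_subset (Function.support_subset_iff'.2 hzero)]

theorem integral_capSliceLength (hh : 0 < h) (hb : 1 < b) (hbh : b ^ 2 = h ^ 2 + 1) :
    ∫ t in -capTime h b 1..capTime h b 1, capSliceLength h b t =
      2 * ((2 - h ^ 2 / b ^ 2) * capTime h b 1 - 2 * h / b ^ 2) := by
  have hderiv : ∀ t, HasDerivAt (fun t => 2 * t - h ^ 2 / b ^ 2 *
      (t + h / b * Real.sinh (b * t / h))) (capSliceLength h b t) t := fun t => by
    have hsinh := (((hasDerivAt_id' t).const_mul b).div_const h).sinh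
    refine (((hasDerivAt_id' t).const_mul 2).sub (((hasDerivAt_id' t).add
      (hsinh.const_mul (h / b))).const_mul (h ^ 2 / b ^ 2))).congr_deriv ?_
    rw [capSliceLength]
    field_simp
  rw [intervalIntegral.integral_eq_sub_of_hasDerivAt (fun t _ => hderiv t)
      (continuous_capSliceLength.intervalIntegrable _ _), mul_neg b, neg_div, Real.sinh_neg,
    sinh_capTime_one hh hb hbh]
  field_simp
  ring

/-- The volume of `capRegion`. -/
def capVolume (h b : ℝ) : ℝ := 4 * π * ((2 - h ^ 2 / b ^ 2) * capTime h b 1 - 2 * h / b ^ 2)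

theorem measure_capRegion (hh : 0 < h) (hb : 1 < b) (hbh : b ^ 2 = h ^ 2 + 1) :
    (μHE[3] : Measure SphLine) (capRegion h b) = ENNReal.ofReal (capVolume h b) := by
  have := Real.continuous_cosh
  have hmeas : MeasurableSet
      {q : ℝ × ℝ | h ^ 2 * (1 + Real.cosh (b * q.2 / h)) < b ^ 2 * (1 + q.1)} :=
    (isOpen_lt (by fun_prop) (by fun_prop)).measurableSet
  refine (SphLine.measure_rotational hmeas).trans ?_
  simp_rw [lintegral_capSlice (by linarith : b ≠ 0)]
  rw [lintegral_ofReal_eq_ofReal_integral_of_nonneg_iff continuous_capSliceLength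
      (capTime_one_pos hh hb).le fun t => capSliceLength_nonneg_iff hh hb hbh,
    ← ENNReal.ofReal_mul (by positivity), integral_capSliceLength hh hb hbh, capVolume]
  congr 1
  ring

theorem measure_closure_of_frontier_ne_top {X : Type*} [MetricSpace X] [MeasurableSpace X]
    [BorelSpace X] {d e : ℕ} (hde : d < e) {V : Set X} (hV : μHE[d] (frontier V) ≠ ∞) :
    μHE[e] (closure V) = μHE[e] V :=
  measure_congr <| closure_ae_eq_of_null_frontier <|
    (Measure.euclideanHausdorffMeasure_zero_or_top hde (frontier V)).resolve_right hV

theorem exists_isOpen_cap (hh : 0 < h) (hb : 1 < b) (hbh : b ^ 2 = h ^ 2 + 1) :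
    ∃ V : Set SphLine, IsOpen V ∧
      (μHE[3] : Measure SphLine) (closure V) = ENNReal.ofReal (capVolume h b) ∧
      (μHE[2] : Measure SphLine) (frontier (closure V)) ≤ ENNReal.ofReal (capBoundary h b) := by
  have hfrontier : (μHE[2] : Measure SphLine) (frontier (capRegion h b)) ≤
      ENNReal.ofReal (capBoundary h b) :=
    (measure_mono (frontier_capRegion_subset hh hb hbh)).trans
      (measure_range_capSurface_le hb hbh hh)
  refine ⟨capRegion h b, isOpen_capRegion, ?_,
    (measure_mono frontier_closure_subset).trans hfrontier⟩
  rw [measure_closure_of_frontier_ne_top (by norm_num)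
    (ne_top_of_le_ne_top ENNReal.ofReal_ne_top hfrontier), measure_capRegion hh hb hbh]

end CapRegion

section CapMinimisation

/-- The continuous extension to `h = 0` of `h ↦ h * capTime h √(h ^ 2 + 1) 1`. Up to the factor `c`
it is the amount by which `capEnergy c h` falls short of `capEnergy c 0 = 2 * c`. -/
def capDeficit (h : ℝ) : ℝ :=
  2 / √(h ^ 2 + 1) * (h ^ 2 * Real.log (√(h ^ 2 + 1) + 1) - h * (h * Real.log h))

@[simp] theorem capDeficit_zero : capDeficit 0 = 0 := by simp [capDeficit]

theorem one_lt_sqrt_sq_add_one {h : ℝ} (hh : 0 < h) : 1 < √(h ^ 2 + 1) :=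
  Real.lt_sqrt_of_sq_lt (by nlinarith)

theorem sq_sqrt_sq_add_one (h : ℝ) : √(h ^ 2 + 1) ^ 2 = h ^ 2 + 1 := Real.sq_sqrt (by positivity)

@[fun_prop] theorem continuous_capDeficit : Continuous capDeficit := by
  have hsqrt : ∀ h : ℝ, 0 < √(h ^ 2 + 1) := fun h => Real.sqrt_pos.2 (by positivity)
  refine (Continuous.div (by fun_prop) (by fun_prop) fun h => (hsqrt h).ne').mul
    (Continuous.sub ?_ (continuous_id.mul Real.continuous_mul_log))
  exact Continuous.mul (by fun_prop) <| Continuous.log (by fun_prop) fun h => by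
    linarith [hsqrt h]

theorem mul_capTime_one {h : ℝ} (hh : 0 < h) :
    h * capTime h √(h ^ 2 + 1) 1 = capDeficit h := by
  have hb := one_lt_sqrt_sq_add_one hh
  have hbh := sq_sqrt_sq_add_one h
  rw [capTime, capDeficit]
  set b := √(h ^ 2 + 1)
  have hadd : b + 1 ≠ 0 := by linarith
  have hsub : b - 1 = h ^ 2 / (b + 1) := by
    field_simp
    linear_combination hbh
  rw [hsub, Real.log_div (by positivity) hadd, Real.log_pow]
  push_cast
  ring

theorem capEnergy_eq_sub_capDeficit (c : ℝ) {h : ℝ} (hh : 0 ≤ h) :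
    capEnergy c h = c * (2 - capDeficit h) := by
  rcases hh.eq_or_lt with rfl | hh
  · rw [capEnergy_zero, capDeficit_zero, sub_zero, mul_comm]
  have hb := one_lt_sqrt_sq_add_one hh
  have hbh := sq_sqrt_sq_add_one h
  rw [← mul_capTime_one hh]
  set b := √(h ^ 2 + 1)
  have hderiv : ∀ x ∈ uIcc (0 : ℝ) 1,
      HasDerivAt (fun x => c * (x - h / 2 * capTime h b x)) (capArea c h x) x := fun x hx => by
    rw [uIcc_of_le zero_le_one] at hx
    have hx1 : |x| ≤ 1 := abs_le.2 ⟨by linarith [hx.1], hx.2⟩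
    refine (((hasDerivAt_id' x).sub ((hasDerivAt_capTime (h := h) hb hx1).const_mul
      (h / 2))).const_mul c).congr_deriv ?_
    have := (capArea_denom_pos hh.ne' hx).ne'
    rw [capRatio, capArea, show b ^ 2 - x ^ 2 = h ^ 2 + (1 - x ^ 2) by linear_combination hbh]
    field_simp
    ring
  have hcont : ContinuousOn (capArea c h) (uIcc 0 1) := by
    rw [uIcc_of_le zero_le_one]
    exact ContinuousOn.div (by fun_prop) (by fun_prop) fun x hx => (capArea_denom_pos hh.ne' hx).ne'
  rw [capEnergy, intervalIntegral.integral_eq_sub_of_hasDerivAt hderiv hcont.intervalIntegrable,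
    show capTime h b 0 = 0 by simp [capTime]]
  ring

theorem continuousOn_capEnergy (c : ℝ) : ContinuousOn (capEnergy c) (Ici 0) :=
  (by fun_prop : Continuous fun h => c * (2 - capDeficit h)).continuousOn.congr fun _ hh =>
    capEnergy_eq_sub_capDeficit c hh

theorem capEnergy_nonneg {c : ℝ} (hc : 0 ≤ c) (h : ℝ) : 0 ≤ capEnergy c h := by
  refine mul_nonneg zero_le_two (intervalIntegral.integral_nonneg zero_le_one fun x hx => ?_)
  have : 0 ≤ 1 - x ^ 2 := sub_nonneg.2 (pow_le_one₀ hx.1 hx.2)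
  unfold capArea
  positivity

theorem hasDerivAt_capDeficit {h : ℝ} (hh : 0 < h) :
    HasDerivAt capDeficit ((4 * π)⁻¹ * capVolume h √(h ^ 2 + 1)) h := by
  have hb := one_lt_sqrt_sq_add_one hh
  have hbh := sq_sqrt_sq_add_one h
  have hsqrt : HasDerivAt (fun h : ℝ => √(h ^ 2 + 1)) (h / √(h ^ 2 + 1)) h := by
    refine (((hasDerivAt_pow 2 h).add_const 1).sqrt (by positivity)).congr_deriv ?_
    push_cast
    field_simp
  have hlog := (hsqrt.add_const 1).log (by linarith)
  have hmul_log := (hasDerivAt_id' h).mul ((hasDerivAt_id' h).mul (Real.hasDerivAt_log hh.ne'))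
  refine (((hasDerivAt_const h (2 : ℝ)).div hsqrt (by linarith)).mul
    (((hasDerivAt_pow 2 h).mul hlog).sub hmul_log)).congr_deriv ?_
  have htime : capTime h √(h ^ 2 + 1) 1 = capDeficit h / h := by
    rw [← mul_capTime_one hh, mul_div_cancel_left₀ _ hh.ne']
  rw [capVolume, htime, capDeficit]
  simp only [Pi.mul_apply, Pi.sub_apply, Pi.div_apply]
  set b := √(h ^ 2 + 1)
  have : b + 1 ≠ 0 := by linarith
  have : b ≠ 0 := by linarith
  have := Real.pi_ne_zero
  clear_value b
  push_cast
  field_simp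
  linear_combination (-2 * b) * hbh

theorem hasDerivAt_capEnergy {h : ℝ} (hh : 0 < h) :
    HasDerivAt (capEnergy (4 * π)) (-capVolume h √(h ^ 2 + 1)) h := by
  have hderiv := ((hasDerivAt_capDeficit hh).const_sub 2).const_mul (4 * π)
  rw [mul_neg, mul_inv_cancel_left₀ (by positivity)] at hderiv
  refine hderiv.congr_of_eventuallyEq ?_
  filter_upwards [Ioi_mem_nhds hh] with x hx
  exact capEnergy_eq_sub_capDeficit _ (mem_Ioi.1 hx).le

theorem capBoundary_eq {h : ℝ} (hh : 0 < h) : capBoundary h √(h ^ 2 + 1) =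
    capEnergy (4 * π) h + h * capVolume h √(h ^ 2 + 1) := by
  have hb := one_lt_sqrt_sq_add_one hh
  have hbh := sq_sqrt_sq_add_one h
  rw [capEnergy_eq_sub_capDeficit _ hh.le, ← mul_capTime_one hh, capBoundary, capVolume]
  set b := √(h ^ 2 + 1)
  have : b ≠ 0 := by linarith
  field_simp
  linear_combination (-2 - h * capTime h b 1) * hbh

theorem exists_isMinOn_capEnergy_add_mul {c v : ℝ} (hc : 0 ≤ c) (hv : 0 < v) :
    ∃ h ∈ Ici (0 : ℝ), IsMinOn (fun h => capEnergy c h + h * v) (Ici 0) h := by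
  refine ((continuousOn_capEnergy c).add (by fun_prop)).exists_isMinOn' isClosed_Ici
    self_mem_Ici (eventually_inf_principal.2 ?_)
  filter_upwards [(isCompact_Icc (a := (0 : ℝ)) (b := 2 * c / v)).compl_mem_cocompact] with h hh h0
  have hlarge : 2 * c / v < h := lt_of_not_ge fun hle => hh ⟨h0, hle⟩
  rw [div_lt_iff₀ hv] at hlarge
  calc capEnergy c 0 + 0 * v = 2 * c := by rw [capEnergy_zero, zero_mul, add_zero]
    _ ≤ capEnergy c h + h * v := by linarith [capEnergy_nonneg hc h]

theorem capVolume_eq_of_isMinOn {h v : ℝ} (hh : 0 < h)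
    (hmin : IsMinOn (fun h => capEnergy (4 * π) h + h * v) (Ici 0) h) :
    capVolume h √(h ^ 2 + 1) = v := by
  have hderiv := (hmin.isLocalMin (Ici_mem_nhds hh)).hasDerivAt_eq_zero
    ((hasDerivAt_capEnergy hh).add ((hasDerivAt_id' h).mul_const v))
  linarith

theorem measure_sphere_slice_le (a : ℝ) :
    (μHE[2] : Measure SphLine) {p | p.time = a} ≤ ENNReal.ofReal (4 * π) := by
  let slice : Sph2 → SphLine := fun z => WithLp.toLp 2 (z, WithLp.toLp 2 fun _ => a)
  have hdist : ∀ z w, dist (slice z) (slice w) ≤ max 1 1 * dist z w := fun z w => by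
    rw [max_self, one_mul]
    refine le_of_sq_le_sq ?_ dist_nonneg
    rw [SphLine.dist_sq]
    simp [slice, SphLine.time]
  calc (μHE[2] : Measure SphLine) {p | p.time = a} ≤ μHE[2] (slice '' univ) :=
        measure_mono fun p hp => ⟨p.fst, mem_univ _, SphLine.ext_fst_time rfl hp.symm⟩
    _ ≤ ∫⁻ _ : Sph2, 1 ∂μHE[2] := by
        have himage := euclideanHausdorffMeasure_image_le_lintegral 2 MeasurableSet.univ
          (measurable_const (a := (1 : ℝ))) (fun _ _ => one_pos) fun z _ w _ => hdist z w
        simpa only [one_pow, ENNReal.ofReal_one, setLIntegral_univ] using himage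
    _ ≤ ENNReal.ofReal (2 * π) * ∫⁻ _ in Ioo (-1 : ℝ) 1, 1 :=
        lintegral_sph2_height_le (G := fun _ => 1) measurable_const
    _ = ENNReal.ofReal (4 * π) := by
        rw [setLIntegral_one, Real.volume_Ioo, ← ENNReal.ofReal_mul (by positivity)]
        congr 1
        ring

theorem measure_time_preimage_Ioo {a : ℝ} (ha : 0 ≤ a) :
    (μHE[3] : Measure SphLine) (SphLine.time ⁻¹' Ioo 0 a) = ENNReal.ofReal (4 * π * a) := by
  refine (SphLine.measure_rotational (measurable_snd measurableSet_Ioo)).trans ?_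
  have hindicator : ∀ t x : ℝ, (Prod.snd ⁻¹' Ioo 0 a).indicator (1 : ℝ × ℝ → ℝ≥0∞) (x, t) =
      (Ioo 0 a).indicator 1 t := fun _ _ => rfl
  simp_rw [hindicator, lintegral_const, Measure.restrict_apply_univ, Real.volume_Ioo]
  rw [lintegral_mul_const' _ _ ENNReal.ofReal_ne_top, lintegral_indicator_one measurableSet_Ioo,
    Real.volume_Ioo, sub_zero, ← ENNReal.ofReal_mul ha, ← ENNReal.ofReal_mul (by positivity)]
  congr 1
  ring

theorem exists_isOpen_slab {v : ℝ} (hv : 0 < v) : ∃ V : Set SphLine, IsOpen V ∧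
    (μHE[3] : Measure SphLine) (closure V) = ENNReal.ofReal v ∧
    (μHE[2] : Measure SphLine) (frontier (closure V)) ≤ ENNReal.ofReal (8 * π) := by
  have ha : 0 < v / (4 * π) := by positivity
  set a := v / (4 * π) with ha_def
  set V : Set SphLine := SphLine.time ⁻¹' Ioo 0 a
  have hfrontier : frontier V ⊆ {p | p.time = 0} ∪ {p | p.time = a} := by
    refine (SphLine.continuous_time.frontier_preimage_subset _).trans fun p hp => ?_
    rwa [mem_preimage, frontier_Ioo ha] at hp
  have harea : (μHE[2] : Measure SphLine) (frontier V) ≤ ENNReal.ofReal (8 * π) :=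
    calc (μHE[2] : Measure SphLine) (frontier V)
        ≤ μHE[2] {p : SphLine | p.time = 0} + μHE[2] {p : SphLine | p.time = a} :=
          (measure_mono hfrontier).trans (measure_union_le _ _)
      _ ≤ ENNReal.ofReal (4 * π) + ENNReal.ofReal (4 * π) :=
          add_le_add (measure_sphere_slice_le 0) (measure_sphere_slice_le a)
      _ = ENNReal.ofReal (8 * π) := by
          rw [← ENNReal.ofReal_add (by positivity) (by positivity)]
          congr 1
          ring
  refine ⟨V, isOpen_Ioo.preimage SphLine.continuous_time, ?_,
    (measure_mono frontier_closure_subset).trans harea⟩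
  rw [measure_closure_of_frontier_ne_top (by norm_num)
    (ne_top_of_le_ne_top ENNReal.ofReal_ne_top harea), measure_time_preimage_Ioo ha.le, ha_def,
    mul_div_cancel₀ _ (by positivity)]

theorem exists_isOpen_le_capEnergy {v h₀ : ℝ} (hv : 0 < v) (h₀_nonneg : 0 ≤ h₀) :
    ∃ V : Set SphLine, IsOpen V ∧
      (μHE[3] : Measure SphLine) (closure V) = ENNReal.ofReal v ∧
      (μHE[2] : Measure SphLine) (frontier (closure V)) ≤
        ENNReal.ofReal (capEnergy (4 * π) h₀ + h₀ * v) := by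
  obtain ⟨h, hh, hmin⟩ := exists_isMinOn_capEnergy_add_mul (c := 4 * π) (by positivity) hv
  suffices hsuff : ∃ V : Set SphLine, IsOpen V ∧
      (μHE[3] : Measure SphLine) (closure V) = ENNReal.ofReal v ∧
      (μHE[2] : Measure SphLine) (frontier (closure V)) ≤
        ENNReal.ofReal (capEnergy (4 * π) h + h * v) by
    obtain ⟨V, hV, hvol, harea⟩ := hsuff
    exact ⟨V, hV, hvol, harea.trans (ENNReal.ofReal_le_ofReal (hmin (mem_Ici.2 h₀_nonneg)))⟩
  rcases (mem_Ici.1 hh).eq_or_lt with rfl | hpos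
  · rw [capEnergy_zero, zero_mul, add_zero, ← mul_assoc]
    norm_num only
    exact exists_isOpen_slab hv
  · have hvol := capVolume_eq_of_isMinOn hpos hmin
    rw [← hvol, ← capBoundary_eq hpos]
    exact exists_isOpen_cap hpos (one_lt_sqrt_sq_add_one hpos) (sq_sqrt_sq_add_one h)

end CapMinimisation

section Profile

theorem exists_euclideanHausdorffMeasure_eq_mul_haus (d : ℕ) :
    ∃ C : ℝ≥0, C ≠ 0 ∧ ∀ (X : Type) [EMetricSpace X] [MeasurableSpace X] [BorelSpace X]
      (s : Set X), μHE[d] s = C * haus X d s := by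
  refine ⟨_, Measure.addHaarScalarFactor_volume_hausdorffMeasure_ne_zero d, ?_⟩
  intro X _ m hborel s
  have hm := hborel.measurable_eq
  rw [Measure.euclideanHausdorffMeasure_def, Measure.smul_apply, ENNReal.smul_def, smul_eq_mul]
  subst hm
  rfl

theorem isoProfile_sphLine_le_isoProfile_torusLine {L : ℝ} (hL : 0 < L) (hLπ : L ^ 2 = 4 * π)
    {v : ℝ} (hv : 0 < v) :
    isoProfile SphLine 3 (ENNReal.ofReal v) ≤ isoProfile (TorusLine L) 3 (ENNReal.ofReal v) := by
  obtain ⟨C, hC, hCmul⟩ := exists_euclideanHausdorffMeasure_eq_mul_haus 3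
  obtain ⟨D, hD, hDmul⟩ := exists_euclideanHausdorffMeasure_eq_mul_haus 2
  refine le_iInf₂ fun U ⟨⟨W, _, hUW⟩, hUv⟩ => ?_
  have hU : IsClosed U := hUW ▸ isClosed_closure
  by_cases hfin : μHE[2] (frontier U) = ∞
  · rw [hDmul, ENNReal.mul_eq_top] at hfin
    simp only [ENNReal.coe_ne_top, false_and, or_false] at hfin
    exact le_top.trans_eq hfin.2.symm
  have hvol : (C : ℝ≥0∞) * ENNReal.ofReal v = ENNReal.ofReal (C * v) := by
    rw [ENNReal.ofReal_mul C.coe_nonneg, ENNReal.ofReal_coe_nnreal]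
  have hCv : 0 < (C : ℝ) * v := mul_pos (NNReal.coe_pos.2 (pos_iff_ne_zero.2 hC)) hv
  obtain ⟨A⟩ := nonempty_periodicApprox hL hU hfin
  rw [hCmul, hUv, hvol] at A
  obtain ⟨h, hh, hle⟩ := A.exists_capEnergy_le hL hLπ.le hCv
  obtain ⟨V, hV, hVvol, hVarea⟩ := exists_isOpen_le_capEnergy hCv hh
  rw [hLπ] at hle
  refine iInf₂_le_of_le (closure V) ⟨⟨V, hV, rfl⟩, ?_⟩ ?_
  · rw [hCmul, ← hvol] at hVvol
    exact (ENNReal.mul_right_inj (ENNReal.coe_ne_zero.2 hC) ENNReal.coe_ne_top).1 hVvol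
  · have harea := hVarea.trans hle
    rw [hDmul, hDmul] at harea
    exact (ENNReal.mul_le_mul_iff_right (ENNReal.coe_ne_zero.2 hD) ENNReal.coe_ne_top).1 harea

end Profile

end Comparison

/-- Let `T² = S¹_{1/√π} × S¹_{1/√π}` be the flat square torus of area `4π`, and `S²` the
unit round sphere.  Then for every `v > 0`, `I_{S²×ℝ}(v) ≤ I_{T²×ℝ}(v)`. -/
theorem sphere_profile_le_torus_profile_R1 (v : ℝ) (hv : 0 < v) :
    isoProfile (WithLp 2 (Sph2 × EucSp 1)) 3 (ENNReal.ofReal v)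
      ≤ isoProfile (T2R (Real.sqrt Real.pi)⁻¹ (Real.sqrt Real.pi)⁻¹ 1) 3
          (ENNReal.ofReal v) := by
  refine isoProfile_sphLine_le_isoProfile_torusLine (L := 2 * Real.pi * (√Real.pi)⁻¹)
    (by positivity) ?_ hv
  rw [mul_pow, inv_pow, Real.sq_sqrt Real.pi_pos.le]
  field_simp
  norm_num

end
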